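/- arXiv:1110.1543 — 3 statements merged into one kernel-verified Lean document; each statement's English description precedes it below -/
import Mathlib

section
/- Let N ≥ 2 and let B ⊂ ℝ^N be a bounded radial domain. Let 𝓑 be an open convex subset of ℝ × ℝ^N × ℝ^{N×N} containing (0,0,0), and let F : [0,∞) × B̄ × 𝓑 → ℝ satisfy: (F1) B × 𝓑 is invariant under (x,u,p,q) ↦ (Rx,u,Rp,RqR) for every hyperplane reflection matrix R ∈ ℝ^{N×N}, and F(t,Rx,u,Rp,RqR) = F(t,x,u,p,q) for every such R and all (t,x,u,p,q) ∈ (0,∞) × B × 𝓑; (F2) F is continuous on [0,∞) × B̄ × 𝓑, Lipschitz in (u,p,q) uniformly in (x,t) (there is L > 0 with |F(t,x,u,p,q) − F(t,x,ũ,p̃,q̃)| ≤ L|(u,p,q) − (ũ,p̃,q̃)| for all x ∈ B, t ≥ 0, and all pairs of points in 𝓑), and F is differentiable with respect to the matrix variable q on [0,∞) × B × 𝓑; (F3) F(·,·,0,0,0) is bounded on [0,∞) × B; (F4) there is α₀ > 0 with ∂_{q_{ij}}F(t,x,u,p,q) ξ_i ξ_j ≥ α₀|ξ|² for all (t,x,u,p,q)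 ∈ [0,∞) × B × 𝓑 and ξ ∈ ℝ^N (summation over repeated indices). Let u ∈ C^{2,1}(B × (0,∞)) ∩ C(B̄ × [0,∞)) be a classical solution of u_t = F(t,x,u,∇u,D²u) in B × (0,∞) with u = 0 on ∂B × (0,∞) and u(·,0) = u₀, such that (U1): there is e ∈ S with u₀(x) ≥ u₀(σ_e(x)) for all x ∈ B(e) and u₀ ∘ σ_e ≢ u₀ on B(e); and (U2): sup_{t ≥ 0} ‖u(·,t)‖_{L^∞(B)} < ∞. Then there exists p ∈ S such that every element of ω(u) is foliated Schwarz symmetric with respect to p. -/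
/-!
For a unit vector `e` put `v(x,t) = u(x,t) - u(σ_e x,t)` on the half domain `B(e)`. By (F1) both
terms solve the same equation, and `isVSol_refl` shows that `v` is a supersolution
`v_t ≥ inf_A A(D²v) - L (|v| + |∇v|)` of an extremal operator, vanishing on the boundary of `B(e)`,
with constants that do not depend on `e`. Since `B(e)` has corners and no information on `u` up to
the boundary is available besides continuity, everything is derived from the `comparison` principle
and explicit subsolutions, in place of Harnack inequalities and Hopf lemmas:

* `propagate`: positivity of `v` on a small ball is carried, after one unit of time, to a whole
  compact core of `B(e)` by a bump subsolution (`bump_sub`) moving along a path (`path_exists`), while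
  the negative part grows at most by the factor `exp L`.
* `barrier_decay`: with `Φ(x) = (x·e) h(|x|²)` and `h` a radial defining function of `B` (`RadData`),
  the function `exp(-m t) (η a₀ Φ^q - η (1 + Φ^ε))` is a subsolution (`barrier_sub`). So if the
  negative part of `v` is at most `η` and `v ≥ Λ η` on the core, the negative part decays
  exponentially.

Together these give `refl_stable`: if `u(·,t₁)` is uniformly close to a profile `z` satisfying
`z ∘ σ_e ≤ z` on `B(e)` with strict inequality somewhere, then for every `e'` close to `e` all
elements of `ω(u)` satisfy the reflection inequality for `e'`. It applies to `z = u₀`, `t₁ = 0` by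
(U1), and to each `z ∈ ω(u)` along the times that define it.

Hence the set `E` of directions for which all elements of `ω(u)` satisfy the reflection inequality
is closed, has an interior point `e₀`, and is a neighbourhood of each `e ∈ E` for which some element
of `ω(u)` is not symmetric. The first moments `m(z) = ∫_B z(x) x dx` decide the rest: for `e ∈ E` one
has `m(z)·e ≥ 0`, with equality exactly when `z` is symmetric with respect to `H(e)`. If some
`m(z) ≠ 0`, connectedness of the open hemisphere around `m(z)` puts its closure into `E`, which is
foliated Schwarz symmetry with respect to `m(z)/|m(z)|` (`foliated_of_moment_ne`). If all moments
vanish, all `z` are symmetric for the directions near `e₀`, hence for all directions, because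
reflections conjugate symmetry directions into symmetry directions and the sphere is connected
(`foliated_of_moment_eq`).
-/

open Set Metric Filter
open scoped RealInnerProductSpace

noncomputable section

variable {N : ℕ}

/-- Reflection through the hyperplane `H(e) = {x : ⟪x,e⟫ = 0}`:
`σ_e(x) = x - 2 (x·e) e`. -/
def reflHyp (e x : EuclideanSpace ℝ (Fin N)) : EuclideanSpace ℝ (Fin N) :=
  x - (2 * ⟪x, e⟫) • e

/-- The half domain `B(e) = {x ∈ B : x·e > 0}`. -/
def halfDom (B : Set (EuclideanSpace ℝ (Fin N))) (e : EuclideanSpace ℝ (Fin N)) :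
    Set (EuclideanSpace ℝ (Fin N)) := {x ∈ B | 0 < ⟪x, e⟫}

/-- A (bounded) radial domain: an open ball or an open annulus centered at the origin. -/
def IsRadialDomain (B : Set (EuclideanSpace ℝ (Fin N))) : Prop :=
  (∃ R, 0 < R ∧ B = Metric.ball 0 R) ∨
  (∃ r R, 0 < r ∧ r < R ∧ B = {x : EuclideanSpace ℝ (Fin N) | r < ‖x‖ ∧ ‖x‖ < R})

/-- `u` is foliated Schwarz symmetric on `D` with respect to the unit vector `p`:
`u(x) ≥ u(y)` whenever `|x| = |y|` and `x·p ≥ y·p`.  (This is equivalent to axial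
symmetry with respect to `ℝp` together with monotonicity in the polar angle.) -/
def FoliatedSchwarzOn (D : Set (EuclideanSpace ℝ (Fin N)))
    (u : EuclideanSpace ℝ (Fin N) → ℝ) (p : EuclideanSpace ℝ (Fin N)) : Prop :=
  ∀ x ∈ D, ∀ y ∈ D, ‖x‖ = ‖y‖ → ⟪y, p⟫ ≤ ⟪x, p⟫ → u y ≤ u x

/-- The omega limit set of a (bounded) solution `u = u(x,t)`: all continuous
functions `z` on `B̄` which are uniform limits on `B̄` of `u(·, tₙ)` for some
sequence `tₙ → ∞`. -/
def omegaLimitSet (B : Set (EuclideanSpace ℝ (Fin N)))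
    (u : EuclideanSpace ℝ (Fin N) → ℝ → ℝ) : Set (EuclideanSpace ℝ (Fin N) → ℝ) :=
  {z | ContinuousOn z (closure B) ∧ ∃ t : ℕ → ℝ, Tendsto t atTop atTop ∧
    ∀ ε > 0, ∃ n₀ : ℕ, ∀ n ≥ n₀, ∀ x ∈ closure B, |u x (t n) - z x| ≤ ε}

/-- The matrix of the reflection through the hyperplane orthogonal to `e`:
`R_{ij} = δ_{ij} − 2 eᵢ eⱼ`. -/
def reflMat (e : EuclideanSpace ℝ (Fin N)) : Fin N → Fin N → ℝ :=
  fun i j => (if i = j then (1:ℝ) else 0) - 2 * e i * e j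

/-- The conjugation `R q R` of a matrix `q` by a (symmetric) matrix `R`. -/
def matConj (R q : Fin N → Fin N → ℝ) : Fin N → Fin N → ℝ :=
  fun i j => ∑ k, ∑ l, R i k * q k l * R l j

/-- The gradient vector `∇u ∈ ℝᴺ` associated with a differential `Du`. -/
def gradVec (Du : EuclideanSpace ℝ (Fin N) →L[ℝ] ℝ) : EuclideanSpace ℝ (Fin N) :=
  (EuclideanSpace.equiv (Fin N) ℝ).symm (fun i => Du (EuclideanSpace.single i 1))

/-- The Hessian matrix `D²u = (u_{xᵢxⱼ})` associated with a second differential. -/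
def hessMat (D2 : EuclideanSpace ℝ (Fin N) →L[ℝ] EuclideanSpace ℝ (Fin N) →L[ℝ] ℝ) :
    Fin N → Fin N → ℝ :=
  fun i j => D2 (EuclideanSpace.single i 1) (EuclideanSpace.single j 1)

/-- The set `𝓜 = {e ∈ S : z ≥ z ∘ σ_e on B(e) for all z ∈ ω(u)}`. -/
def omegaReflSet (B : Set (EuclideanSpace ℝ (Fin N)))
    (u : EuclideanSpace ℝ (Fin N) → ℝ → ℝ) : Set (EuclideanSpace ℝ (Fin N)) :=
  {e | ‖e‖ = 1 ∧ ∀ z ∈ omegaLimitSet B u, ∀ x ∈ halfDom B e, z (reflHyp e x) ≤ z x}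

open scoped Topology

/-! ### Second order jets along lines -/

/-- `f` is twice differentiable at `0` with `f'(0) = a` and `f''(0) = b`. -/
def HasJet2 (f : ℝ → ℝ) (a b : ℝ) : Prop :=
  ∃ f' : ℝ → ℝ, (∀ᶠ h in 𝓝 (0:ℝ), HasDerivAt f (f' h) h) ∧ f' 0 = a ∧ HasDerivAt f' b 0

namespace HasJet2

lemma const (c : ℝ) : HasJet2 (fun _ => c) 0 0 :=
  ⟨fun _ => 0, Eventually.of_forall fun h => hasDerivAt_const h c, rfl, hasDerivAt_const 0 0⟩

lemma add {f g : ℝ → ℝ} {a b c d : ℝ} (hf : HasJet2 f a b) (hg : HasJet2 g c d) :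
    HasJet2 (fun h => f h + g h) (a + c) (b + d) := by
  obtain ⟨f', h1, h2, h3⟩ := hf
  obtain ⟨g', k1, k2, k3⟩ := hg
  refine ⟨fun h => f' h + g' h, ?_, by simp [h2, k2], h3.add k3⟩
  filter_upwards [h1, k1] with h hh hk using hh.add hk

lemma const_mul {f : ℝ → ℝ} {a b : ℝ} (c : ℝ) (hf : HasJet2 f a b) :
    HasJet2 (fun h => c * f h) (c * a) (c * b) := by
  obtain ⟨f', h1, h2, h3⟩ := hf
  refine ⟨fun h => c * f' h, ?_, by simp [h2], h3.const_mul c⟩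
  filter_upwards [h1] with h hh using hh.const_mul c

lemma sub {f g : ℝ → ℝ} {a b c d : ℝ} (hf : HasJet2 f a b) (hg : HasJet2 g c d) :
    HasJet2 (fun h => f h - g h) (a - c) (b - d) := by
  obtain ⟨f', h1, h2, h3⟩ := hf
  obtain ⟨g', k1, k2, k3⟩ := hg
  refine ⟨fun h => f' h - g' h, ?_, by simp [h2, k2], h3.sub k3⟩
  filter_upwards [h1, k1] with h hh hk using hh.sub hk

lemma quad (c₀ c₁ c₂ : ℝ) : HasJet2 (fun h => c₀ + c₁ * h + c₂ * h ^ 2) c₁ (2 * c₂) := by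
  refine ⟨fun h => c₁ + 2 * c₂ * h, Eventually.of_forall fun h => ?_, by simp, ?_⟩
  · have := (((hasDerivAt_id h).const_mul c₁).const_add c₀).add
      (((hasDerivAt_id h).pow 2).const_mul c₂)
    refine this.congr_deriv ?_
    simp only [id]; ring
  · simpa using ((hasDerivAt_id (0:ℝ)).const_mul (2 * c₂)).const_add c₁

lemma continuousAt {f : ℝ → ℝ} {a b : ℝ} (hf : HasJet2 f a b) : ContinuousAt f 0 := by
  obtain ⟨f', h1, -, -⟩ := hf
  exact h1.self_of_nhds.continuousAt

lemma comp {f g g' : ℝ → ℝ} {a b d : ℝ} (hf : HasJet2 f a b)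
    (hg : ∀ᶠ y in 𝓝 (f 0), HasDerivAt g (g' y) y) (hg' : HasDerivAt g' d (f 0)) :
    HasJet2 (fun h => g (f h)) (g' (f 0) * a) (d * a ^ 2 + g' (f 0) * b) := by
  have hc := hf.continuousAt
  obtain ⟨f', h1, h2, h3⟩ := hf
  refine ⟨fun h => g' (f h) * f' h, ?_, by simp [h2], ?_⟩
  · filter_upwards [h1, hc.eventually hg] with h hh hk using hk.comp h hh
  · have := (hg'.comp (0:ℝ) h1.self_of_nhds).mul h3
    refine this.congr_deriv ?_
    simp only [Function.comp, h2]; ring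

lemma congr {f g : ℝ → ℝ} {a b : ℝ} (hf : HasJet2 f a b) (hfg : g =ᶠ[𝓝 0] f) :
    HasJet2 g a b := by
  obtain ⟨f', h1, h2, h3⟩ := hf
  refine ⟨f', ?_, h2, h3⟩
  filter_upwards [h1, hfg.eventually_nhds] with h hh hk using hh.congr_of_eventuallyEq hk

/-- Necessary first and second order conditions at a local minimum. -/
lemma of_isLocalMin {f : ℝ → ℝ} {a b : ℝ} (hf : HasJet2 f a b) (hm : IsLocalMin f 0) :
    a = 0 ∧ 0 ≤ b := by
  obtain ⟨f', h1, h2, h3⟩ := hf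
  have ha : a = 0 := by rw [← h2]; exact hm.hasDerivAt_eq_zero h1.self_of_nhds
  refine ⟨ha, ?_⟩
  by_contra! hb
  -- if `b < 0` then `0` is a local maximum as well, so `f` is locally constant
  have hd : deriv (fun h => - f h) =ᶠ[𝓝 0] fun h => - f' h := by
    filter_upwards [h1] with h hh using hh.neg.deriv
  have hmax : IsLocalMin (fun h => - f h) 0 := by
    apply isLocalMin_of_deriv_deriv_pos
    · rw [hd.deriv_eq, h3.fun_neg.deriv]; linarith
    · rw [hd.self_of_nhds]; simp [h2, ha]
    · exact h1.self_of_nhds.continuousAt.neg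
  have hconst : f =ᶠ[𝓝 0] fun _ => f 0 := by
    filter_upwards [hm, hmax] with h hh hk
    linarith
  have hf'0 : f' =ᶠ[𝓝 0] fun _ => 0 := by
    filter_upwards [h1, hconst.eventually_nhds] with h hh hk
    exact hh.unique ((hasDerivAt_const h (f 0)).congr_of_eventuallyEq hk)
  have := (h3.congr_of_eventuallyEq hf'0.symm).unique (hasDerivAt_const (0:ℝ) (0:ℝ))
  linarith

end HasJet2

/-! ### Admissible linear functionals on matrices -/

/-- Euclidean space of dimension `N`. -/
abbrev Eu (N : ℕ) := EuclideanSpace ℝ (Fin N)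

/-- `N × N` matrices with the sup norm. -/
abbrev Mt (N : ℕ) := Fin N → Fin N → ℝ

/-- The rank one matrix `ξ ξᵀ`. -/
def outer (ξ : Eu N) : Mt N := fun i j => ξ i * ξ j

/-- The identity matrix. -/
def idMt : Mt N := fun i j => if i = j then 1 else 0

/-- The quadratic form of a matrix. -/
def qf (M : Mt N) (ξ : Eu N) : ℝ := ∑ i, ∑ j, M i j * ξ i * ξ j

/-- The functionals `M ↦ a_{ij} M_{ij}` that can occur as `∂_q F`: bounded by `L` and elliptic
with constant `α`. -/
def Adm (L α : ℝ) (A : Mt N →L[ℝ] ℝ) : Prop :=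
  ‖A‖ ≤ L ∧ ∀ ξ : Fin N → ℝ, α * (∑ i, ξ i ^ 2) ≤ A (fun i j => ξ i * ξ j)

lemma abs_apply_le (ξ : Eu N) (i : Fin N) : |ξ i| ≤ ‖ξ‖ := by
  simpa using PiLp.norm_apply_le ξ i

lemma norm_outer_le (ξ : Eu N) : ‖outer ξ‖ ≤ ‖ξ‖ ^ 2 := by
  rw [pi_norm_le_iff_of_nonneg (by positivity)]
  intro i
  rw [pi_norm_le_iff_of_nonneg (by positivity)]
  intro j
  simp only [outer, norm_mul, Real.norm_eq_abs, sq]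
  exact mul_le_mul (abs_apply_le ξ i) (abs_apply_le ξ j) (abs_nonneg _) (norm_nonneg _)

lemma norm_idMt_le : ‖(idMt : Mt N)‖ ≤ 1 := by
  rw [pi_norm_le_iff_of_nonneg (by positivity)]
  intro i
  rw [pi_norm_le_iff_of_nonneg (by positivity)]
  intro j
  simp only [idMt]
  split_ifs <;> simp

lemma Adm.abs_le {L α : ℝ} {A : Mt N →L[ℝ] ℝ} (hA : Adm L α A) {M : Mt N} {C : ℝ}
    (hM : ‖M‖ ≤ C) : |A M| ≤ L * C := by
  have h1 := A.le_opNorm M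
  rw [Real.norm_eq_abs] at h1
  exact h1.trans (mul_le_mul hA.1 hM (norm_nonneg _) ((norm_nonneg _).trans hA.1))

lemma Adm.outer_le {L α : ℝ} {A : Mt N →L[ℝ] ℝ} (hA : Adm L α A) (ξ : Eu N) :
    A (outer ξ) ≤ L * ‖ξ‖ ^ 2 :=
  (le_abs_self _).trans (hA.abs_le (norm_outer_le ξ))

lemma Adm.le_outer {L α : ℝ} {A : Mt N →L[ℝ] ℝ} (hA : Adm L α A) (ξ : Eu N) :
    α * ‖ξ‖ ^ 2 ≤ A (outer ξ) := by
  have := hA.2 ξ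
  rwa [← EuclideanSpace.real_norm_sq_eq] at this

lemma Adm.abs_idMt {L α : ℝ} {A : Mt N →L[ℝ] ℝ} (hA : Adm L α A) : |A idMt| ≤ L := by
  simpa using hA.abs_le norm_idMt_le

lemma qf_outer (a ξ : Eu N) : qf (outer a) ξ = ⟪a, ξ⟫ ^ 2 := by
  simp only [qf, outer, PiLp.inner_apply, sq, Finset.sum_mul_sum, RCLike.inner_apply, conj_trivial]
  exact Finset.sum_congr rfl fun i _ => Finset.sum_congr rfl fun j _ => by ring

lemma qf_idMt (ξ : Eu N) : qf idMt ξ = ‖ξ‖ ^ 2 := by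
  rw [EuclideanSpace.real_norm_sq_eq]; simp [qf, idMt, sq]

lemma qf_add (M M' : Mt N) (ξ : Eu N) : qf (M + M') ξ = qf M ξ + qf M' ξ := by
  simp [qf, add_mul, Finset.sum_add_distrib]

lemma qf_sub (M M' : Mt N) (ξ : Eu N) : qf (M - M') ξ = qf M ξ - qf M' ξ := by
  simp [qf, sub_mul, Finset.sum_sub_distrib]

lemma qf_smul (c : ℝ) (M : Mt N) (ξ : Eu N) : qf (c • M) ξ = c * qf M ξ := by
  simp [qf, Finset.mul_sum, mul_assoc]

/-- A positive semidefinite symmetric matrix is a sum of matrices `ξ ξᵀ`, so ellipticity makes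
admissible functionals monotone. -/
lemma Adm.nonneg_of_psd {L α : ℝ} (hα : 0 ≤ α) {A : Mt N →L[ℝ] ℝ} (hA : Adm L α A) {M : Mt N}
    (hs : ∀ i j, M i j = M j i) (hM : ∀ ξ : Eu N, 0 ≤ qf M ξ) : 0 ≤ A M := by
  have hpsd : (Matrix.of M).PosSemidef := by
    refine Matrix.PosSemidef.of_dotProduct_mulVec_nonneg ?_ ?_
    · ext i j; simp [hs]
    · intro ξ
      have := hM (WithLp.toLp 2 ξ)
      simp only [qf] at this
      simp only [dotProduct, Matrix.mulVec, Finset.mul_sum, Matrix.of_apply, Pi.star_apply,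
        star_trivial]
      refine this.trans_eq ?_
      exact Finset.sum_congr rfl fun i _ => Finset.sum_congr rfl fun j _ => by ring
  obtain ⟨m, C, hC⟩ := Matrix.posSemidef_iff_eq_sum_vecMulVec.mp hpsd
  have hM' : M = ∑ k, fun i j => C k i * C k j := by
    funext i j
    have := congrFun (congrFun hC i) j
    simpa [Matrix.sum_apply, Matrix.vecMulVec_apply] using this
  rw [hM', map_sum]
  refine Finset.sum_nonneg fun k _ => le_trans ?_ (hA.2 (C k))
  positivity

/-! ### Supersolutions tested by smooth functions, and the comparison principle -/

/-- `v` is a continuous function on `C × [0,∞)`, vanishing on `(C \ Ω) × (0,∞)`, which satisfies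
`v_t ≥ inf_A A(D²v) - L (|v| + |∇v|)` in `Ω × (0,∞)` in the viscosity sense: the inequality is
required for test functions `φ` touching `v` from below, and `A` ranges over the admissible
functionals. -/
structure IsVSol (C Ω : Set (Eu N)) (L α : ℝ) (v : Eu N → ℝ → ℝ) : Prop where
  cont : ContinuousOn (fun p : Eu N × ℝ => v p.1 p.2) (C ×ˢ Ici 0)
  bdry : ∀ x ∈ C, x ∉ Ω → ∀ t, 0 < t → v x t = 0
  visc : ∀ x ∈ Ω, ∀ t, 0 < t → ∀ (φ : Eu N → ℝ → ℝ) (τ : ℝ) (g : Eu N) (H : Mt N),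
    (∀ i j, H i j = H j i) → HasDerivAt (φ x) τ t →
    (∀ ξ : Eu N, HasJet2 (fun h => φ (x + h • ξ) t) ⟪g, ξ⟫ (qf H ξ)) →
    (∀ᶠ s in 𝓝[<] t, v x t - φ x t ≤ v x s - φ x s) →
    (∀ᶠ y in 𝓝 x, v x t - φ x t ≤ v y t - φ y t) →
    ∀ c : ℝ, (∀ A, Adm L α A → c ≤ A H) → c - L * (|v x t| + ‖g‖) ≤ τ

/-- `w` is touched from below at `(x,t)` by a smooth `φ` that satisfies
`φ_t ≤ inf_A A(D²φ) - L (|φ| + |∇φ|)` there. -/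
def IsSubAt (L α : ℝ) (w : Eu N → ℝ → ℝ) (x : Eu N) (t : ℝ) : Prop :=
  ∃ (φ : Eu N → ℝ → ℝ) (τ : ℝ) (g : Eu N) (H : Mt N) (c : ℝ),
    (∀ i j, H i j = H j i) ∧ HasDerivAt (φ x) τ t ∧
    (∀ ξ : Eu N, HasJet2 (fun h => φ (x + h • ξ) t) ⟪g, ξ⟫ (qf H ξ)) ∧
    φ x t = w x t ∧ (∀ᶠ s in 𝓝 t, φ x s ≤ w x s) ∧ (∀ᶠ y in 𝓝 x, φ y t ≤ w y t) ∧
    (∀ A, Adm L α A → c ≤ A H) ∧ τ ≤ c - L * (|w x t| + ‖g‖)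

/-- A subsolution that lies below `v` initially and is nonpositive off `Ω` stays below the
supersolution `v`. -/
theorem comparison {C Ω : Set (Eu N)} {L α : ℝ} {v w : Eu N → ℝ → ℝ} (hL : 0 ≤ L)
    (hC : IsCompact C) (hΩC : Ω ⊆ C) (hΩ : IsOpen Ω) (hv : IsVSol C Ω L α v) {t₁ t₂ : ℝ}
    (ht₁ : 0 ≤ t₁)
    (hw : ContinuousOn (fun p : Eu N × ℝ => w p.1 p.2) (C ×ˢ Icc t₁ t₂))
    (hinit : ∀ x ∈ C, w x t₁ ≤ v x t₁)
    (hbd : ∀ x ∈ C, x ∉ Ω → ∀ t ∈ Icc t₁ t₂, w x t ≤ 0)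
    (hsub : ∀ x ∈ Ω, ∀ t ∈ Ioc t₁ t₂, IsSubAt L α w x t) :
    ∀ x ∈ C, ∀ t ∈ Icc t₁ t₂, w x t ≤ v x t := by
  intro x₀ hx₀ t₀ ht₀
  by_contra! hneg
  set K := L + 1 with hK
  -- the weight `exp (-K t)`, `K > L`, absorbs the zero order term at a negative minimum
  set f : Eu N × ℝ → ℝ := fun p => (v p.1 p.2 - w p.1 p.2) * Real.exp (-K * p.2) with hf
  have hfc : ContinuousOn f (C ×ˢ Icc t₁ t₂) := by
    refine ContinuousOn.mul (ContinuousOn.sub (hv.cont.mono ?_) hw) ?_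
    · exact prod_mono le_rfl fun s hs => ht₁.trans hs.1
    · exact (by fun_prop : Continuous fun p : Eu N × ℝ => Real.exp (-K * p.2)).continuousOn
  obtain ⟨⟨x, t⟩, ⟨hx, ht⟩, hmin⟩ :=
    (hC.prod isCompact_Icc).exists_isMinOn ⟨(x₀, t₀), hx₀, ht₀⟩ hfc
  simp only at hx ht
  set μ := -f (x, t) with hμ
  have hμpos : 0 < μ := by
    have h1 : f (x, t) ≤ f (x₀, t₀) := hmin ⟨hx₀, ht₀⟩
    have h2 : f (x₀, t₀) < 0 := mul_neg_of_neg_of_pos (by simpa using hneg) (Real.exp_pos _)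
    linarith
  have hexp : ∀ s : ℝ, Real.exp (-K * s) * Real.exp (K * s) = 1 := fun s => by
    rw [← Real.exp_add]; simp
  have hall : ∀ y ∈ C, ∀ s ∈ Icc t₁ t₂, w y s - μ * Real.exp (K * s) ≤ v y s := by
    intro y hy s hs
    have h1 : f (x, t) ≤ f (y, s) := hmin ⟨hy, hs⟩
    have h2 : -μ * Real.exp (K * s) ≤ f (y, s) * Real.exp (K * s) :=
      mul_le_mul_of_nonneg_right (by linarith) (Real.exp_pos _).le
    have h3 : f (y, s) * Real.exp (K * s) = v y s - w y s := by
      simp only [hf]; rw [mul_assoc, hexp, mul_one]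
    linarith
  have heq : v x t = w x t - μ * Real.exp (K * t) := by
    have h3 : f (x, t) * Real.exp (K * t) = v x t - w x t := by
      simp only [hf]; rw [mul_assoc, hexp, mul_one]
    have : μ * Real.exp (K * t) = -(v x t - w x t) := by rw [← h3, hμ]; ring
    linarith
  have hpos : 0 < μ * Real.exp (K * t) := mul_pos hμpos (Real.exp_pos _)
  have htt : t₁ < t := by
    rcases ht.1.eq_or_lt with h | h
    · have := hinit x hx
      rw [h] at this
      linarith
    · exact h
  have ht0 : 0 < t := ht₁.trans_lt htt
  have hxΩ : x ∈ Ω := by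
    by_contra hxn
    have h1 := hv.bdry x hx hxn t ht0
    have h2 := hbd x hx hxn t ht
    linarith
  obtain ⟨φ, τ, g, H, c, hs, hτ, hj, hφ, hφt, hφx, hc, hle⟩ := hsub x hxΩ t ⟨htt, ht.2⟩
  have key := hv.visc x hxΩ t ht0 (fun y s => φ y s - μ * Real.exp (K * s))
    (τ - μ * (Real.exp (K * t) * K)) g H hs ?_ ?_ ?_ ?_ c hc
  · have h1 : |v x t| ≤ |w x t| + μ * Real.exp (K * t) := by
      rw [heq]
      refine (abs_sub _ _).trans ?_
      rw [abs_of_pos hpos]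
    have h2 := mul_le_mul_of_nonneg_left h1 hL
    have h3 : μ * (Real.exp (K * t) * K) = L * (μ * Real.exp (K * t)) + μ * Real.exp (K * t) := by
      rw [hK]; ring
    nlinarith
  · have h1 : HasDerivAt (fun s => Real.exp (K * s)) (Real.exp (K * t) * K) t := by
      simpa using ((hasDerivAt_id t).const_mul K).exp
    exact hτ.sub (h1.const_mul μ)
  · intro ξ
    simpa using (hj ξ).sub (HasJet2.const (μ * Real.exp (K * t)))
  · have h1 : ∀ᶠ s in 𝓝[<] t, t₁ < s := nhdsWithin_le_nhds (lt_mem_nhds htt)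
    filter_upwards [h1, self_mem_nhdsWithin, nhdsWithin_le_nhds hφt] with s hs1 hs2 hs3
    have := hall x hx s ⟨hs1.le, (le_of_lt hs2).trans ht.2⟩
    linarith
  · filter_upwards [hφx, hΩ.mem_nhds hxΩ] with y hy hyΩ
    have := hall y (hΩC hyΩ) t ht
    linarith

/-! ### Linearization of the fully nonlinear operator -/

/-- The fully nonlinear operator satisfies a Pucci type inequality.  Along the segment joining two
points of `𝓑`, the lower right Dini derivative of `f` is bounded below by splitting each increment
into one in the `(u,p)` variables, controlled by the Lipschitz constant, and one in the `q`
variable, controlled by the derivative. -/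
lemma pucci_ineq {𝓑 : Set (ℝ × Eu N × Mt N)} (hop : IsOpen 𝓑) (hconv : Convex ℝ 𝓑)
    {f : ℝ × Eu N × Mt N → ℝ} {L α : ℝ} (hL : 0 ≤ L)
    (hlip : ∀ P ∈ 𝓑, ∀ P' ∈ 𝓑, |f P - f P'| ≤ L * ‖P - P'‖)
    {fq : ℝ × Eu N × Mt N → (Mt N →L[ℝ] ℝ)}
    (hfq : ∀ P ∈ 𝓑, HasFDerivAt (fun q => f (P.1, P.2.1, q)) (fq P) P.2.2)
    (hell : ∀ P ∈ 𝓑, ∀ ξ : Fin N → ℝ, α * (∑ i, ξ i ^ 2) ≤ fq P (fun i j => ξ i * ξ j))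
    {P₁ P₂ : ℝ × Eu N × Mt N} (h₁ : P₁ ∈ 𝓑) (h₂ : P₂ ∈ 𝓑) {c : ℝ}
    (hc : ∀ A, Adm L α A → c ≤ A (P₁.2.2 - P₂.2.2)) :
    c - L * (|P₁.1 - P₂.1| + ‖P₁.2.1 - P₂.2.1‖) ≤ f P₁ - f P₂ := by
  obtain ⟨v₁, p₁, q₁⟩ := P₁
  obtain ⟨v₂, p₂, q₂⟩ := P₂
  simp only at hc ⊢
  set M := |v₁ - v₂| + ‖p₁ - p₂‖ with hM
  have hadm : ∀ P ∈ 𝓑, Adm L α (fq P) := by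
    intro P hP
    refine ⟨?_, hell P hP⟩
    refine (hfq P hP).le_of_lip' hL ?_
    have hcont : Continuous fun q : Mt N => ((P.1, P.2.1, q) : ℝ × Eu N × Mt N) := by fun_prop
    have hnear : ∀ᶠ q in 𝓝 P.2.2, ((P.1, P.2.1, q) : ℝ × Eu N × Mt N) ∈ 𝓑 :=
      hcont.continuousAt.eventually (hop.mem_nhds (by simpa using hP))
    filter_upwards [hnear] with q hq
    have := hlip _ hq P hP
    rw [Real.norm_eq_abs]
    refine this.trans_eq ?_
    congr 1
    have : ((P.1, P.2.1, q) : ℝ × Eu N × Mt N) - P = (0, 0, q - P.2.2) := by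
      ext <;> simp
    rw [this]
    simp [Prod.norm_def]
  set γ : ℝ → ℝ × Eu N × Mt N := fun s =>
    (v₂ + s * (v₁ - v₂), p₂ + s • (p₁ - p₂), q₂ + s • (q₁ - q₂)) with hγ
  have hγc : Continuous γ := by fun_prop
  have hγmem : ∀ s ∈ Icc (0:ℝ) 1, γ s ∈ 𝓑 := by
    intro s hs
    have := hconv.add_smul_sub_mem h₂ h₁ hs
    simpa [hγ] using this
  have hfc : ContinuousOn f 𝓑 := by
    have : LipschitzOnWith ⟨L, hL⟩ f 𝓑 := LipschitzOnWith.of_dist_le_mul fun P hP P' hP' => by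
      rw [Real.dist_eq, dist_eq_norm]; exact hlip P hP P' hP'
    exact this.continuousOn
  have main := image_le_of_liminf_slope_right_le_deriv_boundary (f := fun s => - f (γ s))
    (a := 0) (b := 1) (B := fun s => - f (γ 0) - (c - L * M) * s)
    (B' := fun _ => -(c - L * M))
    ((hfc.comp hγc.continuousOn hγmem).neg) (by simp) (by fun_prop) ?_ ?_
    (right_mem_Icc.mpr zero_le_one)
  · have e1 : γ 1 = (v₁, p₁, q₁) := by simp [hγ]
    have e0 : γ 0 = (v₂, p₂, q₂) := by simp [hγ]
    simp only [e1, e0] at main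
    linarith
  · intro s _
    have := ((hasDerivAt_id s).const_mul (c - L * M)).const_sub (- f (γ 0))
    simpa using this.hasDerivWithinAt
  · intro s hs r hr
    have hs' : s ∈ Icc (0:ℝ) 1 := ⟨hs.1, hs.2.le⟩
    have hP := hγmem s hs'
    have hd : HasDerivAt (fun s' : ℝ => f ((γ s).1, (γ s).2.1, q₂ + s' • (q₁ - q₂)))
        (fq (γ s) (q₁ - q₂)) s := by
      have h1 : HasDerivAt (fun s' : ℝ => q₂ + s' • (q₁ - q₂)) (q₁ - q₂) s := by
        simpa using ((hasDerivAt_id s).smul_const (q₁ - q₂)).const_add q₂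
      exact (hfq (γ s) hP).comp_hasDerivAt s h1
    have hge : c ≤ fq (γ s) (q₁ - q₂) := hc _ (hadm _ hP)
    have hslope := (hasDerivAt_iff_tendsto_slope.mp hd).mono_left
      (nhdsWithin_mono s (fun y (hy : s < y) => hy.ne'))
    have hlt : ∀ᶠ s' in 𝓝[>] s, L * M - r < slope (fun s' : ℝ =>
        f ((γ s).1, (γ s).2.1, q₂ + s' • (q₁ - q₂))) s s' :=
      hslope.eventually (lt_mem_nhds (by linarith))
    have hmid : ∀ᶠ s' in 𝓝[>] s,
        (((γ s).1, (γ s).2.1, q₂ + s' • (q₁ - q₂)) : ℝ × Eu N × Mt N) ∈ 𝓑 := by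
      have hcont : Continuous fun s' : ℝ =>
          (((γ s).1, (γ s).2.1, q₂ + s' • (q₁ - q₂)) : ℝ × Eu N × Mt N) := by fun_prop
      exact nhdsWithin_le_nhds (hcont.continuousAt.eventually (hop.mem_nhds hP))
    have hend : ∀ᶠ s' in 𝓝[>] s, s' < 1 := nhdsWithin_le_nhds (gt_mem_nhds hs.2)
    refine Eventually.frequently ?_
    filter_upwards [hlt, hmid, hend, self_mem_nhdsWithin] with s' k1 k2 k3 k4
    have k4' : 0 < s' - s := sub_pos.mpr k4
    have hP' := hγmem s' ⟨hs.1.trans (le_of_lt k4), k3.le⟩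
    have hstep := hlip _ hP' _ k2
    have hnorm : ‖γ s' - ((γ s).1, (γ s).2.1, q₂ + s' • (q₁ - q₂))‖ ≤ (s' - s) * M := by
      have e1 : γ s' - ((γ s).1, (γ s).2.1, q₂ + s' • (q₁ - q₂))
          = ((s' - s) * (v₁ - v₂), (s' - s) • (p₁ - p₂), (0 : Mt N)) := by
        refine Prod.ext ?_ (Prod.ext ?_ ?_)
        · simp [hγ]; ring
        · simp only [hγ, Prod.snd_sub, Prod.fst_sub]; module
        · simp [hγ]
      rw [e1, Prod.norm_def, Prod.norm_def]
      simp only [norm_mul, norm_smul, Real.norm_eq_abs, abs_of_pos k4', norm_zero]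
      have := mul_nonneg k4'.le (abs_nonneg (v₁ - v₂))
      have := mul_nonneg k4'.le (norm_nonneg (p₁ - p₂))
      refine max_le ?_ (max_le ?_ ?_) <;> rw [hM, mul_add] <;> linarith
    have hstep2 : |f (γ s') - f ((γ s).1, (γ s).2.1, q₂ + s' • (q₁ - q₂))|
        ≤ (s' - s) * (L * M) := by
      refine hstep.trans ((mul_le_mul_of_nonneg_left hnorm hL).trans_eq (by ring))
    rw [slope_def_field] at k1 ⊢
    have e2 : f ((γ s).1, (γ s).2.1, q₂ + s • (q₁ - q₂)) = f (γ s) := rfl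
    rw [e2, lt_div_iff₀ k4'] at k1
    rw [div_lt_iff₀ k4']
    have := (abs_le.mp hstep2).1
    nlinarith

/-! ### Reflections -/

/-- `reflHyp e` as a continuous linear map. -/
def reflL (e : Eu N) : Eu N →L[ℝ] Eu N :=
  ContinuousLinearMap.id ℝ (Eu N) - ((2:ℝ) • (innerSL ℝ e)).smulRight e

lemma reflL_apply (e x : Eu N) : reflL e x = reflHyp e x := by
  simp [reflL, reflHyp, real_inner_comm]

lemma inner_reflHyp (e a b : Eu N) : ⟪reflHyp e a, b⟫ = ⟪a, reflHyp e b⟫ := by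
  simp only [reflHyp, inner_sub_left, inner_sub_right, inner_smul_left, inner_smul_right,
    conj_trivial]
  rw [real_inner_comm b e]; ring

lemma inner_reflHyp_self {e : Eu N} (he : ‖e‖ = 1) (x : Eu N) : ⟪reflHyp e x, e⟫ = -⟪x, e⟫ := by
  simp only [reflHyp, inner_sub_left, inner_smul_left, conj_trivial]
  rw [real_inner_self_eq_norm_sq, he]; ring

lemma reflHyp_reflHyp {e : Eu N} (he : ‖e‖ = 1) (x : Eu N) : reflHyp e (reflHyp e x) = x := by
  have h := inner_reflHyp_self he x
  unfold reflHyp at h ⊢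
  rw [h]; module

lemma norm_reflHyp {e : Eu N} (he : ‖e‖ = 1) (x : Eu N) : ‖reflHyp e x‖ = ‖x‖ := by
  have h : ‖reflHyp e x‖ ^ 2 = ‖x‖ ^ 2 := by
    rw [← real_inner_self_eq_norm_sq, inner_reflHyp, reflHyp_reflHyp he, real_inner_self_eq_norm_sq]
  exact (sq_eq_sq₀ (norm_nonneg _) (norm_nonneg _)).mp h

lemma continuous_reflHyp (e : Eu N) : Continuous (reflHyp e) := by
  have : reflHyp e = reflL e := funext fun x => (reflL_apply e x).symm
  rw [this]; exact (reflL e).continuous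

lemma reflHyp_eq_self {e x : Eu N} (h : ⟪x, e⟫ = 0) : reflHyp e x = x := by
  simp [reflHyp, h]

lemma inner_gradVec (ℓ : Eu N →L[ℝ] ℝ) (ξ : Eu N) : ⟪gradVec ℓ, ξ⟫ = ℓ ξ := by
  have h : ξ = ∑ i, ξ i • EuclideanSpace.single i (1:ℝ) := by
    ext j; simp [Pi.single_apply]
  conv_rhs => rw [h]
  simp [gradVec, PiLp.inner_apply]

lemma qf_hessMat (D2 : Eu N →L[ℝ] Eu N →L[ℝ] ℝ) (ξ : Eu N) : qf (hessMat D2) ξ = D2 ξ ξ := by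
  have h : ξ = ∑ i, ξ i • EuclideanSpace.single i (1:ℝ) := by
    ext j; simp [Pi.single_apply]
  conv_rhs => rw [h]
  simp only [map_sum, map_smul, sum_apply, smul_apply,
    smul_eq_mul, qf, hessMat, Finset.mul_sum]
  rw [Finset.sum_comm]
  exact Finset.sum_congr rfl fun i _ => Finset.sum_congr rfl fun j _ => by ring

lemma reflMat_symm (e : Eu N) (i j : Fin N) : reflMat e i j = reflMat e j i := by
  simp only [reflMat, eq_comm]; ring

lemma sum_reflMat (e ξ : Eu N) (k : Fin N) : ∑ i, reflMat e i k * ξ i = reflHyp e ξ k := by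
  simp only [reflMat, sub_mul, Finset.sum_sub_distrib, reflHyp, PiLp.sub_apply, PiLp.smul_apply,
    smul_eq_mul, PiLp.inner_apply, RCLike.inner_apply, conj_trivial, Finset.mul_sum,
    Finset.sum_mul]
  congr 1
  · simp
  · exact Finset.sum_congr rfl fun i _ => by ring

lemma qf_matConj (e : Eu N) (q : Mt N) (ξ : Eu N) :
    qf (matConj (reflMat e) q) ξ = qf q (reflHyp e ξ) := by
  simp only [qf, matConj, ← sum_reflMat, Finset.sum_mul, Finset.mul_sum]
  have : ∀ f : Fin N → Fin N → Fin N → Fin N → ℝ,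
      ∑ i, ∑ j, ∑ k, ∑ l, f i j k l = ∑ k, ∑ l, ∑ j, ∑ i, f i j k l := by
    intro f
    calc ∑ i, ∑ j, ∑ k, ∑ l, f i j k l = ∑ i, ∑ k, ∑ j, ∑ l, f i j k l :=
          Finset.sum_congr rfl fun i _ => Finset.sum_comm
      _ = ∑ k, ∑ i, ∑ j, ∑ l, f i j k l := Finset.sum_comm
      _ = ∑ k, ∑ i, ∑ l, ∑ j, f i j k l := Finset.sum_congr rfl fun k _ =>
          Finset.sum_congr rfl fun i _ => Finset.sum_comm
      _ = ∑ k, ∑ l, ∑ i, ∑ j, f i j k l := Finset.sum_congr rfl fun k _ => Finset.sum_comm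
      _ = ∑ k, ∑ l, ∑ j, ∑ i, f i j k l := Finset.sum_congr rfl fun k _ =>
          Finset.sum_congr rfl fun l _ => Finset.sum_comm
  rw [this]
  refine Finset.sum_congr rfl fun k _ => Finset.sum_congr rfl fun l _ =>
    Finset.sum_congr rfl fun j _ => Finset.sum_congr rfl fun i _ => ?_
  rw [reflMat_symm e l j]; ring

lemma matConj_symm {e : Eu N} {q : Mt N} (hq : ∀ i j, q i j = q j i) (i j : Fin N) :
    matConj (reflMat e) q i j = matConj (reflMat e) q j i := by
  simp only [matConj]
  rw [Finset.sum_comm]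
  refine Finset.sum_congr rfl fun k _ => Finset.sum_congr rfl fun l _ => ?_
  rw [hq l k, reflMat_symm e i l, reflMat_symm e k j]; ring

/-- The part of the closed domain on the nonnegative side of `H(e)`. -/
def halfClo (B : Set (Eu N)) (e : Eu N) : Set (Eu N) := {x ∈ closure B | 0 ≤ ⟪x, e⟫}

lemma isCompact_halfClo {B : Set (Eu N)} (hB : Bornology.IsBounded B) (e : Eu N) :
    IsCompact (halfClo B e) := by
  refine hB.isCompact_closure.inter_right ?_
  have h : Continuous fun x : Eu N => ⟪x, e⟫ := by fun_prop
  exact isClosed_le continuous_const h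

lemma isOpen_halfDom {B : Set (Eu N)} (hB : IsOpen B) (e : Eu N) : IsOpen (halfDom B e) := by
  have h : Continuous fun x : Eu N => ⟪x, e⟫ := by fun_prop
  exact hB.inter (isOpen_lt continuous_const h)

lemma halfDom_subset (B : Set (Eu N)) (e : Eu N) : halfDom B e ⊆ halfClo B e :=
  fun _ hx => ⟨subset_closure hx.1, hx.2.le⟩

lemma hasJet2_line {f : Eu N → ℝ} {Df : Eu N → Eu N →L[ℝ] ℝ} {D2 : Eu N →L[ℝ] Eu N →L[ℝ] ℝ}
    {x : Eu N} (h1 : ∀ᶠ y in 𝓝 x, HasFDerivAt f (Df y) y) (h2 : HasFDerivAt Df D2 x) (ξ : Eu N) :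
    HasJet2 (fun h => f (x + h • ξ)) (Df x ξ) (D2 ξ ξ) := by
  have hl : ∀ h : ℝ, HasDerivAt (fun h : ℝ => x + h • ξ) ξ h := fun h => by
    simpa using ((hasDerivAt_id h).smul_const ξ).const_add x
  have hc : Tendsto (fun h : ℝ => x + h • ξ) (𝓝 0) (𝓝 x) := by
    simpa using (hl 0).continuousAt.tendsto
  refine ⟨fun h => Df (x + h • ξ) ξ, ?_, by simp, ?_⟩
  · filter_upwards [hc.eventually h1] with h hh using hh.comp_hasDerivAt h (hl h)
  · have h3 : HasDerivAt (fun h : ℝ => Df (x + h • ξ)) (D2 ξ) 0 := by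
      have : HasFDerivAt Df D2 (x + (0:ℝ) • ξ) := by simpa using h2
      exact this.comp_hasDerivAt 0 (hl 0)
    simpa using h3.clm_apply (hasDerivAt_const (0:ℝ) ξ)

lemma deriv_nonpos_of_left_min {f : ℝ → ℝ} {d t : ℝ} (hf : HasDerivAt f d t)
    (hm : ∀ᶠ s in 𝓝[<] t, f t ≤ f s) : d ≤ 0 := by
  have h1 : Tendsto (slope f t) (𝓝[<] t) (𝓝 d) :=
    (hasDerivAt_iff_tendsto_slope.mp hf).mono_left
      (nhdsWithin_mono t (fun y (hy : y < t) => hy.ne))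
  refine le_of_tendsto h1 ?_
  filter_upwards [hm, self_mem_nhdsWithin] with s hs hst
  rw [slope_def_field]
  exact div_nonpos_of_nonneg_of_nonpos (by linarith) (sub_nonpos.mpr (le_of_lt hst))

lemma closure_refl {B : Set (Eu N)} {e : Eu N} (h : ∀ x ∈ B, reflHyp e x ∈ B) {x : Eu N}
    (hx : x ∈ closure B) : reflHyp e x ∈ closure B :=
  map_mem_closure (continuous_reflHyp e) hx h

/-- The difference `u(x,t) - u(σ_e x,t)` is a supersolution on the half domain, with constants that
do not depend on `e`. -/
lemma isVSol_refl {B : Set (Eu N)} (hBo : IsOpen B)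
    {𝓑 : Set (ℝ × Eu N × Mt N)} (h𝓑open : IsOpen 𝓑) (h𝓑conv : Convex ℝ 𝓑)
    {F : ℝ → Eu N → (ℝ × Eu N × Mt N) → ℝ} {e : Eu N} (he : ‖e‖ = 1)
    (hBrefl : ∀ x ∈ B, reflHyp e x ∈ B)
    (hF1dom : ∀ x ∈ B, ∀ v : ℝ, ∀ p : Eu N, ∀ q : Mt N, (v, p, q) ∈ 𝓑 →
      reflHyp e x ∈ B ∧ (v, reflHyp e p, matConj (reflMat e) q) ∈ 𝓑)
    (hF1sym : ∀ t ∈ Ioi (0:ℝ), ∀ x ∈ B, ∀ v : ℝ, ∀ p : Eu N, ∀ q : Mt N, (v, p, q) ∈ 𝓑 →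
      F t (reflHyp e x) (v, reflHyp e p, matConj (reflMat e) q) = F t x (v, p, q))
    {L : ℝ} (hL : 0 ≤ L) (hF_lip : ∀ t ∈ Ici (0:ℝ), ∀ x ∈ B, ∀ P ∈ 𝓑, ∀ P' ∈ 𝓑,
      |F t x P - F t x P'| ≤ L * ‖P - P'‖)
    {Fq : ℝ → Eu N → (ℝ × Eu N × Mt N) → (Mt N →L[ℝ] ℝ)}
    (hFq : ∀ t ∈ Ici (0:ℝ), ∀ x ∈ B, ∀ v : ℝ, ∀ p : Eu N, ∀ q : Mt N, (v, p, q) ∈ 𝓑 →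
      HasFDerivAt (fun q' => F t x (v, p, q')) (Fq t x (v, p, q)) q)
    {α₀ : ℝ} (hα₀ : 0 < α₀)
    (hF4 : ∀ t ∈ Ici (0:ℝ), ∀ x ∈ B, ∀ P ∈ 𝓑, ∀ ξ : Fin N → ℝ,
      α₀ * (∑ i, ξ i ^ 2) ≤ Fq t x P (fun i j => ξ i * ξ j))
    {u ut : Eu N → ℝ → ℝ} {Du : Eu N → ℝ → (Eu N →L[ℝ] ℝ)}
    {D2u : Eu N → ℝ → (Eu N →L[ℝ] Eu N →L[ℝ] ℝ)}
    (hu_cont : ContinuousOn (fun p : Eu N × ℝ => u p.1 p.2) (closure B ×ˢ Ici 0))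
    (hut : ∀ x ∈ B, ∀ t ∈ Ioi (0:ℝ), HasDerivAt (fun s => u x s) (ut x t) t)
    (hDu : ∀ x ∈ B, ∀ t ∈ Ioi (0:ℝ), HasFDerivAt (fun y => u y t) (Du x t) x)
    (hD2u : ∀ x ∈ B, ∀ t ∈ Ioi (0:ℝ), HasFDerivAt (fun y => Du y t) (D2u x t) x)
    (hdom : ∀ x ∈ B, ∀ t ∈ Ioi (0:ℝ), (u x t, gradVec (Du x t), hessMat (D2u x t)) ∈ 𝓑)
    (hPDE : ∀ x ∈ B, ∀ t ∈ Ioi (0:ℝ),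
      ut x t = F t x (u x t, gradVec (Du x t), hessMat (D2u x t)))
    (hbc : ∀ x ∈ frontier B, ∀ t ∈ Ioi (0:ℝ), u x t = 0) :
    IsVSol (halfClo B e) (halfDom B e) L α₀ (fun x t => u x t - u (reflHyp e x) t) := by
  refine ⟨?_, ?_, ?_⟩
  · refine ContinuousOn.sub (hu_cont.mono (prod_mono (fun x hx => hx.1) le_rfl)) ?_
    have h1 : Continuous fun p : Eu N × ℝ => (reflHyp e p.1, p.2) :=
      ((continuous_reflHyp e).comp continuous_fst).prodMk continuous_snd
    exact hu_cont.comp h1.continuousOn fun p hp => ⟨closure_refl hBrefl hp.1.1, hp.2⟩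
  · intro x hx hxn t ht
    show u x t - u (reflHyp e x) t = 0
    by_cases hxB : x ∈ B
    · have h0 : ⟪x, e⟫ = 0 := le_antisymm (not_lt.mp fun h => hxn ⟨hxB, h⟩) hx.2
      rw [reflHyp_eq_self h0, sub_self]
    · have hxn' : reflHyp e x ∉ B := fun h => hxB (by
        have := hBrefl _ h
        rwa [reflHyp_reflHyp he] at this)
      rw [hbc x (by rw [hBo.frontier_eq]; exact ⟨hx.1, hxB⟩) t ht,
        hbc _ (by rw [hBo.frontier_eq]; exact ⟨closure_refl hBrefl hx.1, hxn'⟩) t ht, sub_self]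
  · intro x hx t ht φ τ g H hs hτ hj hmt hmx c hc
    have hxB : x ∈ B := hx.1
    set y := reflHyp e x with hy
    have hyB : y ∈ B := hBrefl x hxB
    set Q : Mt N := hessMat (D2u x t) - matConj (reflMat e) (hessMat (D2u y t)) with hQ
    set G : Eu N := gradVec (Du x t) - reflHyp e (gradVec (Du y t)) with hG
    have hDuev : ∀ z ∈ B, ∀ᶠ z' in 𝓝 z, HasFDerivAt (fun y => u y t) (Du z' t) z' := fun z hz => by
      filter_upwards [hBo.mem_nhds hz] with z' hz' using hDu z' hz' t ht
    have hsymm : ∀ z ∈ B, ∀ i j, hessMat (D2u z t) i j = hessMat (D2u z t) j i := fun z hz i j =>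
      second_derivative_symmetric_of_eventually (hDuev z hz) (hD2u z hz t ht) _ _
    have hQs : ∀ i j, Q i j = Q j i := fun i j => by
      simp only [hQ, Pi.sub_apply]
      rw [hsymm x hxB i j, matConj_symm (hsymm y hyB) i j]
    have hvjet : ∀ ξ : Eu N, HasJet2 (fun h => u (x + h • ξ) t - u (reflHyp e (x + h • ξ)) t)
        ⟪G, ξ⟫ (qf Q ξ) := by
      intro ξ
      have j1 := hasJet2_line (hDuev x hxB) (hD2u x hxB t ht) ξ
      have j2 := hasJet2_line (hDuev y hyB) (hD2u y hyB t ht) (reflHyp e ξ)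
      have e1 : ∀ h : ℝ, reflHyp e (x + h • ξ) = y + h • reflHyp e ξ := fun h => by
        simp only [hy, ← reflL_apply, map_add, map_smul]
      have j3 := j1.sub j2
      simp only [e1]
      rwa [hG, hQ, inner_sub_left, inner_reflHyp, inner_gradVec, inner_gradVec, qf_sub, qf_matConj,
        qf_hessMat, qf_hessMat]
    have hmin : ∀ ξ : Eu N, ⟪G, ξ⟫ - ⟪g, ξ⟫ = 0 ∧ 0 ≤ qf Q ξ - qf H ξ := by
      intro ξ
      refine ((hvjet ξ).sub (hj ξ)).of_isLocalMin ?_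
      have hcont : Tendsto (fun h : ℝ => x + h • ξ) (𝓝 0) (𝓝 x) := by
        have : Continuous fun h : ℝ => x + h • ξ := by fun_prop
        simpa using this.tendsto 0
      filter_upwards [hcont.eventually hmx] with h hh
      simpa using hh
    have hGg : G = g := ext_inner_right ℝ fun ξ => sub_eq_zero.mp (hmin ξ).1
    have hτ' : ut x t - ut y t - τ ≤ 0 := by
      refine deriv_nonpos_of_left_min (((hut x hxB t ht).sub (hut y hyB t ht)).sub hτ) ?_
      exact hmt
    have hdy := hF1dom y hyB _ _ _ (hdom y hyB t ht)
    have hsy := hF1sym t ht y hyB _ _ _ (hdom y hyB t ht)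
    rw [hy, reflHyp_reflHyp he, ← hy] at hsy
    have ht' : t ∈ Ici (0:ℝ) := le_of_lt ht
    have key := pucci_ineq (L := L) (α := α₀) h𝓑open h𝓑conv hL (hF_lip t ht' x hxB)
      (fun P hP => hFq t ht' x hxB P.1 P.2.1 P.2.2 hP) (hF4 t ht' x hxB)
      (hdom x hxB t ht) hdy.2 (c := c) ?_
    · rw [hsy, ← hPDE x hxB t ht, ← hPDE y hyB t ht] at key
      simp only [← hG, hGg] at key
      linarith
    · intro A hA
      have h1 : 0 ≤ A (Q - H) := hA.nonneg_of_psd hα₀.le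
        (fun i j => by simp only [Pi.sub_apply]; rw [hQs i j, hs i j])
        (fun ξ => by rw [qf_sub]; exact (hmin ξ).2)
      rw [map_sub] at h1
      have h2 := hc A hA
      simp only [← hQ]
      linarith

/-! ### A radial defining function of the domain -/

/-- A defining function `x ↦ h(|x|²)` of the radial domain `B = {|x|² ∈ J}`, where `h1` is the
derivative of `log h` and `D` is minus its second derivative, together with the inequalities used for the barriers. -/
structure RadData (B : Set (Eu N)) where
  /-- the interval of values of `|x|²` -/
  J : Set ℝ
  /-- the defining function -/
  h : ℝ → ℝ
  /-- the derivative of `log h` -/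
  h1 : ℝ → ℝ
  /-- minus the second derivative of `log h` -/
  D : ℝ → ℝ
  /-- bound for `|x|` -/
  Rm : ℝ
  /-- bound for `h` -/
  hm : ℝ
  /-- constant in the lower bounds -/
  c0 : ℝ
  /-- constant in the lower bounds -/
  C0 : ℝ
  /-- constant in the lower bound of `D` -/
  c6 : ℝ
  memB : ∀ x, x ∈ B ↔ ‖x‖ ^ 2 ∈ J
  openJ : IsOpen J
  cont : Continuous h
  pos : ∀ τ ∈ J, 0 < h τ
  quasi : ∀ a ∈ J, ∀ b ∈ J, ∀ s ∈ Icc (0:ℝ) 1,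
    (1 - s) * a + s * b ∈ J ∧ min (h a) (h b) ≤ h ((1 - s) * a + s * b)
  hlog : ∀ τ ∈ J, HasDerivAt (fun s => Real.log (h s)) (h1 τ) τ
  hh1 : ∀ τ ∈ J, HasDerivAt h1 (-D τ) τ
  Rm_pos : 0 < Rm
  hm_pos : 0 < hm
  c0_pos : 0 < c0
  c0_le : c0 ≤ 1
  C0_nonneg : 0 ≤ C0
  c6_pos : 0 < c6
  clo_norm : ∀ x ∈ closure B, ‖x‖ ≤ Rm
  clo_nonneg : ∀ x ∈ closure B, 0 ≤ h (‖x‖ ^ 2)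
  clo_le : ∀ x ∈ closure B, h (‖x‖ ^ 2) ≤ hm
  bdry : ∀ x ∈ closure B, x ∉ B → h (‖x‖ ^ 2) = 0
  r1 : ∀ τ ∈ J, 0 ≤ τ → h1 τ ^ 2 ≤ D τ
  r2 : ∀ τ ∈ J, 0 ≤ τ → c0 * D τ - C0 ≤ 4 * τ * h1 τ ^ 2 + 4 * h1 τ
  r3 : ∀ τ ∈ J, 0 ≤ τ → c0 * D τ - C0 ≤ 4 * τ * D τ
  r4 : ∀ τ ∈ J, 0 ≤ τ → c6 / h τ ^ 2 ≤ D τ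

lemma radData_ball {R : ℝ} (hR : 0 < R) : Nonempty (RadData (ball (0 : Eu N) R)) := by
  have hclo : ∀ x ∈ closure (ball (0 : Eu N) R), ‖x‖ ≤ R := fun x hx => by
    simpa using closure_ball_subset_closedBall hx
  have hsq : ∀ x ∈ closure (ball (0 : Eu N) R), ‖x‖ ^ 2 ≤ R ^ 2 := fun x hx =>
    pow_le_pow_left₀ (norm_nonneg x) (hclo x hx) 2
  refine ⟨⟨Iio (R ^ 2), fun τ => R ^ 2 - τ, fun τ => -(R ^ 2 - τ)⁻¹, fun τ => ((R ^ 2 - τ) ^ 2)⁻¹,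
    R, R ^ 2, min 1 (2 * R ^ 2), 8 / R ^ 2, 1, ?_, isOpen_Iio, by fun_prop,
    fun τ hτ => sub_pos.mpr hτ, ?_, ?_, ?_, hR, by positivity, by positivity, min_le_left _ _,
    by positivity, one_pos, hclo, ?_, ?_, ?_, ?_, ?_, ?_, ?_⟩⟩
  · intro x
    rw [mem_ball_zero_iff, mem_Iio, pow_lt_pow_iff_left₀ (norm_nonneg x) hR.le two_ne_zero]
  · intro a ha b hb s hs
    simp only [mem_Iio] at *
    obtain ⟨hs0, hs1⟩ := hs
    have h3 := min_le_left (R ^ 2 - a) (R ^ 2 - b)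
    have h4 := min_le_right (R ^ 2 - a) (R ^ 2 - b)
    have h5 : 0 < min (R ^ 2 - a) (R ^ 2 - b) := lt_min (by linarith) (by linarith)
    have : min (R ^ 2 - a) (R ^ 2 - b) ≤ R ^ 2 - ((1 - s) * a + s * b) := by
      nlinarith [mul_le_mul_of_nonneg_left h3 (sub_nonneg.mpr hs1),
        mul_le_mul_of_nonneg_left h4 hs0]
    exact ⟨by linarith, this⟩
  · intro τ hτ
    have h1 : R ^ 2 - τ ≠ 0 := (sub_pos.mpr hτ).ne'
    refine HasDerivAt.congr_deriv (((hasDerivAt_id' τ).const_sub (R ^ 2)).log h1) ?_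
    rw [neg_div, one_div]
  · intro τ hτ
    have h1 : R ^ 2 - τ ≠ 0 := (sub_pos.mpr hτ).ne'
    refine HasDerivAt.congr_deriv (((hasDerivAt_id' τ).const_sub (R ^ 2)).inv h1).neg ?_
    rw [neg_neg, one_div]
  · intro x hx; linarith [hsq x hx]
  · intro x hx; linarith [sq_nonneg ‖x‖]
  · intro x hx hxn
    have : ‖x‖ = R := le_antisymm (hclo x hx) (not_lt.mp fun h => hxn (by simpa using h))
    simp [this]
  · intro τ hτ _
    rw [neg_sq, inv_pow]
  · intro τ hτ _
    have h1 : 0 < R ^ 2 - τ := sub_pos.mpr hτ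
    set k := (R ^ 2 - τ)⁻¹ with hk
    have hk1 : τ * k = R ^ 2 * k - 1 := by rw [hk]; field_simp; ring
    have h5 := min_le_right 1 (2 * R ^ 2)
    rw [← inv_pow, ← hk]
    have h6 : 2 * R ^ 2 * k ^ 2 - 8 * k + 8 / R ^ 2 = 2 * (R * k - 2 / R) ^ 2 := by
      field_simp; ring
    have e1 : 4 * τ * (-k) ^ 2 + 4 * -k = 4 * R ^ 2 * k ^ 2 - 8 * k := by
      linear_combination 4 * k * hk1
    rw [e1]
    nlinarith [sq_nonneg (R * k - 2 / R), mul_le_mul_of_nonneg_right h5 (sq_nonneg k)]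
  · intro τ hτ _
    have h1 : 0 < R ^ 2 - τ := sub_pos.mpr hτ
    set k := (R ^ 2 - τ)⁻¹ with hk
    have hk0 : 0 < k := inv_pos.mpr h1
    have hk1 : τ * k = R ^ 2 * k - 1 := by rw [hk]; field_simp; ring
    have h5 := min_le_right 1 (2 * R ^ 2)
    rw [← inv_pow, ← hk]
    have h6 : 2 * R ^ 2 * k ^ 2 - 8 * k + 8 / R ^ 2 = 2 * (R * k - 2 / R) ^ 2 := by
      field_simp; ring
    have e1 : 4 * τ * k ^ 2 = 4 * R ^ 2 * k ^ 2 - 4 * k := by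
      linear_combination 4 * k * hk1
    rw [e1]
    nlinarith [sq_nonneg (R * k - 2 / R), mul_le_mul_of_nonneg_right h5 (sq_nonneg k)]
  · intro τ hτ _
    rw [one_div]

lemma radData_annulus {r R : ℝ} (hr : 0 < r) (hrR : r < R) :
    Nonempty (RadData {x : Eu N | r < ‖x‖ ∧ ‖x‖ < R}) := by
  have hR : 0 < R := hr.trans hrR
  have hw : 0 < R ^ 2 - r ^ 2 := by nlinarith
  have hclo : ∀ x ∈ closure {x : Eu N | r < ‖x‖ ∧ ‖x‖ < R}, r ≤ ‖x‖ ∧ ‖x‖ ≤ R := fun x hx => by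
    have h1 : IsClosed {x : Eu N | r ≤ ‖x‖ ∧ ‖x‖ ≤ R} :=
      (isClosed_le continuous_const continuous_norm).inter
        (isClosed_le continuous_norm continuous_const)
    have h2 : {x : Eu N | r < ‖x‖ ∧ ‖x‖ < R} ⊆ {x : Eu N | r ≤ ‖x‖ ∧ ‖x‖ ≤ R} :=
      fun y hy => ⟨hy.1.le, hy.2.le⟩
    exact closure_minimal h2 h1 hx
  have hsq : ∀ x ∈ closure {x : Eu N | r < ‖x‖ ∧ ‖x‖ < R}, r ^ 2 ≤ ‖x‖ ^ 2 ∧ ‖x‖ ^ 2 ≤ R ^ 2 :=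
    fun x hx => ⟨pow_le_pow_left₀ hr.le (hclo x hx).1 2,
      pow_le_pow_left₀ (norm_nonneg x) (hclo x hx).2 2⟩
  set w := R ^ 2 - r ^ 2 with hwdef
  set M := 8 * r ^ 2 / w + 4 with hM
  refine ⟨⟨Ioo (r ^ 2) (R ^ 2), fun τ => (R ^ 2 - τ) * (τ - r ^ 2),
    fun τ => (τ - r ^ 2)⁻¹ - (R ^ 2 - τ)⁻¹, fun τ => ((τ - r ^ 2) ^ 2)⁻¹ + ((R ^ 2 - τ) ^ 2)⁻¹,
    R, w ^ 2, min 1 (2 * r ^ 2), M ^ 2 / (4 * r ^ 2), w ^ 2 / 2, ?_, isOpen_Ioo, by fun_prop,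
    fun τ hτ => mul_pos (sub_pos.mpr hτ.2) (sub_pos.mpr hτ.1), ?_, ?_, ?_, hR, by positivity,
    by positivity, min_le_left _ _,
    by positivity, by positivity, fun x hx => (hclo x hx).2, ?_, ?_, ?_, ?_, ?_, ?_, ?_⟩⟩
  · intro x
    rw [mem_Ioo, pow_lt_pow_iff_left₀ (norm_nonneg x) hR.le two_ne_zero,
      pow_lt_pow_iff_left₀ hr.le (norm_nonneg x) two_ne_zero]; rfl
  · intro a ha b hb s hs
    obtain ⟨hs0, hs1⟩ := hs
    have hs1' : 0 ≤ 1 - s := by linarith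
    refine ⟨(convex_Ioo (r ^ 2) (R ^ 2)) ha hb hs1' hs0 (by ring), ?_⟩
    have h3 := min_le_left ((R ^ 2 - a) * (a - r ^ 2)) ((R ^ 2 - b) * (b - r ^ 2))
    have h4 := min_le_right ((R ^ 2 - a) * (a - r ^ 2)) ((R ^ 2 - b) * (b - r ^ 2))
    nlinarith [mul_le_mul_of_nonneg_left h3 hs1', mul_le_mul_of_nonneg_left h4 hs0,
      mul_nonneg (mul_nonneg hs0 hs1') (sq_nonneg (a - b))]
  · intro τ hτ
    have h1 : R ^ 2 - τ ≠ 0 := (sub_pos.mpr hτ.2).ne'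
    have h2 : τ - r ^ 2 ≠ 0 := (sub_pos.mpr hτ.1).ne'
    refine HasDerivAt.congr_deriv ((((hasDerivAt_id' τ).const_sub (R ^ 2)).fun_mul
      ((hasDerivAt_id' τ).sub_const (r ^ 2))).log (mul_ne_zero h1 h2)) ?_
    field_simp
    ring
  · intro τ hτ
    have h1 : R ^ 2 - τ ≠ 0 := (sub_pos.mpr hτ.2).ne'
    have h2 : τ - r ^ 2 ≠ 0 := (sub_pos.mpr hτ.1).ne'
    refine HasDerivAt.congr_deriv ((((hasDerivAt_id' τ).sub_const (r ^ 2)).fun_inv h2).sub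
      (((hasDerivAt_id' τ).const_sub (R ^ 2)).fun_inv h1)) ?_
    rw [neg_neg, neg_div, one_div, one_div]
    ring
  · intro x hx; obtain ⟨h1, h2⟩ := hsq x hx
    exact mul_nonneg (by linarith) (by linarith)
  · intro x hx; obtain ⟨h1, h2⟩ := hsq x hx
    rw [sq w]
    exact mul_le_mul (by linarith) (by linarith) (by linarith) hw.le
  · intro x hx hxn
    obtain ⟨h1, h2⟩ := hclo x hx
    rcases h1.eq_or_lt with h | h
    · simp [← h]
    · have : ‖x‖ = R := le_antisymm h2 (not_lt.mp fun h' => hxn ⟨h, h'⟩)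
      simp [this]
  · intro τ hτ _
    have h1 : 0 < R ^ 2 - τ := sub_pos.mpr hτ.2
    have h2 : 0 < τ - r ^ 2 := sub_pos.mpr hτ.1
    rw [← inv_pow, ← inv_pow]
    have := mul_pos (inv_pos.mpr h1) (inv_pos.mpr h2)
    nlinarith
  · intro τ hτ _
    have h1 : 0 < R ^ 2 - τ := sub_pos.mpr hτ.2
    have h2 : 0 < τ - r ^ 2 := sub_pos.mpr hτ.1
    rw [← inv_pow, ← inv_pow]
    set a := (R ^ 2 - τ)⁻¹ with ha
    set b := (τ - r ^ 2)⁻¹ with hb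
    have ha0 : 0 < a := inv_pos.mpr h1
    have hb0 : 0 < b := inv_pos.mpr h2
    have hab : a * b = (a + b) / w := by
      rw [ha, hb, hwdef]
      have : R ^ 2 - r ^ 2 ≠ 0 := hw.ne'
      field_simp; ring
    have h5 := min_le_right 1 (2 * r ^ 2)
    have h6 : 4 * r ^ 2 * (b - a) ^ 2 ≤ 4 * τ * (b - a) ^ 2 :=
      mul_le_mul_of_nonneg_right (by linarith [hτ.1]) (sq_nonneg _)
    have h7 : 4 * r ^ 2 * (b - a) ^ 2 = 4 * r ^ 2 * (b ^ 2 + a ^ 2) - (M - 4) * (a + b) := by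
      have : (b - a) ^ 2 = b ^ 2 + a ^ 2 - 2 * ((a + b) / w) := by rw [← hab]; ring
      rw [this, hM]; field_simp; ring
    have h8 : ∀ y : ℝ, M * y ≤ 2 * r ^ 2 * y ^ 2 + M ^ 2 / (8 * r ^ 2) := fun y => by
      have : 2 * r ^ 2 * y ^ 2 + M ^ 2 / (8 * r ^ 2) - M * y = 2 * (r * y - M / (4 * r)) ^ 2 := by
        field_simp; ring
      nlinarith [sq_nonneg (r * y - M / (4 * r))]
    have h9 : M ^ 2 / (4 * r ^ 2) = M ^ 2 / (8 * r ^ 2) + M ^ 2 / (8 * r ^ 2) := by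
      field_simp; ring
    have h10 := mul_le_mul_of_nonneg_right h5 (add_nonneg (sq_nonneg b) (sq_nonneg a))
    have := h8 a
    have := h8 b
    rw [h9]
    nlinarith
  · intro τ hτ _
    have h1 : 0 < R ^ 2 - τ := sub_pos.mpr hτ.2
    have h2 : 0 < τ - r ^ 2 := sub_pos.mpr hτ.1
    have h5 := min_le_right 1 (2 * r ^ 2)
    have h6 : min 1 (2 * r ^ 2) ≤ 4 * τ := by nlinarith [hτ.1]
    have h7 : 0 ≤ M ^ 2 / (4 * r ^ 2) := by positivity
    have := mul_le_mul_of_nonneg_right h6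
      (show 0 ≤ ((τ - r ^ 2) ^ 2)⁻¹ + ((R ^ 2 - τ) ^ 2)⁻¹ by positivity)
    linarith
  · intro τ hτ _
    have h1 : 0 < R ^ 2 - τ := sub_pos.mpr hτ.2
    have h2 : 0 < τ - r ^ 2 := sub_pos.mpr hτ.1
    have e1 : ((τ - r ^ 2) ^ 2)⁻¹ + ((R ^ 2 - τ) ^ 2)⁻¹
        = ((R ^ 2 - τ) ^ 2 + (τ - r ^ 2) ^ 2) / ((R ^ 2 - τ) * (τ - r ^ 2)) ^ 2 := by
      field_simp
    rw [e1]
    gcongr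
    rw [hwdef]
    nlinarith [sq_nonneg ((R ^ 2 - τ) - (τ - r ^ 2))]

lemma radData_exists {B : Set (Eu N)} (hB : IsRadialDomain B) : Nonempty (RadData B) := by
  rcases hB with ⟨R, hR, rfl⟩ | ⟨r, R, hr, hrR, rfl⟩
  · exact radData_ball hR
  · exact radData_annulus hr hrR

namespace RadData
variable {B : Set (Eu N)}

lemma isOpen (K : RadData B) : IsOpen B := by
  have : B = (fun x : Eu N => ‖x‖ ^ 2) ⁻¹' K.J := by ext x; exact K.memB x
  rw [this]
  exact K.openJ.preimage (by fun_prop)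

lemma isBounded (K : RadData B) : Bornology.IsBounded B :=
  (isBounded_closedBall (x := (0 : Eu N)) (r := K.Rm)).subset fun x hx => by
    simpa using K.clo_norm x (subset_closure hx)

lemma refl_mem (K : RadData B) {e : Eu N} (he : ‖e‖ = 1) (x : Eu N) (hx : x ∈ B) : reflHyp e x ∈ B := by
  rw [K.memB, norm_reflHyp he, ← K.memB]; exact hx

lemma mem_of_pos (K : RadData B) {x : Eu N} (hx : x ∈ closure B) (h : 0 < K.h (‖x‖ ^ 2)) : x ∈ B := by
  by_contra hn
  exact h.ne' (K.bdry x hx hn)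

/-- Points where the defining function is bounded below stay away from the boundary. -/
lemma exists_ball (K : RadData B) {d : ℝ} (hd : 0 < d) :
    ∃ ρ > 0, ∀ x ∈ B, d ≤ K.h (‖x‖ ^ 2) → ball x ρ ⊆ B := by
  have hc : IsCompact {x ∈ closure B | d ≤ K.h (‖x‖ ^ 2)} := by
    refine K.isBounded.isCompact_closure.inter_right ?_
    have : Continuous fun x : Eu N => K.h (‖x‖ ^ 2) := K.cont.comp (by fun_prop)
    exact isClosed_le continuous_const this
  obtain ⟨ρ, hρ, hsub⟩ := hc.exists_thickening_subset_open K.isOpen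
    (fun x hx => K.mem_of_pos hx.1 (hd.trans_le hx.2))
  refine ⟨ρ, hρ, fun x hx hdx y hy => hsub ?_⟩
  exact mem_thickening_iff.mpr ⟨x, ⟨subset_closure hx, hdx⟩, hy⟩

end RadData

/-! ### Propagation of positivity: a bump moving along a path -/

lemma outer_symm (ξ : Eu N) (i j : Fin N) : outer ξ i j = outer ξ j i := mul_comm _ _

lemma idMt_symm (i j : Fin N) : (idMt : Mt N) i j = idMt j i := by
  simp only [idMt, eq_comm]

/-- The elementary inequality behind `bump_sub`; here `Y = |x - ξ|` and `P = ρ² - Y²`. -/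
lemma bump_ineq {L α ρ Ξ m P Y q : ℝ} (hL : 0 ≤ L) (hρ : 0 < ρ) (hq : 0 ≤ q)
    (hk : 1 + 2 * L ≤ 4 * (q - 1) * α) (hm : m = L + q * (L + Ξ) ^ 2 + 2 * q * L / ρ ^ 2)
    (hP : P = ρ ^ 2 - Y ^ 2) :
    2 * q * P * L + L * P ^ 2 + 2 * q * (L + Ξ) * P * Y ≤
      m * P ^ 2 + 4 * q * (q - 1) * α * Y ^ 2 := by
  have h1 : 2 * q * (L + Ξ) * P * Y ≤ q * (L + Ξ) ^ 2 * P ^ 2 + q * Y ^ 2 := by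
    nlinarith [mul_nonneg hq (sq_nonneg ((L + Ξ) * P - Y))]
  have h2 : q * (1 + 2 * L) * Y ^ 2 ≤ 4 * q * (q - 1) * α * Y ^ 2 := by
    have := mul_le_mul_of_nonneg_left hk hq
    nlinarith [mul_le_mul_of_nonneg_right this (sq_nonneg Y)]
  have h3 : P ^ 2 / ρ ^ 2 + ρ ^ 2 - 2 * P = (P / ρ - ρ) ^ 2 := by field_simp; ring
  have h4 : 2 * q * L * (P ^ 2 / ρ ^ 2 + ρ ^ 2 - 2 * P) ≥ 0 := by
    rw [h3]; positivity
  have h5 : 2 * q * L / ρ ^ 2 * P ^ 2 = 2 * q * L * (P ^ 2 / ρ ^ 2) := by field_simp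
  rw [hm]
  have h6 : Y ^ 2 = ρ ^ 2 - P := by linarith
  rw [h6] at h1 h2 ⊢
  nlinarith

lemma bump_sub {L α ρ Ξ η a m t₁ t : ℝ} {k : ℕ} (hL : 0 ≤ L) (hρ : 0 < ρ)
    (hη : 0 ≤ η) (ha : 0 ≤ a) (hk : 1 + 2 * L ≤ 4 * (k + 1) * α)
    (hm : m = L + (k + 2) * (L + Ξ) ^ 2 + 2 * (k + 2) * L / ρ ^ 2)
    {ξ : ℝ → Eu N} {ξ' : Eu N} (hξ : HasDerivAt ξ ξ' t) (hΞ : ‖ξ'‖ ≤ Ξ) (x : Eu N) :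
    IsSubAt L α (fun x s => a * Real.exp (-m * (s - t₁)) * (max (ρ ^ 2 - ‖x - ξ s‖ ^ 2) 0) ^ (k + 2)
      - η * Real.exp (L * (s - t₁))) x t := by
  have hexp : ∀ b : ℝ, HasDerivAt (fun s => Real.exp (b * (s - t₁)))
      (Real.exp (b * (t - t₁)) * b) t := fun b => by
    have := (((hasDerivAt_id' t).sub_const t₁).const_mul b).exp
    simpa using this
  set y := x - ξ t with hy
  set P := ρ ^ 2 - ‖y‖ ^ 2 with hP
  set X := Real.exp (L * (t - t₁)) with hX
  have hX0 : 0 < X := Real.exp_pos _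
  rcases le_or_gt P 0 with hP0 | hP0
  · refine ⟨fun _ s => - (η * Real.exp (L * (s - t₁))), -(η * (X * L)), 0, 0, 0, fun _ _ => rfl,
      ((hexp L).const_mul η).neg, ?_, ?_, ?_, ?_, ?_, ?_⟩
    · intro ζ
      simpa [qf] using HasJet2.const (-(η * X))
    · simp only [← hy, ← hP, max_eq_right hP0]; simp
    · exact Eventually.of_forall fun s => by
        have : 0 ≤ a * Real.exp (-m * (s - t₁)) * (max (ρ ^ 2 - ‖x - ξ s‖ ^ 2) 0) ^ (k + 2) := by
          positivity
        linarith
    · exact Eventually.of_forall fun z => by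
        have : 0 ≤ a * Real.exp (-m * (t - t₁)) * (max (ρ ^ 2 - ‖z - ξ t‖ ^ 2) 0) ^ (k + 2) := by
          positivity
        linarith
    · intro A _; simp
    · simp only [← hy, ← hP, max_eq_right hP0]
      rw [zero_pow (by omega), mul_zero]
      simp only [zero_sub, abs_neg, norm_zero, add_zero]
      rw [abs_of_nonneg (by positivity), ← hX]
      linarith
  · set E := a * Real.exp (-m * (t - t₁)) with hE
    have hE0 : 0 ≤ E := by positivity
    have hcx : Continuous fun z : Eu N => ρ ^ 2 - ‖z - ξ t‖ ^ 2 := by fun_prop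
    have hcs : ContinuousAt (fun s : ℝ => ρ ^ 2 - ‖x - ξ s‖ ^ 2) t := by
      have := hξ.continuousAt
      fun_prop
    have hPd : HasDerivAt (fun s : ℝ => ρ ^ 2 - ‖x - ξ s‖ ^ 2) (2 * ⟪y, ξ'⟫) t := by
      have h1 := ((hξ.const_sub x).norm_sq).const_sub (ρ ^ 2)
      refine h1.congr_deriv ?_
      rw [inner_neg_right]; ring
    refine ⟨fun z s => a * Real.exp (-m * (s - t₁)) * (ρ ^ 2 - ‖z - ξ s‖ ^ 2) ^ (k + 2)
      - η * Real.exp (L * (s - t₁)),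
      (-m * E * P ^ (k + 2) + E * ((k + 2) * P ^ (k + 1) * (2 * ⟪y, ξ'⟫))) - η * (X * L),
      (-(2 * (k + 2) * E * P ^ (k + 1))) • y,
      (4 * (k + 2) * (k + 1) * E * P ^ k) • outer y - (2 * (k + 2) * E * P ^ (k + 1)) • idMt,
      4 * (k + 2) * (k + 1) * E * P ^ k * (α * ‖y‖ ^ 2) - 2 * (k + 2) * E * P ^ (k + 1) * L,
      ?_, ?_, ?_, ?_, ?_, ?_, ?_, ?_⟩
    · intro i j
      simp only [Pi.sub_apply, Pi.smul_apply]
      rw [outer_symm y i j, idMt_symm i j]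
    · have h1 := ((((hexp (-m)).const_mul a).fun_mul (hPd.fun_pow (k + 2))).sub
        ((hexp L).const_mul η))
      refine h1.congr_deriv ?_
      have e1 : a * (Real.exp (-m * (t - t₁)) * -m) = -m * E := by rw [hE]; ring
      simp only [← hy, ← hP, ← hE, ← hX, e1]
      push_cast
      rfl
    · intro ζ
      have j1 : HasJet2 (fun h : ℝ => ρ ^ 2 - ‖x + h • ζ - ξ t‖ ^ 2) (-2 * ⟪y, ζ⟫)
          (2 * (-‖ζ‖ ^ 2)) := by
        have e1 : (fun h : ℝ => ρ ^ 2 - ‖x + h • ζ - ξ t‖ ^ 2) =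
            fun h => P + (-2 * ⟪y, ζ⟫) * h + (-‖ζ‖ ^ 2) * h ^ 2 := by
          funext h
          have : x + h • ζ - ξ t = y + h • ζ := by rw [hy]; abel
          rw [this, norm_add_sq_real, inner_smul_right, norm_smul, mul_pow, Real.norm_eq_abs,
            sq_abs, hP]
          ring
        rw [e1]; exact HasJet2.quad _ _ _
      have hval : ρ ^ 2 - ‖x + (0:ℝ) • ζ - ξ t‖ ^ 2 = P := by simp [hP, hy]
      have j2 := j1.comp (g := fun p => p ^ (k + 2)) (g' := fun p => (k + 2) * p ^ (k + 1))
        (d := (k + 2) * ((k + 1) * P ^ k))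
        (Eventually.of_forall fun p => by simpa using hasDerivAt_pow (k + 2) p)
        (by simp only [hval]; simpa using (hasDerivAt_pow (k + 1) P).const_mul ((k:ℝ) + 2))
      simp only [hval] at j2
      have j3 := (j2.const_mul E).sub (HasJet2.const (η * X))
      convert j3 using 1
      · rw [inner_smul_left, conj_trivial]; ring
      · rw [qf_sub, qf_smul, qf_smul, qf_outer, qf_idMt]; ring
    · simp only [← hy, ← hP, max_eq_left hP0.le]
    · filter_upwards [hcs.eventually (lt_mem_nhds hP0)] with s hs
      rw [max_eq_left (le_of_lt hs)]
    · filter_upwards [hcx.continuousAt.eventually (lt_mem_nhds hP0)] with z hz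
      rw [max_eq_left (le_of_lt hz)]
    · intro A hA
      rw [map_sub, map_smul, map_smul, smul_eq_mul, smul_eq_mul]
      have h1 := hA.le_outer (ξ := y)
      have h2 := (abs_le.mp hA.abs_idMt).2
      have c1 : 0 ≤ 4 * ((k:ℝ) + 2) * (k + 1) * E * P ^ k := by positivity
      have c2 : 0 ≤ 2 * ((k:ℝ) + 2) * E * P ^ (k + 1) := by positivity
      linarith [mul_le_mul_of_nonneg_left h1 c1, mul_le_mul_of_nonneg_left h2 c2]
    · simp only [← hy, ← hP, max_eq_left hP0.le, ← hE, ← hX]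
      have c2 : 0 ≤ 2 * ((k:ℝ) + 2) * E * P ^ (k + 1) := by positivity
      rw [norm_smul, norm_neg, Real.norm_of_nonneg c2]
      have h1 : |E * P ^ (k + 2) - η * X| ≤ E * P ^ (k + 2) + η * X := by
        rw [abs_le]; constructor <;> nlinarith [show 0 ≤ E * P ^ (k + 2) by positivity,
          show 0 ≤ η * X by positivity]
      have h2 := mul_le_mul_of_nonneg_left h1 hL
      have hin : ⟪y, ξ'⟫ ≤ ‖y‖ * Ξ :=
        (real_inner_le_norm y ξ').trans (mul_le_mul_of_nonneg_left hΞ (norm_nonneg y))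
      have h3 := bump_ineq (q := (k:ℝ) + 2) (α := α) (Y := ‖y‖) hL hρ (by positivity)
        (by linarith) hm hP
      have h4 := mul_le_mul_of_nonneg_left h3 (show 0 ≤ E * P ^ k by positivity)
      have h5 := mul_le_mul_of_nonneg_left hin c2
      have e1 : P ^ (k + 1) = P ^ k * P := pow_succ _ _
      have e2 : P ^ (k + 2) = P ^ k * P ^ 2 := pow_add _ _ _
      rw [e1] at h5 ⊢
      rw [e2] at h2 ⊢
      linarith

set_option maxHeartbeats 1000000 in
/-- Two points of `B` that lie well inside `B(e)` are joined by a path of controlled speed which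
stays well inside `B(e)`: the segment `l` between them is rescaled so that `|ξ(s)|²` is affine. -/
lemma path_exists {B : Set (Eu N)} (K : RadData B) {d : ℝ} (hd : 0 < d) :
    ∃ Ξ : ℝ, ∀ e : Eu N, ‖e‖ = 1 → ∀ x₀ ∈ B, ∀ y ∈ B, d ≤ ⟪x₀, e⟫ → d ≤ ⟪y, e⟫ →
      d ≤ K.h (‖x₀‖ ^ 2) → d ≤ K.h (‖y‖ ^ 2) →
      ∃ ξ ξ' : ℝ → Eu N, ξ 0 = x₀ ∧ ξ 1 = y ∧ ∀ s ∈ Icc (0:ℝ) 1, HasDerivAt ξ (ξ' s) s ∧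
        ‖ξ' s‖ ≤ Ξ ∧ ξ s ∈ B ∧ d ≤ ⟪ξ s, e⟫ ∧ d ≤ K.h (‖ξ s‖ ^ 2) := by
  set R := K.Rm with hR
  have hR0 : 0 < R := K.Rm_pos
  refine ⟨5 * R ^ 4 / (2 * d ^ 4) * R + (R / d) * (2 * R), ?_⟩
  intro e he x₀ hx₀ y hy hxd hyd hxh hyh
  have hxR : ‖x₀‖ ≤ R := K.clo_norm _ (subset_closure hx₀)
  have hyR : ‖y‖ ≤ R := K.clo_norm _ (subset_closure hy)
  set l : ℝ → Eu N := fun s => (1 - s) • x₀ + s • y with hl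
  set r2 : ℝ → ℝ := fun s => (1 - s) * ‖x₀‖ ^ 2 + s * ‖y‖ ^ 2 with hr2
  set n : ℝ → ℝ := fun s => ‖l s‖ ^ 2 with hn
  have hld : ∀ s, HasDerivAt l (y - x₀) s := fun s => by
    have := (((hasDerivAt_id' s).const_sub 1).smul_const x₀).add
      ((hasDerivAt_id' s).smul_const y)
    refine this.congr_deriv ?_
    module
  have hr2d : ∀ s, HasDerivAt r2 (‖y‖ ^ 2 - ‖x₀‖ ^ 2) s := fun s => by
    have := (((hasDerivAt_id' s).const_sub 1).mul_const (‖x₀‖ ^ 2)).add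
      ((hasDerivAt_id' s).mul_const (‖y‖ ^ 2))
    refine this.congr_deriv ?_
    ring
  have hnd : ∀ s, HasDerivAt n (2 * ⟪l s, y - x₀⟫) s := fun s => (hld s).norm_sq
  refine ⟨fun s => Real.sqrt (r2 s / n s) • l s, fun s => Real.sqrt (r2 s / n s) • (y - x₀) +
    (((‖y‖ ^ 2 - ‖x₀‖ ^ 2) * n s - r2 s * (2 * ⟪l s, y - x₀⟫)) / n s ^ 2 /
      (2 * Real.sqrt (r2 s / n s))) • l s, ?_, ?_, ?_⟩
  · have h0 : ‖x₀‖ ^ 2 ≠ 0 := by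
      intro h
      have : x₀ = 0 := by simpa using h
      rw [this] at hxd; simp at hxd; linarith
    simp [hl, hr2, hn, h0]
  · have h0 : ‖y‖ ^ 2 ≠ 0 := by
      intro h
      have : y = 0 := by simpa using h
      rw [this] at hyd; simp at hyd; linarith
    simp [hl, hr2, hn, h0]
  · intro s hs
    obtain ⟨hs0, hs1⟩ := hs
    have hs1' : 0 ≤ 1 - s := by linarith
    have hle : d ≤ ⟪l s, e⟫ := by
      simp only [hl, inner_add_left, inner_smul_left, conj_trivial]
      nlinarith [mul_le_mul_of_nonneg_left hxd hs1', mul_le_mul_of_nonneg_left hyd hs0]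
    have hlR : ‖l s‖ ≤ R := by
      calc ‖l s‖ ≤ ‖(1 - s) • x₀‖ + ‖s • y‖ := norm_add_le _ _
        _ = (1 - s) * ‖x₀‖ + s * ‖y‖ := by
          rw [norm_smul, norm_smul, Real.norm_of_nonneg hs1', Real.norm_of_nonneg hs0]
        _ ≤ R := by nlinarith
    have hln : d ≤ ‖l s‖ := by
      have := real_inner_le_norm (l s) e
      rw [he, mul_one] at this
      linarith
    have hnge : d ^ 2 ≤ n s := pow_le_pow_left₀ hd.le hln 2
    have hn0 : 0 < n s := lt_of_lt_of_le (by positivity) hnge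
    have hnR : n s ≤ R ^ 2 := pow_le_pow_left₀ (norm_nonneg _) hlR 2
    have hrn : n s ≤ r2 s := by
      have : r2 s - n s = s * (1 - s) * ‖x₀ - y‖ ^ 2 := by
        simp only [hr2, hn, hl]
        rw [norm_add_sq_real, norm_sub_sq_real, norm_smul, norm_smul, inner_smul_left,
          inner_smul_right, Real.norm_of_nonneg hs1', Real.norm_of_nonneg hs0, conj_trivial]
        ring
      have : 0 ≤ s * (1 - s) * ‖x₀ - y‖ ^ 2 := by positivity
      linarith
    have hx2 : ‖x₀‖ ^ 2 ≤ R ^ 2 := pow_le_pow_left₀ (norm_nonneg _) hxR 2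
    have hy2 : ‖y‖ ^ 2 ≤ R ^ 2 := pow_le_pow_left₀ (norm_nonneg _) hyR 2
    have hr2R : r2 s ≤ R ^ 2 := by simp only [hr2]; nlinarith
    have hr0 : 0 < r2 s := hn0.trans_le hrn
    set f := Real.sqrt (r2 s / n s) with hf
    have hf1 : 1 ≤ f := by
      rw [hf, Real.one_le_sqrt, one_le_div hn0]; exact hrn
    have hfR : f ≤ R / d := by
      rw [hf]
      apply Real.sqrt_le_iff.mpr ⟨by positivity, ?_⟩
      rw [div_pow]
      exact div_le_div₀ (by positivity) hr2R (by positivity) hnge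
    have hnorm : ‖f • l s‖ ^ 2 = r2 s := by
      rw [norm_smul, mul_pow, Real.norm_eq_abs, sq_abs, hf, Real.sq_sqrt (by positivity)]
      show r2 s / n s * n s = r2 s
      field_simp
    have hquasi := K.quasi _ ((K.memB x₀).mp hx₀) _ ((K.memB y).mp hy) s ⟨hs0, hs1⟩
    refine ⟨?_, ?_, ?_, ?_, ?_⟩
    · have h1 := ((hr2d s).div (hnd s) hn0.ne').sqrt (div_pos hr0 hn0).ne'
      exact h1.smul (hld s)
    · refine (norm_add_le _ _).trans ?_
      rw [norm_smul, norm_smul, Real.norm_of_nonneg (by positivity), add_comm]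
      have hyx : ‖y - x₀‖ ≤ 2 * R := (norm_sub_le _ _).trans (by linarith)
      refine add_le_add ?_ (mul_le_mul hfR hyx (norm_nonneg _) (by positivity))
      refine mul_le_mul ?_ hlR (norm_nonneg _) (by positivity)
      rw [Real.norm_eq_abs, abs_div, abs_div, abs_of_pos (by positivity : 0 < n s ^ 2),
        abs_of_pos (by positivity : 0 < 2 * f), div_div]
      have hin : |⟪l s, y - x₀⟫| ≤ R * (2 * R) := (abs_real_inner_le_norm _ _).trans
        (mul_le_mul hlR hyx (norm_nonneg _) hR0.le)
      have hnum : |(‖y‖ ^ 2 - ‖x₀‖ ^ 2) * n s - r2 s * (2 * ⟪l s, y - x₀⟫)| ≤ 5 * R ^ 4 := by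
        have h1 : |‖y‖ ^ 2 - ‖x₀‖ ^ 2| ≤ R ^ 2 := by
          rw [abs_le]; constructor <;> nlinarith [sq_nonneg ‖y‖, sq_nonneg ‖x₀‖]
        calc |(‖y‖ ^ 2 - ‖x₀‖ ^ 2) * n s - r2 s * (2 * ⟪l s, y - x₀⟫)|
            ≤ |(‖y‖ ^ 2 - ‖x₀‖ ^ 2) * n s| + |r2 s * (2 * ⟪l s, y - x₀⟫)| := abs_sub _ _
          _ = |‖y‖ ^ 2 - ‖x₀‖ ^ 2| * n s + r2 s * (2 * |⟪l s, y - x₀⟫|) := by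
            rw [abs_mul, abs_mul, abs_mul, abs_of_pos hn0, abs_of_pos hr0, abs_two]
          _ ≤ R ^ 2 * R ^ 2 + R ^ 2 * (2 * (R * (2 * R))) := by gcongr
          _ = 5 * R ^ 4 := by ring
      refine div_le_div₀ (by positivity) hnum (by positivity) ?_
      have : d ^ 4 ≤ n s ^ 2 := by
        calc d ^ 4 = (d ^ 2) ^ 2 := by ring
          _ ≤ n s ^ 2 := pow_le_pow_left₀ (by positivity) hnge 2
      have h2 := mul_le_mul_of_nonneg_left hf1 (sq_nonneg (n s))
      linarith
    · rw [K.memB, hnorm]; exact hquasi.1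
    · rw [inner_smul_left, conj_trivial]
      have := mul_le_mul_of_nonneg_right hf1 (hd.le.trans hle)
      linarith
    · rw [hnorm]; exact (le_min hxh hyh).trans hquasi.2

/-- Positivity near one interior point of the half domain spreads, within time one, to all points
well inside the half domain, uniformly in `e`. -/
lemma propagate {B : Set (Eu N)} (K : RadData B) {L α : ℝ} (hL : 0 ≤ L) (hα : 0 < α) {d ρ₀ : ℝ}
    (hd : 0 < d) (hρ₀ : 0 < ρ₀) :
    ∃ κ > 0, ∀ e : Eu N, ‖e‖ = 1 → ∀ v, IsVSol (halfClo B e) (halfDom B e) L α v →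
      ∀ t₁ : ℝ, 0 ≤ t₁ → ∀ x₀ ∈ B, d ≤ ⟪x₀, e⟫ → d ≤ K.h (‖x₀‖ ^ 2) → ∀ δ η : ℝ, 0 ≤ δ → 0 ≤ η →
      (∀ x ∈ halfClo B e, ‖x - x₀‖ < ρ₀ → δ ≤ v x t₁) → (∀ x ∈ halfClo B e, -η ≤ v x t₁) →
      (∀ x ∈ halfClo B e, -(η * Real.exp L) ≤ v x (t₁ + 1)) ∧
      ∀ y ∈ B, d ≤ ⟪y, e⟫ → d ≤ K.h (‖y‖ ^ 2) → κ * δ - η * Real.exp L ≤ v y (t₁ + 1) := by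
  obtain ⟨Ξ, hpath⟩ := path_exists K hd
  obtain ⟨ρ₁, hρ₁, hball⟩ := K.exists_ball hd
  set ρ := min ρ₀ (min ρ₁ d) with hρdef
  have hρ : 0 < ρ := lt_min hρ₀ (lt_min hρ₁ hd)
  have hρ0 : ρ ≤ ρ₀ := min_le_left _ _
  have hρ1 : ρ ≤ ρ₁ := (min_le_right _ _).trans (min_le_left _ _)
  have hρd : ρ ≤ d := (min_le_right _ _).trans (min_le_right _ _)
  obtain ⟨k, hk⟩ := exists_nat_ge ((1 + 2 * L) / (4 * α))
  have hk' : 1 + 2 * L ≤ 4 * (k + 1) * α := by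
    rw [div_le_iff₀ (by positivity)] at hk
    nlinarith
  set m := L + (k + 2) * (L + Ξ) ^ 2 + 2 * (k + 2) * L / ρ ^ 2 with hm
  refine ⟨Real.exp (-m), Real.exp_pos _, ?_⟩
  intro e he v hv t₁ ht₁ x₀ hx₀ hxd hxh δ η hδ hη hvδ hvη
  have key : ∀ y ∈ B, d ≤ ⟪y, e⟫ → d ≤ K.h (‖y‖ ^ 2) →
      (∀ x ∈ halfClo B e, -(η * Real.exp L) ≤ v x (t₁ + 1)) ∧
      Real.exp (-m) * δ - η * Real.exp L ≤ v y (t₁ + 1) := by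
    intro y hy hyd hyh
    obtain ⟨ξ, ξ', hξ0, hξ1, hξ⟩ := hpath e he x₀ hx₀ y hy hxd hyd hxh hyh
    set a := δ / (ρ ^ 2) ^ (k + 2) with ha
    have ha0 : 0 ≤ a := by positivity
    have haρ : a * (ρ ^ 2) ^ (k + 2) = δ := by rw [ha]; field_simp
    have hcmp := comparison (w := fun x s => a * Real.exp (-m * (s - t₁)) *
      (max (ρ ^ 2 - ‖x - ξ (s - t₁)‖ ^ 2) 0) ^ (k + 2) - η * Real.exp (L * (s - t₁)))
      hL (isCompact_halfClo K.isBounded e) (halfDom_subset B e) (isOpen_halfDom K.isOpen e) hv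
      (t₂ := t₁ + 1) ht₁ ?_ ?_ ?_ ?_
    · have hy' : y ∈ halfClo B e := ⟨subset_closure hy, hd.le.trans hyd⟩
      constructor
      · intro x hx
        have h1 := hcmp x hx (t₁ + 1) ⟨by linarith, le_rfl⟩
        simp only [add_sub_cancel_left, mul_one] at h1
        have : 0 ≤ a * Real.exp (-m) * (max (ρ ^ 2 - ‖x - ξ 1‖ ^ 2) 0) ^ (k + 2) := by positivity
        linarith
      · have h1 := hcmp y hy' (t₁ + 1) ⟨by linarith, le_rfl⟩
        simp only [add_sub_cancel_left, mul_one, hξ1, sub_self, norm_zero] at h1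
        rw [zero_pow two_ne_zero, sub_zero, max_eq_left (by positivity)] at h1
        have : a * Real.exp (-m) * (ρ ^ 2) ^ (k + 2) = Real.exp (-m) * δ := by rw [← haρ]; ring
        linarith
    · have hξc : ContinuousOn (fun p : Eu N × ℝ => ξ (p.2 - t₁)) (halfClo B e ×ˢ Icc t₁ (t₁ + 1)) := by
        intro p hp
        have hp2 : p.2 - t₁ ∈ Icc (0:ℝ) 1 := ⟨by linarith [hp.2.1], by linarith [hp.2.2]⟩
        have h1 := (hξ _ hp2).1.continuousAt
        have h2 : ContinuousAt (fun p : Eu N × ℝ => p.2 - t₁) p := by fun_prop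
        exact (ContinuousAt.comp (f := fun p : Eu N × ℝ => p.2 - t₁) h1 h2).continuousWithinAt
      have h1 : ContinuousOn (fun p : Eu N × ℝ => ‖p.1 - ξ (p.2 - t₁)‖ ^ 2)
          (halfClo B e ×ˢ Icc t₁ (t₁ + 1)) := (continuous_fst.continuousOn.sub hξc).norm.pow 2
      exact ((Continuous.continuousOn (by fun_prop)).mul
        (((continuousOn_const.sub h1).sup continuousOn_const).pow _)).sub
        (Continuous.continuousOn (by fun_prop))
    · intro x hx
      simp only [sub_self, mul_zero, Real.exp_zero, mul_one, hξ0]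
      by_cases hxx : ‖x - x₀‖ < ρ
      · have h1 := hvδ x hx (hxx.trans_le hρ0)
        have h2 : (max (ρ ^ 2 - ‖x - x₀‖ ^ 2) 0) ^ (k + 2) ≤ (ρ ^ 2) ^ (k + 2) := by
          refine pow_le_pow_left₀ (le_max_right _ _) (max_le ?_ (by positivity)) _
          linarith [sq_nonneg ‖x - x₀‖]
        have := mul_le_mul_of_nonneg_left h2 ha0
        linarith
      · have h1 := hvη x hx
        have h2 : ρ ^ 2 ≤ ‖x - x₀‖ ^ 2 := pow_le_pow_left₀ hρ.le (not_lt.mp hxx) 2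
        rw [max_eq_right (by linarith), zero_pow (by omega)]
        linarith
    · intro x hx hxn t ht
      have hs : t - t₁ ∈ Icc (0:ℝ) 1 := ⟨by linarith [ht.1], by linarith [ht.2]⟩
      obtain ⟨-, -, hξB, hξd, hξh⟩ := hξ _ hs
      have h2 : ρ ≤ ‖x - ξ (t - t₁)‖ := by
        by_contra! hlt
        refine hxn ⟨hball _ hξB hξh ?_, ?_⟩
        · rw [mem_ball, dist_eq_norm]; exact hlt.trans_le hρ1
        · have h3 := real_inner_le_norm (ξ (t - t₁) - x) e
          rw [he, mul_one, inner_sub_left, norm_sub_rev] at h3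
          linarith
      have h3 : ρ ^ 2 ≤ ‖x - ξ (t - t₁)‖ ^ 2 := pow_le_pow_left₀ hρ.le h2 2
      beta_reduce
      rw [max_eq_right (by linarith), zero_pow (by omega)]
      have : 0 ≤ η * Real.exp (L * (t - t₁)) := by positivity
      linarith
    · intro x hx t ht
      have hs : t - t₁ ∈ Icc (0:ℝ) 1 := ⟨by linarith [ht.1], by linarith [ht.2]⟩
      obtain ⟨hξd, hξΞ, -⟩ := hξ _ hs
      have h1 : HasDerivAt (fun s => ξ (s - t₁)) (ξ' (t - t₁)) t := by
        exact hξd.comp_sub_const t t₁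
      exact bump_sub hL hρ hη ha0 hk' hm h1 hξΞ x
  exact ⟨(key x₀ hx₀ hxd hxh).1, fun y hy hyd hyh => (key y hy hyd hyh).2⟩

/-! ### A decaying lower barrier -/

/-- The function `Φ(x) = (x·e) h(|x|²)`, positive in `B(e)` and zero on its boundary. -/
def Phi {B : Set (Eu N)} (K : RadData B) (e x : Eu N) : ℝ := ⟪x, e⟫ * K.h (‖x‖ ^ 2)

lemma continuous_Phi {B : Set (Eu N)} (K : RadData B) (e : Eu N) : Continuous (Phi K e) := by
  have h1 : Continuous fun x : Eu N => K.h (‖x‖ ^ 2) := K.cont.comp (by fun_prop)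
  have h2 : Continuous fun x : Eu N => ⟪x, e⟫ := by fun_prop
  exact h2.mul h1

lemma logPhi_jet {B : Set (Eu N)} (K : RadData B) (e : Eu N) {x : Eu N} (hx : x ∈ halfDom B e)
    (ζ : Eu N) :
    HasJet2 (fun s : ℝ => Real.log (Phi K e (x + s • ζ)))
      ⟪(⟪x, e⟫)⁻¹ • e + (2 * K.h1 (‖x‖ ^ 2)) • x, ζ⟫
      (qf ((2 * K.h1 (‖x‖ ^ 2)) • idMt - ((⟪x, e⟫)⁻¹ ^ 2) • outer e -
        (4 * K.D (‖x‖ ^ 2)) • outer x) ζ) := by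
  have hxB := hx.1
  have hX : 0 < ⟪x, e⟫ := hx.2
  set X := ⟪x, e⟫ with hXdef
  set τ := ‖x‖ ^ 2 with hτ
  have hτJ : τ ∈ K.J := (K.memB x).mp hxB
  have hline : Tendsto (fun s : ℝ => x + s • ζ) (𝓝 0) (𝓝 x) := by
    have : Continuous fun s : ℝ => x + s • ζ := by fun_prop
    simpa using this.tendsto 0
  have j1 : HasJet2 (fun s : ℝ => ⟪x + s • ζ, e⟫) ⟪e, ζ⟫ 0 := by
    have e1 : (fun s : ℝ => ⟪x + s • ζ, e⟫) = fun s => X + ⟪e, ζ⟫ * s + 0 * s ^ 2 := by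
      funext s
      rw [inner_add_left, inner_smul_left, conj_trivial, real_inner_comm e ζ]; ring
    rw [e1]; simpa using HasJet2.quad X ⟪e, ζ⟫ 0
  have j2 : HasJet2 (fun s : ℝ => ‖x + s • ζ‖ ^ 2) (2 * ⟪x, ζ⟫) (2 * ‖ζ‖ ^ 2) := by
    have e1 : (fun s : ℝ => ‖x + s • ζ‖ ^ 2) = fun s => τ + 2 * ⟪x, ζ⟫ * s + ‖ζ‖ ^ 2 * s ^ 2 := by
      funext s
      rw [norm_add_sq_real, inner_smul_right, norm_smul, mul_pow, Real.norm_eq_abs, sq_abs]; ring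
    rw [e1]; exact HasJet2.quad _ _ _
  have v1 : ⟪x + (0:ℝ) • ζ, e⟫ = X := by simp [hXdef]
  have v2 : ‖x + (0:ℝ) • ζ‖ ^ 2 = τ := by simp [hτ]
  have k1 := j1.comp (g := Real.log) (g' := fun y => y⁻¹) (d := -(X ^ 2)⁻¹)
    (by simp only [v1]; filter_upwards [lt_mem_nhds hX] with y hy using Real.hasDerivAt_log hy.ne')
    (by simp only [v1]; exact hasDerivAt_inv hX.ne')
  have k2 := j2.comp (g := fun s => Real.log (K.h s)) (g' := K.h1) (d := -K.D τ)
    (by simp only [v2]; filter_upwards [K.openJ.mem_nhds hτJ] with y hy using K.hlog y hy)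
    (by simp only [v2]; exact K.hh1 τ hτJ)
  simp only [v1, v2] at k1 k2
  have k3 := (k1.add k2).congr (g := fun s : ℝ => Real.log (Phi K e (x + s • ζ))) (by
    have hev : ∀ᶠ y in 𝓝 x, y ∈ halfDom B e := (isOpen_halfDom K.isOpen e).mem_nhds hx
    filter_upwards [hline.eventually hev] with s hs
    exact Real.log_mul hs.2.ne' (K.pos _ ((K.memB _).mp hs.1)).ne')
  convert k3 using 1
  · rw [inner_add_left, inner_smul_left, inner_smul_left, conj_trivial, conj_trivial]; ring
  · rw [qf_sub, qf_sub, qf_smul, qf_smul, qf_smul, qf_outer, qf_outer, qf_idMt]; ring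

set_option maxHeartbeats 1000000 in
/-- Bounds for the gradient and the Hessian of `log Φ` in terms of the singular quantity `S`, with
constants independent of `e`. -/
lemma logPhi_data {B : Set (Eu N)} (K : RadData B) {L α : ℝ} (hL : 0 < L) (hα : 0 < α) :
    ∃ c2 C1 C2 C3 : ℝ, 0 < c2 ∧ 0 < C1 ∧ 0 ≤ C2 ∧ 0 < C3 ∧ ∀ e : Eu N, ‖e‖ = 1 →
      ∀ x ∈ halfDom B e, ∃ (g : Eu N) (H : Mt N) (S : ℝ), (∀ i j, H i j = H j i) ∧
        (∀ ζ : Eu N, HasJet2 (fun s : ℝ => Real.log (Phi K e (x + s • ζ))) ⟪g, ζ⟫ (qf H ζ)) ∧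
        K.c0 * S - K.C0 ≤ ‖g‖ ^ 2 ∧ ‖g‖ ^ 2 ≤ C3 * (S + 1) ∧
        (∀ A, Adm L α A → -(C1 * (S + 1)) ≤ A H ∧ A H ≤ -c2 * S + C2) ∧
        0 ≤ S ∧ 1 / ⟪x, e⟫ ^ 2 + K.c6 / K.h (‖x‖ ^ 2) ^ 2 ≤ S := by
  have hc0 := K.c0_pos
  have hC0 := K.C0_nonneg
  have hR := K.Rm_pos
  refine ⟨α * K.c0 / 2, L * (4 * K.Rm ^ 2 + 1), α * K.C0 + 2 * L ^ 2 / (α * K.c0),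
    4 * K.Rm ^ 2 + 2, by positivity, by positivity, by positivity, by positivity, ?_⟩
  intro e he x hx
  have hxB := hx.1
  have hX : 0 < ⟪x, e⟫ := hx.2
  have hjet := logPhi_jet K e hx
  have hτR : ‖x‖ ^ 2 ≤ K.Rm ^ 2 :=
    pow_le_pow_left₀ (norm_nonneg _) (K.clo_norm x (subset_closure hxB)) 2
  set X := ⟪x, e⟫ with hXdef
  have hτJ : ‖x‖ ^ 2 ∈ K.J := (K.memB x).mp hxB
  set τ := ‖x‖ ^ 2 with hτ
  have hτ0 : 0 ≤ τ := sq_nonneg _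
  have r1 := K.r1 τ hτJ hτ0
  have r2 := K.r2 τ hτJ hτ0
  have r3 := K.r3 τ hτJ hτ0
  have r4 := K.r4 τ hτJ hτ0
  set p := K.h1 τ with hp
  set D := K.D τ with hD
  set Z := X⁻¹ ^ 2 with hZ
  have hZ0 : 0 ≤ Z := by positivity
  have hD0 : 0 ≤ D := (sq_nonneg p).trans r1
  have hnorm : ‖X⁻¹ • e + (2 * p) • x‖ ^ 2 = Z + 4 * p + 4 * τ * p ^ 2 := by
    rw [norm_add_sq_real, norm_smul, norm_smul, inner_smul_left, inner_smul_right, he, mul_pow,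
      mul_pow, Real.norm_eq_abs, Real.norm_eq_abs, sq_abs, sq_abs, conj_trivial,
      real_inner_comm, ← hXdef, ← hτ]
    have : X⁻¹ * (2 * p * X) = 2 * p := by field_simp
    rw [this]; ring
  refine ⟨_, _, Z + D, ?_, hjet, ?_, ?_, ?_, by positivity, ?_⟩
  · intro i j
    simp only [Pi.sub_apply, Pi.smul_apply]
    rw [idMt_symm i j, outer_symm e i j, outer_symm x i j]
  · rw [hnorm]
    nlinarith [mul_le_mul_of_nonneg_right K.c0_le hZ0]
  · rw [hnorm]
    have h1 : 4 * p ≤ 2 * (1 + D) := by nlinarith [sq_nonneg (p - 1)]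
    have h2 : 4 * τ * p ^ 2 ≤ 4 * K.Rm ^ 2 * D := by
      calc 4 * τ * p ^ 2 ≤ 4 * K.Rm ^ 2 * p ^ 2 := by gcongr
        _ ≤ _ := by gcongr
    nlinarith [mul_nonneg (sq_nonneg K.Rm) hZ0, sq_nonneg K.Rm]
  · intro A hA
    rw [map_sub, map_sub, map_smul, map_smul, map_smul, smul_eq_mul, smul_eq_mul, smul_eq_mul]
    have e1 := hA.le_outer (ξ := e)
    have e2 := hA.outer_le (ξ := e)
    rw [he] at e1 e2
    have x1 := hA.le_outer (ξ := x)
    have x2 := hA.outer_le (ξ := x)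
    rw [← hτ] at x1 x2
    have i1 : |2 * p * A idMt| ≤ 2 * |p| * L := by
      rw [abs_mul, abs_mul, abs_two]
      exact mul_le_mul_of_nonneg_left hA.abs_idMt (by positivity)
    obtain ⟨i2, i3⟩ := abs_le.mp i1
    have ez1 := mul_le_mul_of_nonneg_left e1 hZ0
    have ez2 := mul_le_mul_of_nonneg_left e2 hZ0
    have xd1 := mul_le_mul_of_nonneg_left x1 (show 0 ≤ 4 * D by positivity)
    have xd2 := mul_le_mul_of_nonneg_left x2 (show 0 ≤ 4 * D by positivity)
    have hpabs : |p| ^ 2 = p ^ 2 := sq_abs p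
    constructor
    · have h1 : 2 * |p| * L ≤ (1 + D) * L := by nlinarith [sq_nonneg (|p| - 1)]
      have h2 : 4 * D * (L * τ) ≤ 4 * D * (L * K.Rm ^ 2) := by gcongr
      nlinarith [mul_nonneg (mul_nonneg hL.le (sq_nonneg K.Rm)) hZ0,
        mul_nonneg hL.le (sq_nonneg K.Rm)]
    · have h1 : 2 * |p| * L ≤ α * K.c0 / 2 * p ^ 2 + 2 * L ^ 2 / (α * K.c0) := by
        have hpos : 0 < α * K.c0 := by positivity
        have : α * K.c0 / 2 * p ^ 2 + 2 * L ^ 2 / (α * K.c0) - 2 * |p| * L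
            = (α * K.c0 * |p| - 2 * L) ^ 2 / (2 * (α * K.c0)) := by
          rw [← hpabs]; field_simp; ring
        have : 0 ≤ (α * K.c0 * |p| - 2 * L) ^ 2 / (2 * (α * K.c0)) := by positivity
        linarith
      have h2 : α * K.c0 / 2 * p ^ 2 ≤ α * K.c0 / 2 * D := by gcongr
      have h3 := mul_le_mul_of_nonneg_left r3 hα.le
      have h4 : α * K.c0 / 2 * Z ≤ α * Z := by
        have : α * K.c0 / 2 ≤ α := by linarith [mul_le_mul_of_nonneg_left K.c0_le hα.le]
        exact mul_le_mul_of_nonneg_right this hZ0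
      linarith
  · have : 1 / X ^ 2 = Z := by rw [hZ, inv_pow, one_div]
    rw [this]; linarith

lemma HasJet2.rpow_of_log {f : ℝ → ℝ} {a b κ : ℝ} (hf : HasJet2 (fun s => Real.log (f s)) a b)
    (hc : ContinuousAt f 0) (h0 : 0 < f 0) :
    HasJet2 (fun s => f s ^ κ) (f 0 ^ κ * (κ * a)) (f 0 ^ κ * (κ ^ 2 * a ^ 2 + κ * b)) := by
  have hexp : ∀ y : ℝ, HasDerivAt (fun y => Real.exp (y * κ)) (Real.exp (y * κ) * κ) y := fun y => by
    simpa using ((hasDerivAt_id' y).mul_const κ).exp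
  have h1 := hf.comp (g := fun y => Real.exp (y * κ)) (g' := fun y => Real.exp (y * κ) * κ)
    (Eventually.of_forall hexp) ((hexp _).mul_const κ)
  have h2 := h1.congr (g := fun s => f s ^ κ) (by
    filter_upwards [hc.eventually (lt_mem_nhds h0)] with s hs
    exact Real.rpow_def_of_pos hs κ)
  simp only [← Real.rpow_def_of_pos h0] at h2
  convert h2 using 1 <;> ring

lemma barrier_ineq_low {q α Γ S C1 L c0 C0 : ℝ} (hα : 0 < α) (hq : 0 ≤ q)
    (hS : 0 ≤ S) (hqC : 2 * C1 ≤ q * (α * c0)) (hΓ : c0 * S - C0 ≤ Γ ^ 2) :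
    L + L * q * Γ + q * (C1 * (S + 1)) ≤ q ^ 2 * (α * Γ ^ 2) +
      (q ^ 2 * α * C0 / 2 + q * C1 + L ^ 2 / (2 * α) + L) := by
  have h1 : L * q * Γ ≤ α / 2 * (q * Γ) ^ 2 + L ^ 2 / (2 * α) := by
    have : α / 2 * (q * Γ) ^ 2 + L ^ 2 / (2 * α) - L * q * Γ = (α * (q * Γ) - L) ^ 2 / (2 * α) := by
      field_simp; ring
    have : 0 ≤ (α * (q * Γ) - L) ^ 2 / (2 * α) := by positivity
    linarith
  have h2 := mul_le_mul_of_nonneg_left hΓ (show 0 ≤ α / 2 * q ^ 2 by positivity)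
  have h3 := mul_le_mul_of_nonneg_left hqC (show 0 ≤ q / 2 * S by positivity)
  nlinarith

lemma barrier_ineq_up {ε Γ S c2 C2 C3 L m : ℝ} (hL : 0 < L) (hc2 : 0 < c2) (hC3 : 0 < C3)
    (hε : 0 ≤ ε) (hεc : 4 * (ε * L * C3) ≤ c2) (hS : 0 ≤ S) (hΓ : Γ ^ 2 ≤ C3 * (S + 1)) :
    ε ^ 2 * (L * Γ ^ 2) + ε * (-c2 * S + C2) + L + L * (ε * Γ) + m ≤
      -(ε * c2 / 2) * S + (ε * (C2 + c2 / 2 + L ^ 2 * C3 / c2) + L + m) := by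
  have h1 : L * Γ ≤ c2 / (4 * C3) * Γ ^ 2 + L ^ 2 * C3 / c2 := by
    have : c2 / (4 * C3) * Γ ^ 2 + L ^ 2 * C3 / c2 - L * Γ
        = (c2 * Γ - 2 * C3 * L) ^ 2 / (4 * C3 * c2) := by
      field_simp; ring
    have : 0 ≤ (c2 * Γ - 2 * C3 * L) ^ 2 / (4 * C3 * c2) := by positivity
    linarith
  have h2 : c2 / (4 * C3) * Γ ^ 2 ≤ c2 / 4 * (S + 1) := by
    calc c2 / (4 * C3) * Γ ^ 2 ≤ c2 / (4 * C3) * (C3 * (S + 1)) := by gcongr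
      _ = _ := by field_simp
  have h3 : ε * (L * Γ ^ 2) ≤ c2 / 4 * (S + 1) := by
    calc ε * (L * Γ ^ 2) ≤ ε * (L * (C3 * (S + 1))) := by gcongr
      _ = (ε * L * C3) * (S + 1) := by ring
      _ ≤ c2 / 4 * (S + 1) := by gcongr; linarith
  have h4 := mul_le_mul_of_nonneg_left (h1.trans (add_le_add_left h2 _)) hε
  have h5 := mul_le_mul_of_nonneg_left h3 hε
  nlinarith

/-- Either the singular term dominates, or the point is well inside the domain. -/
lemma barrier_alternative {c4 C5 c6 ε : ℝ} (hc4 : 0 < c4) (hC5 : 0 < C5) (hc6 : 0 < c6)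
    (hε0 : 0 ≤ ε) (hε : ε ≤ 1 / 2) :
    ∃ d > 0, ∀ X h S : ℝ, 0 < X → 0 < h → 1 / X ^ 2 + c6 / h ^ 2 ≤ S →
      C5 ≤ c4 * ((X * h) ^ ε * S) ∨ d ≤ X * h := by
  set c := min 1 c6 with hc
  have hc0 : 0 < c := lt_min one_pos hc6
  set d := min 1 (c4 * c / C5) with hd
  have hd0 : 0 < d := lt_min one_pos (by positivity)
  refine ⟨d ^ 2, by positivity, fun X h S hX hh hS => ?_⟩
  have key : ∀ μ : ℝ, 0 < μ → μ < d → μ ≤ X → μ ≤ h → c / μ ^ 2 ≤ S →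
      C5 ≤ c4 * ((X * h) ^ ε * S) := by
    intro μ hμ hμd hμX hμh hμS
    have hμ1 : μ ≤ 1 := hμd.le.trans (min_le_left _ _)
    have h1 : μ ≤ (X * h) ^ ε := by
      calc μ = (μ ^ 2) ^ (1 / 2 : ℝ) := by
            rw [← Real.sqrt_eq_rpow, Real.sqrt_sq hμ.le]
        _ ≤ (μ ^ 2) ^ ε := Real.rpow_le_rpow_of_exponent_ge (by positivity)
            (pow_le_one₀ hμ.le hμ1) hε
        _ ≤ (X * h) ^ ε := by
            refine Real.rpow_le_rpow (by positivity) ?_ hε0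
            rw [sq]; exact mul_le_mul hμX hμh hμ.le hX.le
    have h2 : c / μ ≤ (X * h) ^ ε * S := by
      calc c / μ = μ * (c / μ ^ 2) := by field_simp
        _ ≤ (X * h) ^ ε * S := mul_le_mul h1 hμS (by positivity) (by positivity)
    have h3 : μ * C5 ≤ c4 * c := by
      have : μ ≤ c4 * c / C5 := hμd.le.trans (min_le_right _ _)
      rwa [le_div_iff₀ hC5] at this
    calc C5 ≤ c4 * (c / μ) := by
          rw [← mul_div_assoc, le_div_iff₀ hμ]; linarith
      _ ≤ _ := by gcongr
  rcases lt_or_ge (min X h) d with hlt | hge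
  · left
    refine key (min X h) (lt_min hX hh) hlt (min_le_left _ _) (min_le_right _ _) ?_
    rcases min_cases X h with ⟨h1, -⟩ | ⟨h1, -⟩
    · rw [h1]
      have h2 : c / X ^ 2 ≤ 1 / X ^ 2 := by gcongr; exact min_le_left _ _
      have : 0 ≤ c6 / h ^ 2 := by positivity
      linarith
    · rw [h1]
      have h2 : c / h ^ 2 ≤ c6 / h ^ 2 := by gcongr; exact min_le_right _ _
      have : 0 ≤ 1 / X ^ 2 := by positivity
      linarith
  · right
    rw [sq]
    exact mul_le_mul (hge.trans (min_le_left _ _)) (hge.trans (min_le_right _ _)) hd0.le hX.le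

set_option maxHeartbeats 1000000 in
/-- The barrier `e^{-m(t-t₁)} (η a₀ Φ^q - η (1 + Φ^ε))` is a subsolution. -/
lemma barrier_sub {B : Set (Eu N)} (K : RadData B) {L α : ℝ} (hL : 0 < L) (hα : 0 < α) :
    ∃ q ε m a₀ : ℝ, 1 ≤ q ∧ 0 < ε ∧ ε ≤ 1 / 2 ∧ 0 < m ∧ 0 < a₀ ∧ ∀ e : Eu N, ‖e‖ = 1 →
      ∀ η : ℝ, 0 ≤ η → ∀ t₁ t : ℝ, ∀ x ∈ halfDom B e,
        IsSubAt L α (fun y s => Real.exp (-m * (s - t₁)) *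
          (η * a₀ * Phi K e y ^ q - η * (1 + Phi K e y ^ ε))) x t := by
  obtain ⟨c2, C1, C2, C3, hc2, hC1, hC2, hC3, hdata⟩ := logPhi_data K hL hα
  have hc0 := K.c0_pos
  have hC0 := K.C0_nonneg
  have hR := K.Rm_pos
  have hhm := K.hm_pos
  set q := 2 * C1 / (α * K.c0) + 1 with hq
  have hq1 : 1 ≤ q := by rw [hq]; linarith [show 0 < 2 * C1 / (α * K.c0) by positivity]
  have hq0 : 0 ≤ q := by linarith
  have hqC : 2 * C1 ≤ q * (α * K.c0) := by
    have : 2 * C1 / (α * K.c0) ≤ q := by rw [hq]; linarith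
    rwa [div_le_iff₀ (by positivity)] at this
  set ε := min (1 / 2) (c2 / (4 * (L * C3))) with hε
  have hε0 : 0 < ε := lt_min (by norm_num) (by positivity)
  have hεc : 4 * (ε * L * C3) ≤ c2 := by
    have : ε ≤ c2 / (4 * (L * C3)) := min_le_right _ _
    rw [le_div_iff₀ (by positivity)] at this
    linarith
  set m₀ := q ^ 2 * α * K.C0 / 2 + q * C1 + L ^ 2 / (2 * α) + L with hm₀
  have hm₀0 : 0 < m₀ := by rw [hm₀]; positivity
  set m := m₀ + 1 with hm
  have hm0 : 0 < m := by linarith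
  set C4 := ε * (C2 + c2 / 2 + L ^ 2 * C3 / c2) + L + m with hC4
  have hC40 : 0 < C4 := by rw [hC4]; positivity
  set C5 := L + m + (K.Rm * K.hm) ^ ε * C4 with hC5
  have hC50 : 0 < C5 := by rw [hC5]; positivity
  obtain ⟨d, hd0, hd⟩ := barrier_alternative (c4 := ε * c2 / 2) (by positivity) hC50 K.c6_pos
    hε0.le (min_le_left _ _)
  refine ⟨q, ε, m, C5 / d ^ q, hq1, hε0, min_le_left _ _, hm0, by positivity, ?_⟩
  intro e he η hη t₁ t x hx
  obtain ⟨g, H, S, hHs, hjet, hg1, hg2, hAH, hS0, hS⟩ := hdata e he x hx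
  have hX : 0 < ⟪x, e⟫ := hx.2
  have hxJ := (K.memB x).mp hx.1
  have hh := K.pos _ hxJ
  have hΦ0 : 0 < Phi K e x := mul_pos hX hh
  have hΦle : Phi K e x ≤ K.Rm * K.hm := by
    refine mul_le_mul ?_ (K.clo_le x (subset_closure hx.1)) hh.le hR.le
    have := real_inner_le_norm x e
    rw [he, mul_one] at this
    exact this.trans (K.clo_norm x (subset_closure hx.1))
  have halt := hd _ _ S hX hh hS
  change C5 ≤ ε * c2 / 2 * (Phi K e x ^ ε * S) ∨ d ≤ Phi K e x at halt
  have hline : ∀ ζ : Eu N, ContinuousAt (fun s : ℝ => Phi K e (x + s • ζ)) 0 := fun ζ => by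
    have : Continuous fun s : ℝ => Phi K e (x + s • ζ) :=
      (continuous_Phi K e).comp (by fun_prop)
    exact this.continuousAt
  have hpow : ∀ (κ : ℝ) (ζ : Eu N), HasJet2 (fun s : ℝ => Phi K e (x + s • ζ) ^ κ)
      (Phi K e x ^ κ * (κ * ⟪g, ζ⟫)) (Phi K e x ^ κ * (κ ^ 2 * ⟪g, ζ⟫ ^ 2 + κ * qf H ζ)) := by
    intro κ ζ
    have := (hjet ζ).rpow_of_log (κ := κ) (hline ζ) (by simpa using hΦ0)
    simpa using this
  set Φ := Phi K e x with hΦ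
  set ψ := Φ ^ q with hψ
  set Ψ := Φ ^ ε with hΨ
  have hψ0 : 0 < ψ := Real.rpow_pos_of_pos hΦ0 q
  have hΨ0 : 0 < Ψ := Real.rpow_pos_of_pos hΦ0 ε
  set a := η * (C5 / d ^ q) with ha
  have ha0 : 0 ≤ a := by positivity
  have hEd : HasDerivAt (fun s => Real.exp (-m * (s - t₁))) (Real.exp (-m * (t - t₁)) * -m) t := by
    simpa using (((hasDerivAt_id' t).sub_const t₁).const_mul (-m)).exp
  set E := Real.exp (-m * (t - t₁)) with hE
  have hE0 : 0 < E := Real.exp_pos _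
  -- the constant term `η C₅` is absorbed by one of the two terms
  have hdom : η * (C5 - ε * c2 / 2 * (Ψ * S)) ≤ a * ψ := by
    rcases halt with h | h
    · have : η * (C5 - ε * c2 / 2 * (Ψ * S)) ≤ 0 :=
        mul_nonpos_of_nonneg_of_nonpos hη (by linarith)
      have : 0 ≤ a * ψ := by positivity
      linarith
    · have h1 : d ^ q ≤ ψ := Real.rpow_le_rpow hd0.le h hq0
      have h2 : η * C5 ≤ a * ψ := by
        calc η * C5 = a * d ^ q := by rw [ha]; field_simp
          _ ≤ a * ψ := by gcongr
      have : 0 ≤ η * (ε * c2 / 2 * (Ψ * S)) := by positivity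
      linarith
  have hlow := barrier_ineq_low (L := L) hα hq0 hS0 hqC hg1
  have hup := barrier_ineq_up (m := m) (C2 := C2) hL hc2 hC3 hε0.le hεc hS0 hg2
  rw [← hm₀] at hlow
  rw [← hC4] at hup
  refine ⟨fun y s => Real.exp (-m * (s - t₁)) * (a * Phi K e y ^ q - η * (1 + Phi K e y ^ ε)),
    E * -m * (a * ψ - η * (1 + Ψ)), (E * (a * ψ * q - η * Ψ * ε)) • g,
    (E * (a * ψ * q ^ 2)) • outer g + (E * (a * ψ * q)) • H
      - ((E * (η * Ψ * ε ^ 2)) • outer g + (E * (η * Ψ * ε)) • H),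
    E * (a * ψ * (q ^ 2 * (α * ‖g‖ ^ 2) - q * (C1 * (S + 1)))
      - η * Ψ * (ε ^ 2 * (L * ‖g‖ ^ 2) + ε * (-c2 * S + C2))),
    ?_, ?_, ?_, rfl, Eventually.of_forall fun _ => le_rfl, Eventually.of_forall fun _ => le_rfl,
    ?_, ?_⟩
  · intro i j
    simp only [Pi.sub_apply, Pi.add_apply, Pi.smul_apply]
    rw [outer_symm g i j, hHs i j]
  · exact hEd.mul_const _
  · intro ζ
    have j1 := (((hpow q ζ).const_mul a).sub (((HasJet2.const 1).add (hpow ε ζ)).const_mul η)).const_mul E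
    convert j1 using 1
    · rw [inner_smul_left, conj_trivial]; ring
    · rw [qf_sub, qf_add, qf_add, qf_smul, qf_smul, qf_smul, qf_smul, qf_outer]; ring
  · intro A hA
    obtain ⟨hA1, hA2⟩ := hAH A hA
    have o1 := hA.le_outer (ξ := g)
    have o2 := hA.outer_le (ξ := g)
    simp only [map_sub, map_add, map_smul, smul_eq_mul]
    have b1 : a * ψ * (q ^ 2 * (α * ‖g‖ ^ 2) - q * (C1 * (S + 1))) ≤
        a * ψ * (q ^ 2 * A (outer g) + q * A H) := by
      refine mul_le_mul_of_nonneg_left ?_ (by positivity)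
      linarith [mul_le_mul_of_nonneg_left o1 (sq_nonneg q), mul_le_mul_of_nonneg_left hA1 hq0]
    have b2 : η * Ψ * (ε ^ 2 * A (outer g) + ε * A H) ≤
        η * Ψ * (ε ^ 2 * (L * ‖g‖ ^ 2) + ε * (-c2 * S + C2)) := by
      refine mul_le_mul_of_nonneg_left ?_ (by positivity)
      linarith [mul_le_mul_of_nonneg_left o2 (sq_nonneg ε), mul_le_mul_of_nonneg_left hA2 hε0.le]
    have b3 := mul_le_mul_of_nonneg_left (sub_le_sub b1 b2) hE0.le
    linarith
  · beta_reduce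
    rw [norm_smul, Real.norm_eq_abs, abs_mul, abs_mul, abs_of_pos hE0]
    have n1 : |a * ψ - η * (1 + Ψ)| ≤ a * ψ + η * (1 + Ψ) := by
      have p1 : 0 ≤ a * ψ := by positivity
      have p2 : 0 ≤ η * (1 + Ψ) := by positivity
      rw [abs_le]; constructor <;> linarith
    have n2 : |a * ψ * q - η * Ψ * ε| ≤ a * ψ * q + η * Ψ * ε := by
      have p1 : 0 ≤ a * ψ * q := by positivity
      have p2 : 0 ≤ η * Ψ * ε := by positivity
      rw [abs_le]; constructor <;> linarith
    have n3 : L * (|a * ψ - η * (1 + Ψ)| + |a * ψ * q - η * Ψ * ε| * ‖g‖) ≤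
        L * (a * ψ + η * (1 + Ψ) + (a * ψ * q + η * Ψ * ε) * ‖g‖) := by gcongr
    have s1 := mul_le_mul_of_nonneg_left hlow (show 0 ≤ a * ψ by positivity)
    have s2 := mul_le_mul_of_nonneg_left hup (show 0 ≤ η * Ψ by positivity)
    have hΨle : Ψ * C4 ≤ (K.Rm * K.hm) ^ ε * C4 := by
      have : Ψ ≤ (K.Rm * K.hm) ^ ε := Real.rpow_le_rpow hΦ0.le hΦle hε0.le
      gcongr
    have s3 := mul_le_mul_of_nonneg_left hΨle hη
    have fin : -m * (a * ψ - η * (1 + Ψ)) ≤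
        (a * ψ * (q ^ 2 * (α * ‖g‖ ^ 2) - q * (C1 * (S + 1)))
        - η * Ψ * (ε ^ 2 * (L * ‖g‖ ^ 2) + ε * (-c2 * S + C2)))
        - L * (a * ψ + η * (1 + Ψ) + (a * ψ * q + η * Ψ * ε) * ‖g‖) := by
      rw [hC5] at hdom
      have em : m₀ = m - 1 := by rw [hm]; ring
      rw [em] at s1
      linarith
    have := mul_le_mul_of_nonneg_left (fin.trans (sub_le_sub_left n3 _)) hE0.le
    linarith

/-! ### Decay of the negative part -/

lemma Phi_eq_zero {B : Set (Eu N)} (K : RadData B) {e x : Eu N} (hx : x ∈ halfClo B e)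
    (hx' : x ∉ halfDom B e) : Phi K e x = 0 := by
  by_cases hB : x ∈ B
  · have h0 : ⟪x, e⟫ = 0 := le_antisymm (not_lt.1 fun h => hx' ⟨hB, h⟩) hx.2
    simp [Phi, h0]
  · simp [Phi, K.bdry x hx.1 hB]

/-- If `v` is at least `-η` everywhere and at least `Λ η` on a suitable compact core at time `t₁`,
then its negative part decays exponentially. -/
theorem barrier_decay {B : Set (Eu N)} (K : RadData B) {L α : ℝ} (hL : 0 < L) (hα : 0 < α) :
    ∃ d₁ Λ m C : ℝ, 0 < d₁ ∧ 0 < Λ ∧ 0 < m ∧ 0 < C ∧ ∀ e : Eu N, ‖e‖ = 1 →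
      ∀ v, IsVSol (halfClo B e) (halfDom B e) L α v → ∀ t₁, 0 ≤ t₁ → ∀ η, 0 ≤ η →
      (∀ x ∈ halfClo B e, -η ≤ v x t₁) →
      (∀ x ∈ B, d₁ ≤ ⟪x, e⟫ → d₁ ≤ K.h (‖x‖ ^ 2) → Λ * η ≤ v x t₁) →
      ∀ t, t₁ ≤ t → ∀ x ∈ halfClo B e, -(C * η * Real.exp (-m * (t - t₁))) ≤ v x t := by
  obtain ⟨q, ε, m, a₀, hq, hε, hε2, hm, ha₀, hsub⟩ := barrier_sub K hL hα
  set M := max K.Rm K.hm with hM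
  have hMpos : 0 < M := lt_max_of_lt_left K.Rm_pos
  have hqε : 0 < q - ε := by linarith
  -- `d₁` is chosen so that `a₀ Φ^q ≤ Φ^ε` as soon as `Φ ≤ d₁ M`
  set d₁ := (1 / a₀) ^ (1 / (q - ε)) / M with hd₁
  have hd₁pos : 0 < d₁ := by positivity
  have hd₁M : a₀ * (d₁ * M) ^ (q - ε) = 1 := by
    rw [hd₁, div_mul_cancel₀ _ hMpos.ne', ← Real.rpow_mul (by positivity)]
    rw [one_div_mul_cancel hqε.ne', Real.rpow_one]
    field_simp
  have hRh : 0 < K.Rm * K.hm := mul_pos K.Rm_pos K.hm_pos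
  refine ⟨d₁, a₀ * (K.Rm * K.hm) ^ q, m, 1 + (K.Rm * K.hm) ^ ε, hd₁pos, by positivity, hm,
    by positivity, ?_⟩
  intro e he v hv t₁ ht₁ η hη hv1 hv2 t ht x hx
  have hX : ∀ x ∈ halfClo B e, ⟪x, e⟫ ≤ K.Rm := fun x hx => by
    have := real_inner_le_norm x e
    rw [he, mul_one] at this
    exact this.trans (K.clo_norm x hx.1)
  have hP0 : ∀ x ∈ halfClo B e, 0 ≤ Phi K e x := fun x hx =>
    mul_nonneg hx.2 (K.clo_nonneg x hx.1)
  have hPle : ∀ x ∈ halfClo B e, Phi K e x ≤ K.Rm * K.hm := fun x hx =>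
    mul_le_mul (hX x hx) (K.clo_le x hx.1) (K.clo_nonneg x hx.1) K.Rm_pos.le
  have hcmp := comparison hL.le (isCompact_halfClo K.isBounded e) (halfDom_subset B e)
    (isOpen_halfDom K.isOpen e) hv (t₁ := t₁) (t₂ := t) ht₁
    (w := fun y s => Real.exp (-m * (s - t₁)) *
      (η * a₀ * Phi K e y ^ q - η * (1 + Phi K e y ^ ε))) ?_ ?_ ?_
    (fun x hx t _ => hsub e he η hη t₁ t x hx) x hx t ⟨ht, le_rfl⟩
  · refine le_trans ?_ hcmp
    have h1 : 0 ≤ η * a₀ * Phi K e x ^ q := by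
      have := Real.rpow_nonneg (hP0 x hx) q
      positivity
    have h2 : Phi K e x ^ ε ≤ (K.Rm * K.hm) ^ ε :=
      Real.rpow_le_rpow (hP0 x hx) (hPle x hx) hε.le
    have h3 : -((1 + (K.Rm * K.hm) ^ ε) * η) ≤
        η * a₀ * Phi K e x ^ q - η * (1 + Phi K e x ^ ε) := by
      nlinarith [mul_le_mul_of_nonneg_left h2 hη]
    calc _ = Real.exp (-m * (t - t₁)) * (-((1 + (K.Rm * K.hm) ^ ε) * η)) := by ring
      _ ≤ _ := mul_le_mul_of_nonneg_left h3 (Real.exp_pos _).le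
  · have hc := continuous_Phi K e
    have h1 : Continuous fun y : Eu N × ℝ => Phi K e y.1 ^ q :=
      (hc.comp continuous_fst).rpow_const fun _ => Or.inr (by linarith)
    have h2 : Continuous fun y : Eu N × ℝ => Phi K e y.1 ^ ε :=
      (hc.comp continuous_fst).rpow_const fun _ => Or.inr hε.le
    exact (by fun_prop : Continuous fun p : Eu N × ℝ => Real.exp (-m * (p.2 - t₁)) *
      (η * a₀ * Phi K e p.1 ^ q - η * (1 + Phi K e p.1 ^ ε))).continuousOn
  · intro x hx
    have hpε := Real.rpow_nonneg (hP0 x hx) ε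
    simp only [sub_self, mul_zero, Real.exp_zero, one_mul]
    by_cases hcore : x ∈ B ∧ d₁ ≤ ⟪x, e⟫ ∧ d₁ ≤ K.h (‖x‖ ^ 2)
    · refine le_trans ?_ (hv2 x hcore.1 hcore.2.1 hcore.2.2)
      have h2 : Phi K e x ^ q ≤ (K.Rm * K.hm) ^ q :=
        Real.rpow_le_rpow (hP0 x hx) (hPle x hx) (by linarith)
      have h3 := mul_le_mul_of_nonneg_left h2 (mul_nonneg hη ha₀.le)
      nlinarith [mul_nonneg hη hpε]
    · refine le_trans ?_ (hv1 x hx)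
      suffices h : a₀ * Phi K e x ^ q ≤ Phi K e x ^ ε by
        nlinarith [mul_le_mul_of_nonneg_left h hη]
      have hsmall : Phi K e x ≤ d₁ * M := by
        by_cases h1 : d₁ ≤ ⟪x, e⟫
        · have h2 : K.h (‖x‖ ^ 2) ≤ d₁ := by
            by_contra! h2
            exact hcore ⟨K.mem_of_pos hx.1 (hd₁pos.trans h2), h1, h2.le⟩
          calc Phi K e x ≤ K.Rm * d₁ :=
                mul_le_mul (hX x hx) h2 (K.clo_nonneg x hx.1) K.Rm_pos.le
            _ ≤ d₁ * M := by
                rw [mul_comm]; exact mul_le_mul_of_nonneg_left (le_max_left _ _) hd₁pos.le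
        · push Not at h1
          calc Phi K e x ≤ d₁ * K.hm :=
                mul_le_mul h1.le (K.clo_le x hx.1) (K.clo_nonneg x hx.1) hd₁pos.le
            _ ≤ d₁ * M := mul_le_mul_of_nonneg_left (le_max_right _ _) hd₁pos.le
      have h1 : Phi K e x ^ q = Phi K e x ^ (q - ε) * Phi K e x ^ ε := by
        rw [← Real.rpow_add' (hP0 x hx) (by linarith)]
        ring_nf
      have h2 : Phi K e x ^ (q - ε) ≤ (d₁ * M) ^ (q - ε) :=
        Real.rpow_le_rpow (hP0 x hx) hsmall hqε.le
      calc a₀ * Phi K e x ^ q = a₀ * Phi K e x ^ (q - ε) * Phi K e x ^ ε := by rw [h1]; ring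
        _ ≤ a₀ * (d₁ * M) ^ (q - ε) * Phi K e x ^ ε := by gcongr
        _ = Phi K e x ^ ε := by rw [hd₁M, one_mul]
  · intro x hx hx' s _
    simp only [Phi_eq_zero K hx hx', Real.zero_rpow hε.ne',
      Real.zero_rpow (by linarith : q ≠ 0)]
    have := Real.exp_pos (-m * (s - t₁))
    nlinarith [mul_nonneg this.le hη]

/-! ### Stability of the reflection inequality -/

lemma norm_reflHyp_sub_le {e e' : Eu N} (he : ‖e‖ = 1) (he' : ‖e'‖ = 1) (x : Eu N) :
    ‖reflHyp e' x - reflHyp e x‖ ≤ 4 * (‖x‖ * ‖e' - e‖) := by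
  have h : reflHyp e' x - reflHyp e x =
      (-(2 * ⟪x, e'⟫)) • (e' - e) + (-(2 * ⟪x, e' - e⟫)) • e := by
    simp only [reflHyp, inner_sub_right]
    module
  have h1 : |⟪x, e'⟫| ≤ ‖x‖ := by simpa [he'] using abs_real_inner_le_norm x e'
  have h2 := abs_real_inner_le_norm x (e' - e)
  rw [h]
  refine (norm_add_le _ _).trans ?_
  simp only [norm_smul, norm_neg, norm_mul, Real.norm_eq_abs, he, abs_two, mul_one]
  nlinarith [mul_le_mul_of_nonneg_right h1 (norm_nonneg (e' - e))]

lemma norm_reflHyp_sub_reflHyp {e : Eu N} (he : ‖e‖ = 1) (x y : Eu N) :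
    ‖reflHyp e x - reflHyp e y‖ = ‖x - y‖ := by
  rw [← norm_reflHyp he (x - y)]
  congr 1
  simp only [reflHyp, inner_sub_left]
  module

lemma refl_le_of_mem_halfClo {B : Set (Eu N)} (K : RadData B) {e : Eu N} (he : ‖e‖ = 1)
    {z : Eu N → ℝ} (hz : ContinuousOn z (closure B))
    (h : ∀ x ∈ halfDom B e, z (reflHyp e x) ≤ z x) {x : Eu N} (hx : x ∈ halfClo B e) :
    z (reflHyp e x) ≤ z x := by
  have hcl : ∀ y ∈ closure B, reflHyp e y ∈ closure B := fun y hy =>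
    closure_refl (K.refl_mem he) hy
  rcases hx.2.eq_or_lt with h0 | h0
  · rw [reflHyp, ← h0]; simp
  · have hmem : x ∈ closure (halfDom B e) := by
      have ho : IsOpen {y : Eu N | 0 < ⟪y, e⟫} := isOpen_lt continuous_const (by fun_prop)
      have := ho.inter_closure (t := B) ⟨h0, hx.1⟩
      rwa [inter_comm] at this
    have hsub : closure (halfDom B e) ⊆ closure B := closure_mono fun y hy => hy.1
    have hz' : ContinuousOn (fun y => z (reflHyp e y)) (closure B) :=
      hz.comp (continuous_reflHyp e).continuousOn hcl
    exact ContinuousWithinAt.closure_le hmem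
      ((hz' x hx.1).mono (subset_closure.trans hsub))
      ((hz x hx.1).mono (subset_closure.trans hsub)) h

/-- If `z ∘ σ_e ≤ z` on `B(e)` with strict inequality somewhere, and `u(·,t₁)` is uniformly close to
`z`, then all directions `e'` close to `e` belong to the set `omegaReflSet B u`. -/
theorem refl_stable {B : Set (Eu N)} (K : RadData B) {L α : ℝ} (hL : 0 < L) (hα : 0 < α)
    {u : Eu N → ℝ → ℝ}
    (hV : ∀ e : Eu N, ‖e‖ = 1 → IsVSol (halfClo B e) (halfDom B e) L α
      (fun x t => u x t - u (reflHyp e x) t))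
    {z : Eu N → ℝ} (hz : ContinuousOn z (closure B)) {e : Eu N} (he : ‖e‖ = 1)
    (hze : ∀ x ∈ halfDom B e, z (reflHyp e x) ≤ z x)
    {x₀ : Eu N} (hx₀ : x₀ ∈ halfDom B e) (hne : z (reflHyp e x₀) ≠ z x₀) :
    ∃ ε > 0, ∀ e' : Eu N, ‖e'‖ = 1 → ‖e' - e‖ < ε → ∀ t₁, 0 ≤ t₁ →
      (∀ x ∈ closure B, |u x t₁ - z x| ≤ ε) → e' ∈ omegaReflSet B u := by
  obtain ⟨d₁, Λ, m, C, hd₁, hΛ, hm, hC, hdecay⟩ := barrier_decay K hL hα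
  have hRm := K.Rm_pos
  have hcl : ∀ e : Eu N, ‖e‖ = 1 → ∀ y ∈ closure B, reflHyp e y ∈ closure B := fun e he y hy =>
    closure_refl (K.refl_mem he) hy
  have hcpt : IsCompact (closure B) := K.isBounded.isCompact_closure
  have huc : ∀ θ > 0, ∃ r > 0, ∀ x ∈ closure B, ∀ y ∈ closure B, ‖x - y‖ < r →
      |z x - z y| < θ := by
    intro θ hθ
    obtain ⟨r, hr, h⟩ := Metric.uniformContinuousOn_iff.1
      (hcpt.uniformContinuousOn_of_continuous hz) θ hθ
    refine ⟨r, hr, fun x hx y hy hxy => ?_⟩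
    simpa [Real.dist_eq] using h x hx y hy (by rwa [dist_eq_norm])
  have hx₀c : x₀ ∈ closure B := subset_closure hx₀.1
  set δ₀ := z x₀ - z (reflHyp e x₀) with hδ₀
  have hδ₀pos : 0 < δ₀ := sub_pos.2 (lt_of_le_of_ne (hze x₀ hx₀) hne)
  set d := min d₁ (min (⟪x₀, e⟫ / 2) (K.h (‖x₀‖ ^ 2))) with hd
  have hh₀ : 0 < K.h (‖x₀‖ ^ 2) := K.pos _ ((K.memB x₀).1 hx₀.1)
  have hdpos : 0 < d := lt_min hd₁ (lt_min (half_pos hx₀.2) hh₀)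
  obtain ⟨r₀, hr₀, hr₀'⟩ := huc (δ₀ / 8) (by positivity)
  obtain ⟨κ, hκ, hprop⟩ := propagate K hL.le hα hdpos (half_pos hr₀)
  -- `η` is small enough for the value transported by `propagate` to beat `Λ η e^L` on the core
  set η := κ * (δ₀ / 2) / ((1 + Λ) * Real.exp L) with hη
  have hηpos : 0 < η := by positivity
  have hηeq : κ * (δ₀ / 2) - η * Real.exp L = Λ * (η * Real.exp L) := by
    have : η * ((1 + Λ) * Real.exp L) = κ * (δ₀ / 2) := div_mul_cancel₀ _ (by positivity)
    linarith
  obtain ⟨r₁, hr₁, hr₁'⟩ := huc (η / 2) (by positivity)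
  obtain ⟨ε, hε, h1, h2, h3, h4, h5⟩ : ∃ ε > 0, K.Rm * ε ≤ ⟪x₀, e⟫ / 2 ∧ 4 * (K.Rm * ε) ≤ r₀ / 2 ∧
      4 * (K.Rm * ε) ≤ r₁ ∧ ε ≤ δ₀ / 8 ∧ ε ≤ η / 4 := by
    have hX := hx₀.2
    refine ⟨min (min (⟪x₀, e⟫ / 2 / K.Rm) (min (r₀ / 8 / K.Rm) (r₁ / 4 / K.Rm)))
      (min (δ₀ / 8) (η / 4)), by positivity, ?_, ?_, ?_, ?_, ?_⟩
    · rw [mul_comm, ← le_div_iff₀ hRm]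
      exact (min_le_left _ _).trans (min_le_left _ _)
    · have : K.Rm * min (min (⟪x₀, e⟫ / 2 / K.Rm) (min (r₀ / 8 / K.Rm) (r₁ / 4 / K.Rm)))
          (min (δ₀ / 8) (η / 4)) ≤ r₀ / 8 := by
        rw [mul_comm, ← le_div_iff₀ hRm]
        exact (min_le_left _ _).trans ((min_le_right _ _).trans (min_le_left _ _))
      linarith
    · have : K.Rm * min (min (⟪x₀, e⟫ / 2 / K.Rm) (min (r₀ / 8 / K.Rm) (r₁ / 4 / K.Rm)))
          (min (δ₀ / 8) (η / 4)) ≤ r₁ / 4 := by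
        rw [mul_comm, ← le_div_iff₀ hRm]
        exact (min_le_left _ _).trans ((min_le_right _ _).trans (min_le_right _ _))
      linarith
    · exact (min_le_right _ _).trans (min_le_left _ _)
    · exact (min_le_right _ _).trans (min_le_right _ _)
  refine ⟨ε, hε, fun e' he' hee t₁ ht₁ hu => ?_⟩
  have hxe : ∀ x ∈ closure B, ‖x‖ * ‖e' - e‖ < K.Rm * ε := fun x hx =>
    mul_lt_mul' (K.clo_norm x hx) hee (norm_nonneg _) hRm
  have hinner : ∀ x ∈ closure B, |⟪x, e'⟫ - ⟪x, e⟫| < K.Rm * ε := fun x hx => by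
    rw [← inner_sub_right]
    exact (abs_real_inner_le_norm _ _).trans_lt (hxe x hx)
  have hv := hV e' he'
  have hx₀e : d ≤ ⟪x₀, e'⟫ := by
    have h6 := abs_lt.1 (hinner x₀ hx₀c)
    have h7 : d ≤ ⟪x₀, e⟫ / 2 := (min_le_right _ _).trans (min_le_left _ _)
    linarith [h6.1]
  obtain ⟨hlow, hcore⟩ := hprop e' he' _ hv t₁ ht₁ x₀ hx₀.1 hx₀e
    ((min_le_right _ _).trans (min_le_right _ _)) (δ₀ / 2) η (by positivity) hηpos.le
    (by
      intro x hx hxx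
      have a1 := abs_lt.1 (hr₀' x hx.1 x₀ hx₀c (by linarith))
      have a2 : ‖reflHyp e' x - reflHyp e x₀‖ < r₀ := by
        have b1 : reflHyp e' x - reflHyp e x₀ =
            (reflHyp e' x - reflHyp e' x₀) + (reflHyp e' x₀ - reflHyp e x₀) := by abel
        rw [b1]
        refine (norm_add_le _ _).trans_lt ?_
        rw [norm_reflHyp_sub_reflHyp he']
        linarith [norm_reflHyp_sub_le he he' x₀, hxe x₀ hx₀c]
      have a3 := abs_lt.1 (hr₀' _ (hcl e' he' x hx.1) _ (hcl e he x₀ hx₀c) a2)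
      have a4 := abs_le.1 (hu x hx.1)
      have a5 := abs_le.1 (hu _ (hcl e' he' x hx.1))
      linarith [a1.1, a3.2, a4.1, a5.2])
    (by
      intro x hx
      have a4 := abs_le.1 (hu x hx.1)
      have a5 := abs_le.1 (hu _ (hcl e' he' x hx.1))
      rcases le_or_gt 0 ⟪x, e⟫ with h0 | h0
      · have a1 := refl_le_of_mem_halfClo K he hz hze ⟨hx.1, h0⟩
        have a2 := abs_lt.1 (hr₁' _ (hcl e' he' x hx.1) _ (hcl e he x hx.1)
          (by linarith [norm_reflHyp_sub_le he he' x, hxe x hx.1]))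
        linarith [a2.2, a4.1, a5.2]
      · have a1 : ‖reflHyp e' x - x‖ < r₁ := by
          have b1 : reflHyp e' x - x = (-(2 * ⟪x, e'⟫)) • e' := by
            simp only [reflHyp]; module
          have hx2 := hx.2
          rw [b1, norm_smul, he', norm_neg, Real.norm_eq_abs, mul_one, abs_of_nonneg (by linarith)]
          linarith [(abs_lt.1 (hinner x hx.1)).2]
        have a2 := abs_lt.1 (hr₁' _ (hcl e' he' x hx.1) _ hx.1 a1)
        linarith [a2.2, a4.1, a5.2])
  have hfin := hdecay e' he' _ hv (t₁ + 1) (by linarith) (η * Real.exp L) (by positivity) hlow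
    (fun x hx h6 h7 => by
      rw [← hηeq]
      exact hcore x hx ((min_le_left _ _).trans h6) ((min_le_left _ _).trans h7))
  refine ⟨he', fun y hy x hx => ?_⟩
  obtain ⟨_, t, ht, hlim⟩ := hy
  have hpt : ∀ x ∈ closure B, Tendsto (fun n => u x (t n)) atTop (𝓝 (y x)) := by
    intro x hx
    rw [Metric.tendsto_atTop]
    intro θ hθ
    obtain ⟨n₀, hn₀⟩ := hlim (θ / 2) (half_pos hθ)
    exact ⟨n₀, fun n hn => by
      rw [Real.dist_eq]; exact (hn₀ n hn x hx).trans_lt (half_lt_self hθ)⟩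
  have hxc : x ∈ closure B := subset_closure hx.1
  have hlim1 := (hpt x hxc).sub (hpt _ (hcl e' he' x hxc))
  have hlim2 : Tendsto (fun n => -(C * (η * Real.exp L) * Real.exp (-m * (t n - (t₁ + 1)))))
      atTop (𝓝 (-(C * (η * Real.exp L) * 0))) := by
    refine Tendsto.neg (Tendsto.const_mul _ (Real.tendsto_exp_atBot.comp ?_))
    exact (tendsto_atTop_add_const_right _ _ ht).const_mul_atTop_of_neg (by linarith)
  have := le_of_tendsto_of_tendsto hlim2 hlim1
    ((ht.eventually_ge_atTop (t₁ + 1)).mono fun n hn => hfin (t n) hn x (halfDom_subset B e' hx))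
  simpa using this

/-! ### First moments and reflections -/

/-- The reflection `σ_e` as a linear isometry. -/
def reflIso {e : Eu N} (he : ‖e‖ = 1) : Eu N ≃ₗᵢ[ℝ] Eu N :=
  ⟨LinearEquiv.ofInvolutive (reflL e).toLinearMap (fun x => by
    simp [reflL_apply, reflHyp_reflHyp he]), fun x => by
    change ‖reflL e x‖ = ‖x‖
    rw [reflL_apply, norm_reflHyp he]⟩

lemma reflIso_apply {e : Eu N} (he : ‖e‖ = 1) (x : Eu N) : reflIso he x = reflHyp e x :=
  reflL_apply e x

/-- The first moment `∫_B z(x) x dx`. -/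
def moment (B : Set (Eu N)) (z : Eu N → ℝ) : Eu N := ∫ x in B, z x • x

section Moment

variable {B : Set (Eu N)} {z : Eu N → ℝ} {e : Eu N}

lemma integrableOn_of_continuousOn {E : Type*} [NormedAddCommGroup E] (K : RadData B)
    {f : Eu N → E} (hf : ContinuousOn f (closure B)) :
    MeasureTheory.IntegrableOn f B :=
  (hf.integrableOn_compact K.isBounded.isCompact_closure).mono_set subset_closure

lemma inner_moment (K : RadData B) (hz : ContinuousOn z (closure B)) (e : Eu N) :
    ⟪moment B z, e⟫ = ∫ x in B, z x * ⟪x, e⟫ := by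
  have hi : MeasureTheory.IntegrableOn (fun x => z x • x) B :=
    integrableOn_of_continuousOn K (hz.smul continuousOn_id)
  rw [real_inner_comm, moment, ← integral_inner hi e]
  simp [inner_smul_right, real_inner_comm]

/-- Reflecting the domain of integration rewrites twice the component of the moment along `e` as the
integral of `(z - z ∘ σ_e)(x) (x·e)`. -/
lemma two_inner_moment (K : RadData B) (hz : ContinuousOn z (closure B)) (he : ‖e‖ = 1) :
    2 * ⟪moment B z, e⟫ = ∫ x in B, (z x - z (reflHyp e x)) * ⟪x, e⟫ := by
  have hcl : ∀ y ∈ closure B, reflHyp e y ∈ closure B := fun y hy =>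
    closure_refl (K.refl_mem he) hy
  have hz' : ContinuousOn (fun y => z (reflHyp e y)) (closure B) :=
    hz.comp (continuous_reflHyp e).continuousOn hcl
  have hin : ContinuousOn (fun x : Eu N => ⟪x, e⟫) (closure B) :=
    (by fun_prop : Continuous fun x : Eu N => ⟪x, e⟫).continuousOn
  have hpre : reflIso he ⁻¹' B = B := by
    ext x
    rw [mem_preimage, reflIso_apply]
    exact ⟨fun h => reflHyp_reflHyp he x ▸ K.refl_mem he _ h, K.refl_mem he x⟩
  have h1 := (reflIso he).measurePreserving.setIntegral_preimage_emb
    (reflIso he).toHomeomorph.measurableEmbedding (fun x => z x * ⟪x, e⟫) B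
  rw [hpre] at h1
  simp only [reflIso_apply, inner_reflHyp_self he] at h1
  have h2 : ∀ x : Eu N, (z x - z (reflHyp e x)) * ⟪x, e⟫ =
      z x * ⟪x, e⟫ + z (reflHyp e x) * -⟪x, e⟫ := fun x => by ring
  have hi1 : MeasureTheory.IntegrableOn (fun x => z x * ⟪x, e⟫) B :=
    integrableOn_of_continuousOn K (hz.mul hin)
  have hi2 : MeasureTheory.IntegrableOn (fun x => z (reflHyp e x) * -⟪x, e⟫) B :=
    integrableOn_of_continuousOn K (hz'.mul hin.neg)
  simp only [h2]
  rw [MeasureTheory.integral_add hi1 hi2, h1, inner_moment K hz]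
  ring

lemma moment_integrand_nonneg (K : RadData B) (he : ‖e‖ = 1)
    (h : ∀ x ∈ halfDom B e, z (reflHyp e x) ≤ z x) {x : Eu N} (hx : x ∈ B) :
    0 ≤ (z x - z (reflHyp e x)) * ⟪x, e⟫ := by
  rcases lt_trichotomy ⟪x, e⟫ 0 with h0 | h0 | h0
  · have h1 := h (reflHyp e x) ⟨K.refl_mem he x hx, by rw [inner_reflHyp_self he]; linarith⟩
    rw [reflHyp_reflHyp he] at h1
    nlinarith
  · simp [h0]
  · exact mul_nonneg (sub_nonneg.2 (h x ⟨hx, h0⟩)) h0.le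

lemma inner_moment_nonneg (K : RadData B) (hz : ContinuousOn z (closure B)) (he : ‖e‖ = 1)
    (h : ∀ x ∈ halfDom B e, z (reflHyp e x) ≤ z x) : 0 ≤ ⟪moment B z, e⟫ := by
  have h1 := two_inner_moment K hz he
  have h2 : 0 ≤ ∫ x in B, (z x - z (reflHyp e x)) * ⟪x, e⟫ :=
    MeasureTheory.setIntegral_nonneg K.isOpen.measurableSet
      fun x hx => moment_integrand_nonneg K he h hx
  linarith

/-- If the moment is orthogonal to `e`, the reflection inequality is an equality. -/
lemma eq_refl_of_inner_moment (K : RadData B) (hz : ContinuousOn z (closure B)) (he : ‖e‖ = 1)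
    (h : ∀ x ∈ halfDom B e, z (reflHyp e x) ≤ z x) (h0 : ⟪moment B z, e⟫ = 0)
    {x : Eu N} (hx : x ∈ B) : z (reflHyp e x) = z x := by
  have hcl : ∀ y ∈ closure B, reflHyp e y ∈ closure B := fun y hy =>
    closure_refl (K.refl_mem he) hy
  have hz' : ContinuousOn (fun y => z (reflHyp e y)) (closure B) :=
    hz.comp (continuous_reflHyp e).continuousOn hcl
  have hc : ContinuousOn (fun x => (z x - z (reflHyp e x)) * ⟪x, e⟫) (closure B) :=
    (hz.sub hz').mul (by fun_prop : Continuous fun x : Eu N => ⟪x, e⟫).continuousOn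
  have h1 := two_inner_moment K hz he
  rw [h0, mul_zero] at h1
  have h2 := (MeasureTheory.setIntegral_eq_zero_iff_of_nonneg_ae
    ((MeasureTheory.ae_restrict_mem K.isOpen.measurableSet).mono
      fun x hx => moment_integrand_nonneg K he h hx) (integrableOn_of_continuousOn K hc)).1 h1.symm
  have h3 := MeasureTheory.Measure.eqOn_open_of_ae_eq h2 K.isOpen (hc.mono subset_closure)
    continuousOn_const hx
  rcases mul_eq_zero.1 h3 with h4 | h4
  · linarith
  · rw [reflHyp_eq_self h4]

end Moment

/-! ### From reflection inequalities to foliated Schwarz symmetry -/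

/-- Radial projection to the unit sphere. -/
def unitVec (y : Eu N) : Eu N := ‖y‖⁻¹ • y

lemma norm_unitVec {y : Eu N} (hy : y ≠ 0) : ‖unitVec y‖ = 1 := by
  rw [unitVec, norm_smul, norm_inv, norm_norm, inv_mul_cancel₀ (norm_ne_zero_iff.2 hy)]

lemma unitVec_of_norm {y : Eu N} (hy : ‖y‖ = 1) : unitVec y = y := by simp [unitVec, hy]

lemma continuousAt_unitVec {y : Eu N} (hy : y ≠ 0) : ContinuousAt unitVec y :=
  (continuousAt_id.norm.inv₀ (norm_ne_zero_iff.2 hy)).smul continuousAt_id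

lemma inner_unitVec (a y : Eu N) : ⟪a, unitVec y⟫ = ‖y‖⁻¹ * ⟪a, y⟫ := inner_smul_right _ _ _

/-- Two distinct points of equal norm are exchanged by the reflection along their difference. -/
lemma reflHyp_unitVec_sub {x y : Eu N} (hxy : ‖x‖ = ‖y‖) (hne : x ≠ y) :
    reflHyp (unitVec (x - y)) x = y ∧ 0 < ⟪x, unitVec (x - y)⟫ := by
  have hw : 0 < ‖x - y‖ := norm_pos_iff.2 (sub_ne_zero.2 hne)
  have h1 : ⟪x, x - y⟫ = ‖x - y‖ ^ 2 / 2 := by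
    rw [norm_sub_sq_real, inner_sub_right, real_inner_self_eq_norm_sq, ← hxy]
    ring
  have h2 : ⟪x, unitVec (x - y)⟫ = ‖x - y‖ / 2 := by
    rw [inner_unitVec, h1]; field_simp
  refine ⟨?_, by rw [h2]; positivity⟩
  rw [reflHyp, h2, unitVec, smul_smul]
  have : 2 * (‖x - y‖ / 2) * ‖x - y‖⁻¹ = 1 := by field_simp
  rw [this, one_smul, sub_sub_cancel]

lemma reflHyp_neg_left (e x : Eu N) : reflHyp (-e) x = reflHyp e x := by
  simp [reflHyp]

lemma reflHyp_conj {f : Eu N} (hf : ‖f‖ = 1) (e x : Eu N) :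
    reflHyp (reflHyp f e) x = reflHyp f (reflHyp e (reflHyp f x)) := by
  have h1 : ⟪x, reflHyp f e⟫ = ⟪reflHyp f x, e⟫ := (inner_reflHyp f x e).symm
  rw [reflHyp, h1]
  conv_rhs => rw [reflHyp.eq_def e, ← reflL_apply f, map_sub, map_smul, reflL_apply, reflL_apply,
    reflHyp_reflHyp hf]

lemma isClosed_omegaReflSet {B : Set (Eu N)} (K : RadData B) (u : Eu N → ℝ → ℝ) :
    IsClosed (omegaReflSet B u) := by
  refine isClosed_of_closure_subset fun e he => ?_
  have hne : (𝓝[omegaReflSet B u] e).NeBot := mem_closure_iff_nhdsWithin_neBot.1 he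
  have he1 : ‖e‖ = 1 := by
    have hc : IsClosed {e : Eu N | ‖e‖ = 1} := isClosed_eq continuous_norm continuous_const
    exact closure_minimal (fun e he => he.1) hc he
  refine ⟨he1, fun z hz x hx => ?_⟩
  have hz' : ContinuousAt z (reflHyp e x) :=
    hz.1.continuousAt (mem_of_superset (K.isOpen.mem_nhds (K.refl_mem he1 x hx.1)) subset_closure)
  have h1 : ContinuousAt (fun e' : Eu N => reflHyp e' x) e := by
    unfold reflHyp; fun_prop
  have h2 : Tendsto (fun e' => z (reflHyp e' x)) (𝓝[omegaReflSet B u] e) (𝓝 (z (reflHyp e x))) :=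
    (ContinuousAt.comp (f := fun e' : Eu N => reflHyp e' x) hz' h1).mono_left nhdsWithin_le_nhds
  have h3 : ∀ᶠ e' in 𝓝[omegaReflSet B u] e, 0 < ⟪x, e'⟫ := nhdsWithin_le_nhds
    ((isOpen_lt continuous_const (by fun_prop : Continuous fun e' : Eu N => ⟪x, e'⟫)).mem_nhds hx.2)
  refine le_of_tendsto h2 ?_
  filter_upwards [h3, self_mem_nhdsWithin] with e' h4 h5
  exact h5.2 z hz x ⟨hx.1, h4⟩

lemma foliated_of_mem {B : Set (Eu N)} (K : RadData B) {u : Eu N → ℝ → ℝ} {p : Eu N}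
    (h : ∀ w : Eu N, w ≠ 0 → 0 ≤ ⟪w, p⟫ → unitVec w ∈ omegaReflSet B u)
    {z : Eu N → ℝ} (hz : z ∈ omegaLimitSet B u) : FoliatedSchwarzOn (closure B) z p := by
  intro x hx y _ hxy hp
  by_cases hne : x = y
  · rw [hne]
  obtain ⟨h1, h2⟩ := reflHyp_unitVec_sub hxy hne
  have h3 := h (x - y) (sub_ne_zero.2 hne) (by rw [inner_sub_left]; linarith)
  have h4 := refl_le_of_mem_halfClo K h3.1 hz.1 (h3.2 z hz) ⟨hx, h2.le⟩
  rwa [h1] at h4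

/-- If some limit profile has a non-zero moment `m`, the set of admissible directions contains the
closed hemisphere around `m`: within the open hemisphere it is closed, and open by the stability
hypothesis. -/
lemma foliated_of_moment_ne {B : Set (Eu N)} (K : RadData B) {u : Eu N → ℝ → ℝ}
    (hstab : ∀ e ∈ omegaReflSet B u, ∀ z ∈ omegaLimitSet B u,
      (∃ x ∈ halfDom B e, z (reflHyp e x) ≠ z x) →
      ∃ ε > 0, ∀ e' : Eu N, ‖e'‖ = 1 → ‖e' - e‖ < ε → e' ∈ omegaReflSet B u)
    {e₀ : Eu N} (he₀ : ‖e₀‖ = 1) {ε₀ : ℝ} (hε₀ : 0 < ε₀)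
    (h₀ : ∀ e' : Eu N, ‖e'‖ = 1 → ‖e' - e₀‖ < ε₀ → e' ∈ omegaReflSet B u)
    {z : Eu N → ℝ} (hz : z ∈ omegaLimitSet B u) (hm : moment B z ≠ 0) :
    ∃ p : Eu N, ‖p‖ = 1 ∧ ∀ z ∈ omegaLimitSet B u, FoliatedSchwarzOn (closure B) z p := by
  set m := moment B z with hmdef
  have hopen : ∀ y : Eu N, y ≠ 0 → ∀ ε > 0, (∀ e' : Eu N, ‖e'‖ = 1 → ‖e' - unitVec y‖ < ε →
      e' ∈ omegaReflSet B u) → ∀ᶠ w in 𝓝 y, unitVec w ∈ omegaReflSet B u := by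
    intro y hy ε hε h
    filter_upwards [continuousAt_unitVec hy (ball_mem_nhds _ hε), isOpen_ne.mem_nhds hy]
      with w h1 h2
    exact h _ (norm_unitVec h2) (by simpa [dist_eq_norm] using h1)
  have hne₀ : e₀ ≠ 0 := by rintro rfl; simp at he₀
  have hpos₀ : 0 < ⟪m, e₀⟫ := by
    have h1 : Tendsto (fun s : ℝ => e₀ - s • m) (𝓝[>] 0) (𝓝 e₀) := by
      have : Continuous fun s : ℝ => e₀ - s • m := by fun_prop
      have h2 := this.tendsto 0
      simp only [zero_smul, sub_zero] at h2
      exact h2.mono_left nhdsWithin_le_nhds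
    have h2 := h1.eventually (hopen e₀ hne₀ ε₀ hε₀ (by rwa [unitVec_of_norm he₀]))
    obtain ⟨s, ⟨h3, h5⟩, h4⟩ := ((h2.and (h1.eventually (isOpen_ne.mem_nhds hne₀))).and
      self_mem_nhdsWithin).exists
    have h6 := inner_moment_nonneg K hz.1 h3.1 (h3.2 z hz)
    have h7 : 0 ≤ ⟪m, e₀ - s • m⟫ := by
      rw [inner_unitVec] at h6
      exact nonneg_of_mul_nonneg_right h6 (inv_pos.2 (norm_pos_iff.2 h5))
    rw [inner_sub_right, inner_smul_right, real_inner_self_eq_norm_sq] at h7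
    have h8 : 0 < s * ‖m‖ ^ 2 := mul_pos h4 (by positivity)
    linarith
  have hcone : {y : Eu N | 0 < ⟪m, y⟫} ⊆ {y | 0 < ⟪m, y⟫ ∧ unitVec y ∈ omegaReflSet B u} := by
    have hconv : Convex ℝ {y : Eu N | 0 < ⟪m, y⟫} :=
      convex_halfSpace_gt (f := fun y : Eu N => ⟪m, y⟫) (innerSL ℝ m).toLinearMap.isLinear 0
    have hne : ∀ y : Eu N, 0 < ⟪m, y⟫ → y ≠ 0 := by rintro y hy rfl; simp at hy
    refine hconv.isPreconnected.subset_of_closure_inter_subset ?_ ⟨e₀, hpos₀, hpos₀, ?_⟩ ?_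
    · rw [isOpen_iff_mem_nhds]
      rintro y ⟨hy1, hy2⟩
      have hpos : 0 < ⟪m, unitVec y⟫ := by
        rw [inner_unitVec]; exact mul_pos (inv_pos.2 (norm_pos_iff.2 (hne y hy1))) hy1
      have hasym : ∃ x ∈ halfDom B (unitVec y), z (reflHyp (unitVec y) x) ≠ z x := by
        by_contra! hcon
        have h1 := two_inner_moment K hz.1 hy2.1
        have h2 : ∫ x in B, (z x - z (reflHyp (unitVec y) x)) * ⟪x, unitVec y⟫ = 0 := by
          refine MeasureTheory.setIntegral_eq_zero_of_forall_eq_zero fun x hx => ?_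
          rcases lt_trichotomy ⟪x, unitVec y⟫ 0 with h0 | h0 | h0
          · have h3 := hcon (reflHyp (unitVec y) x)
              ⟨K.refl_mem hy2.1 x hx, by rw [inner_reflHyp_self hy2.1]; linarith⟩
            rw [reflHyp_reflHyp hy2.1] at h3
            simp [h3]
          · simp [h0]
          · simp [hcon x ⟨hx, h0⟩]
        linarith
      obtain ⟨ε, hε, h⟩ := hstab _ hy2 z hz hasym
      have ho : IsOpen {y : Eu N | 0 < ⟪m, y⟫} := isOpen_lt continuous_const (by fun_prop)
      exact inter_mem (ho.mem_nhds hy1) (hopen y (hne y hy1) ε hε h)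
    · exact h₀ _ (norm_unitVec hne₀) (by rw [unitVec_of_norm he₀]; simpa using hε₀)
    · rintro y ⟨hy1, hy2⟩
      refine ⟨hy2, ?_⟩
      rw [← (isClosed_omegaReflSet K u).closure_eq]
      exact (continuousAt_unitVec (hne y hy2)).continuousWithinAt.mem_closure hy1
        fun w hw => hw.2
  refine ⟨unitVec m, norm_unitVec hm, fun y hy => foliated_of_mem K (fun w hw0 hw => ?_) hy⟩
  have hw' : 0 ≤ ⟪m, w⟫ := by
    rw [inner_unitVec, real_inner_comm] at hw
    exact nonneg_of_mul_nonneg_right hw (inv_pos.2 (norm_pos_iff.2 hm))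
  rw [← (isClosed_omegaReflSet K u).closure_eq]
  -- directions on the boundary of the hemisphere are limits of interior ones
  have h1 : Tendsto (fun s : ℝ => w + s • m) (𝓝[>] 0) (𝓝 w) := by
    have : Continuous fun s : ℝ => w + s • m := by fun_prop
    have h2 := this.tendsto 0
    simp only [zero_smul, add_zero] at h2
    exact h2.mono_left nhdsWithin_le_nhds
  refine mem_closure_of_tendsto ((continuousAt_unitVec hw0).tendsto.comp h1) ?_
  filter_upwards [self_mem_nhdsWithin] with s hs
  refine (hcone ?_).2
  simp only [mem_ofPred_eq, inner_add_right, inner_smul_right, real_inner_self_eq_norm_sq]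
  have h8 : 0 < s * ‖m‖ ^ 2 := mul_pos hs (by positivity)
  linarith

/-- If all moments vanish, every admissible direction is a symmetry direction. A neighbourhood of
symmetry directions of uniform size propagates over the whole sphere by reflections. -/
lemma foliated_of_moment_eq {B : Set (Eu N)} (hN : 2 ≤ N) (K : RadData B) {u : Eu N → ℝ → ℝ}
    {e₀ : Eu N} (he₀ : ‖e₀‖ = 1) {ε₀ : ℝ} (hε₀ : 0 < ε₀)
    (h₀ : ∀ e' : Eu N, ‖e'‖ = 1 → ‖e' - e₀‖ < ε₀ → e' ∈ omegaReflSet B u)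
    (hm : ∀ z ∈ omegaLimitSet B u, moment B z = 0) :
    ∃ p : Eu N, ‖p‖ = 1 ∧ ∀ z ∈ omegaLimitSet B u, FoliatedSchwarzOn (closure B) z p := by
  set Sym : Set (Eu N) :=
    {e | ‖e‖ = 1 ∧ ∀ z ∈ omegaLimitSet B u, ∀ x ∈ B, z (reflHyp e x) = z x} with hSym
  have hneg : ∀ e ∈ Sym, -e ∈ Sym := fun e he =>
    ⟨by rw [norm_neg, he.1], fun z hz x hx => by rw [reflHyp_neg_left]; exact he.2 z hz x hx⟩
  have hconj : ∀ f ∈ Sym, ∀ e ∈ Sym, reflHyp f e ∈ Sym := fun f hf e he =>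
    ⟨by rw [norm_reflHyp hf.1, he.1], fun z hz x hx => by
      have hx1 := K.refl_mem hf.1 x hx
      rw [reflHyp_conj hf.1, hf.2 z hz _ (K.refl_mem he.1 _ hx1), he.2 z hz _ hx1,
        hf.2 z hz _ hx]⟩
  set ε := min ε₀ 1 with hε
  have hεpos : 0 < ε := lt_min hε₀ one_pos
  set S' : Set (Eu N) := {s | ‖s‖ = 1 ∧ ∀ e' : Eu N, ‖e'‖ = 1 → ‖e' - s‖ < ε → e' ∈ Sym} with hS'
  have he₀S : e₀ ∈ S' := ⟨he₀, fun e' he' hee => by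
    have h1 := h₀ e' he' (hee.trans_le (min_le_left _ _))
    exact ⟨he', fun z hz x hx => eq_refl_of_inner_moment K hz.1 he' (h1.2 z hz)
      (by rw [hm z hz, inner_zero_left]) hx⟩⟩
  have hstep : ∀ s ∈ S', ∀ s' : Eu N, ‖s'‖ = 1 → ‖s' - s‖ < ε → s' ∈ S' := by
    intro s hs s' hs' hss
    refine ⟨hs', fun e' he' hee => ?_⟩
    -- `f` is the midpoint of `s` and `s'` on the sphere; `-σ_f` exchanges `s` and `s'`
    set n := ‖s + s'‖ with hn
    have hc : ‖s' - s‖ ^ 2 = 2 - 2 * ⟪s, s'⟫ := by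
      rw [norm_sub_sq_real, hs', hs.1, real_inner_comm]; ring
    have hn2 : n ^ 2 = 2 + 2 * ⟪s, s'⟫ := by
      rw [hn, norm_add_sq_real, hs', hs.1]; ring
    have hss1 : ‖s' - s‖ < 1 := hss.trans_le (min_le_right _ _)
    have hn0 : 0 ≤ n := norm_nonneg _
    have hnpos : 0 < n := by
      refine lt_of_le_of_ne hn0 fun h => ?_
      rw [← h] at hn2
      nlinarith [norm_nonneg (s' - s)]
    have hn_le : n ≤ 2 := (norm_add_le _ _).trans (by rw [hs', hs.1]; norm_num)
    set f := unitVec (s + s') with hf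
    have hf1 : ‖f‖ = 1 := norm_unitVec (norm_pos_iff.1 hnpos)
    have hsf : ⟪s, f⟫ = n / 2 := by
      rw [hf, inner_unitVec, inner_add_right, real_inner_self_eq_norm_sq, hs.1, ← hn]
      field_simp
      linarith
    have hfS : f ∈ Sym := by
      refine hs.2 f hf1 (lt_of_le_of_lt ?_ hss)
      refine le_of_sq_le_sq ?_ (norm_nonneg _)
      rw [norm_sub_sq_real, hf1, hs.1, hc, real_inner_comm, hsf]
      nlinarith
    have hrefl : reflHyp f s = -s' := by
      rw [reflHyp, hsf, hf, unitVec, smul_smul, ← hn]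
      have : 2 * (n / 2) * n⁻¹ = 1 := by field_simp
      rw [this, one_smul]; abel
    have h1 : -reflHyp f e' ∈ Sym := by
      refine hs.2 _ (by rw [norm_neg, norm_reflHyp hf1, he']) ?_
      have h2 : -reflHyp f e' - s = -(reflHyp f (e' - s')) := by
        have h3 : s = reflHyp f (-s') := by rw [← hrefl, reflHyp_reflHyp hf1]
        conv_lhs => rw [h3]
        simp only [← reflL_apply, map_neg, map_sub]
        abel
      rw [h2, norm_neg, norm_reflHyp hf1]
      exact hee
    have h2 := hconj f hfS _ (hneg _ h1)
    rwa [neg_neg, reflHyp_reflHyp hf1] at h2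
  have hall : sphere (0 : Eu N) 1 ⊆ thickening (ε / 4) S' := by
    have hrank : 1 < Module.rank ℝ (Eu N) :=
      Module.lt_rank_of_lt_finrank (by rw [finrank_euclideanSpace_fin]; omega)
    refine (isPreconnected_sphere hrank 0 1).subset_of_closure_inter_subset isOpen_thickening
      ⟨e₀, by simpa using he₀, self_subset_thickening (by positivity) _ he₀S⟩ ?_
    rintro y ⟨hy1, hy2⟩
    obtain ⟨w, hw, hyw⟩ := Metric.mem_closure_iff.1 hy1 (ε / 4) (by positivity)
    obtain ⟨s, hs, hws⟩ := mem_thickening_iff.1 hw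
    refine self_subset_thickening (by positivity) _ (hstep s hs y (by simpa using hy2) ?_)
    rw [← dist_eq_norm]
    linarith [dist_triangle y w s]
  refine ⟨e₀, he₀, fun z hz => foliated_of_mem K (fun w hw _ => ?_) hz⟩
  have hw1 := norm_unitVec hw
  obtain ⟨s, hs, hws⟩ := mem_thickening_iff.1 (hall (by simpa using hw1 : unitVec w ∈ _))
  have h1 := hs.2 _ hw1 (by rw [← dist_eq_norm]; linarith)
  exact ⟨hw1, fun y hy x hx => (h1.2 y hy x hx.1).le⟩

/-- Theorem `teodirichlet` of the paper:
asymptotic foliated Schwarz symmetry for the fully nonlinear parabolic problem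
`u_t = F(t,x,u,∇u,D²u)` in `B × (0,∞)`, `u = 0` on `∂B × (0,∞)`, `u(·,0) = u₀`,
under hypotheses (F1)–(F4) on `F`, the reflection hypothesis (U1) on `u₀` and
uniform boundedness (U2). -/
theorem asymptotic_foliated_schwarz_symmetry_fully_nonlinear
    (N : ℕ) (hN : 2 ≤ N)
    (B : Set (EuclideanSpace ℝ (Fin N))) (hB : IsRadialDomain B)
    (𝓑 : Set (ℝ × EuclideanSpace ℝ (Fin N) × (Fin N → Fin N → ℝ)))
    (h𝓑open : IsOpen 𝓑) (h𝓑conv : Convex ℝ 𝓑)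
    (h𝓑zero : ((0:ℝ), (0 : EuclideanSpace ℝ (Fin N)), (0 : Fin N → Fin N → ℝ)) ∈ 𝓑)
    (F : ℝ → EuclideanSpace ℝ (Fin N) →
      (ℝ × EuclideanSpace ℝ (Fin N) × (Fin N → Fin N → ℝ)) → ℝ)
    -- (F1) reflection invariance
    (hF1dom : ∀ e : EuclideanSpace ℝ (Fin N), ‖e‖ = 1 → ∀ x ∈ B,
      ∀ v : ℝ, ∀ p : EuclideanSpace ℝ (Fin N), ∀ q : Fin N → Fin N → ℝ,
      (v, p, q) ∈ 𝓑 →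
      reflHyp e x ∈ B ∧ (v, reflHyp e p, matConj (reflMat e) q) ∈ 𝓑)
    (hF1sym : ∀ e : EuclideanSpace ℝ (Fin N), ‖e‖ = 1 → ∀ t ∈ Ioi (0:ℝ), ∀ x ∈ B,
      ∀ v : ℝ, ∀ p : EuclideanSpace ℝ (Fin N), ∀ q : Fin N → Fin N → ℝ,
      (v, p, q) ∈ 𝓑 →
      F t (reflHyp e x) (v, reflHyp e p, matConj (reflMat e) q) = F t x (v, p, q))
    -- (F2) regularity: continuity, uniform Lipschitz continuity in (u,p,q),
    -- differentiability with respect to the matrix variable q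
    (hF_cont : ContinuousOn (fun z : ℝ × EuclideanSpace ℝ (Fin N) ×
        (ℝ × EuclideanSpace ℝ (Fin N) × (Fin N → Fin N → ℝ)) => F z.1 z.2.1 z.2.2)
      (Ici 0 ×ˢ closure B ×ˢ 𝓑))
    (hF_lip : ∃ L > (0:ℝ), ∀ t ∈ Ici (0:ℝ), ∀ x ∈ B, ∀ P ∈ 𝓑, ∀ P' ∈ 𝓑,
      |F t x P - F t x P'| ≤ L * ‖P - P'‖)
    (Fq : ℝ → EuclideanSpace ℝ (Fin N) →
      (ℝ × EuclideanSpace ℝ (Fin N) × (Fin N → Fin N → ℝ)) →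
      ((Fin N → Fin N → ℝ) →L[ℝ] ℝ))
    (hFq : ∀ t ∈ Ici (0:ℝ), ∀ x ∈ B,
      ∀ v : ℝ, ∀ p : EuclideanSpace ℝ (Fin N), ∀ q : Fin N → Fin N → ℝ,
      (v, p, q) ∈ 𝓑 →
      HasFDerivAt (fun q' => F t x (v, p, q')) (Fq t x (v, p, q)) q)
    -- (F3) boundedness of F(·,·,0,0,0)
    (hF3 : ∃ C : ℝ, ∀ t ∈ Ici (0:ℝ), ∀ x ∈ B,
      |F t x ((0:ℝ), (0 : EuclideanSpace ℝ (Fin N)), (0 : Fin N → Fin N → ℝ))| ≤ C)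
    -- (F4) uniform ellipticity: ∂_{q_ij}F ξᵢξⱼ ≥ α₀ |ξ|²
    (α₀ : ℝ) (hα₀ : 0 < α₀)
    (hF4 : ∀ t ∈ Ici (0:ℝ), ∀ x ∈ B, ∀ P ∈ 𝓑, ∀ ξ : Fin N → ℝ,
      α₀ * (∑ i, ξ i ^ 2) ≤ Fq t x P (fun i j => ξ i * ξ j))
    -- the solution and its derivatives
    (u : EuclideanSpace ℝ (Fin N) → ℝ → ℝ)
    (u₀ : EuclideanSpace ℝ (Fin N) → ℝ)
    (ut : EuclideanSpace ℝ (Fin N) → ℝ → ℝ)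
    (Du : EuclideanSpace ℝ (Fin N) → ℝ → (EuclideanSpace ℝ (Fin N) →L[ℝ] ℝ))
    (D2u : EuclideanSpace ℝ (Fin N) → ℝ →
      (EuclideanSpace ℝ (Fin N) →L[ℝ] EuclideanSpace ℝ (Fin N) →L[ℝ] ℝ))
    -- u ∈ C(B̄ × [0,∞))
    (hu_cont : ContinuousOn (fun p : EuclideanSpace ℝ (Fin N) × ℝ => u p.1 p.2)
      (closure B ×ˢ Ici 0))
    -- u ∈ C^{2,1}(B × (0,∞)): the derivatives exist and are continuous there
    (hut : ∀ x ∈ B, ∀ t ∈ Ioi (0:ℝ), HasDerivAt (fun s => u x s) (ut x t) t)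
    (hDu : ∀ x ∈ B, ∀ t ∈ Ioi (0:ℝ), HasFDerivAt (fun y => u y t) (Du x t) x)
    (hD2u : ∀ x ∈ B, ∀ t ∈ Ioi (0:ℝ), HasFDerivAt (fun y => Du y t) (D2u x t) x)
    (hreg : ContinuousOn (fun p : EuclideanSpace ℝ (Fin N) × ℝ =>
      (ut p.1 p.2, Du p.1 p.2, D2u p.1 p.2)) (B ×ˢ Ioi 0))
    -- the equation u_t = F(t,x,u,∇u,D²u) in B × (0,∞), with values in 𝓑
    (hdom : ∀ x ∈ B, ∀ t ∈ Ioi (0:ℝ),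
      (u x t, gradVec (Du x t), hessMat (D2u x t)) ∈ 𝓑)
    (hPDE : ∀ x ∈ B, ∀ t ∈ Ioi (0:ℝ),
      ut x t = F t x (u x t, gradVec (Du x t), hessMat (D2u x t)))
    -- the boundary condition u = 0 on ∂B × (0,∞)
    (hbc : ∀ x ∈ frontier B, ∀ t ∈ Ioi (0:ℝ), u x t = 0)
    -- the initial condition u(·,0) = u₀
    (hinit : ∀ x ∈ closure B, u x 0 = u₀ x)
    -- (U2): uniform boundedness
    (hU2 : ∃ C : ℝ, ∀ t ∈ Ici (0:ℝ), ∀ x ∈ closure B, |u x t| ≤ C)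
    -- (U1): reflection inequality for the initial profile
    (hU1 : ∃ e : EuclideanSpace ℝ (Fin N), ‖e‖ = 1 ∧
      (∀ x ∈ halfDom B e, u₀ (reflHyp e x) ≤ u₀ x) ∧
      (∃ x ∈ halfDom B e, u₀ (reflHyp e x) ≠ u₀ x)) :
    ∃ p : EuclideanSpace ℝ (Fin N), ‖p‖ = 1 ∧
      ∀ z ∈ omegaLimitSet B u, FoliatedSchwarzOn (closure B) z p := by
  obtain ⟨K⟩ := radData_exists hB
  obtain ⟨L, hL, hlip⟩ := hF_lip
  have hV : ∀ e : Eu N, ‖e‖ = 1 → IsVSol (halfClo B e) (halfDom B e) L α₀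
      (fun x t => u x t - u (reflHyp e x) t) := fun e he =>
    isVSol_refl K.isOpen h𝓑open h𝓑conv he (K.refl_mem he) (hF1dom e he) (hF1sym e he) hL.le hlip
      hFq hα₀ hF4 hu_cont hut hDu hD2u hdom hPDE hbc
  have hstab : ∀ e ∈ omegaReflSet B u, ∀ z ∈ omegaLimitSet B u,
      (∃ x ∈ halfDom B e, z (reflHyp e x) ≠ z x) →
      ∃ ε > 0, ∀ e' : Eu N, ‖e'‖ = 1 → ‖e' - e‖ < ε → e' ∈ omegaReflSet B u := by
    rintro e he z hz ⟨x, hx, hne⟩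
    obtain ⟨ε, hε, h⟩ := refl_stable K hL hα₀ hV hz.1 he.1 (he.2 z hz) hx hne
    obtain ⟨_, t, ht, hlim⟩ := hz
    obtain ⟨n₀, hn₀⟩ := hlim ε hε
    obtain ⟨n, hn, htn⟩ := ((eventually_ge_atTop n₀).and (ht.eventually_ge_atTop 0)).exists
    exact ⟨ε, hε, fun e' he' hee => h e' he' hee (t n) htn (hn₀ n hn)⟩
  obtain ⟨e₀, he₀, hle, x₀, hx₀, hne⟩ := hU1
  have hu₀ : ContinuousOn u₀ (closure B) := by
    have h1 : ContinuousOn (fun x : Eu N => u x 0) (closure B) :=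
      hu_cont.comp (f := fun x : Eu N => (x, (0:ℝ))) (by fun_prop) fun x hx => ⟨hx, self_mem_Ici⟩
    exact h1.congr fun x hx => (hinit x hx).symm
  obtain ⟨ε₀, hε₀, h₀⟩ := refl_stable K hL hα₀ hV hu₀ he₀ hle hx₀ hne
  have h₀' : ∀ e' : Eu N, ‖e'‖ = 1 → ‖e' - e₀‖ < ε₀ → e' ∈ omegaReflSet B u :=
    fun e' he' hee => h₀ e' he' hee 0 le_rfl fun x hx => by
      rw [hinit x hx, sub_self, abs_zero]; exact hε₀.le
  by_cases hm : ∃ z ∈ omegaLimitSet B u, moment B z ≠ 0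
  · obtain ⟨z, hz, hmz⟩ := hm
    exact foliated_of_moment_ne K hstab he₀ hε₀ h₀' hz hmz
  · push Not at hm
    exact foliated_of_moment_eq hN K he₀ hε₀ h₀' hm

end
end

section
/- Let v ∈ C(ℝ) be an even and 2π-periodic function, and let 𝓡 = {η ∈ ℝ : v(η+φ) = v(η−φ) for all φ ∈ ℝ} be the set of points of reflectional symmetry of v. Suppose that for some η ∈ ℝ one has v(η+φ) ≥ v(η−φ) for all φ ∈ [0,π], and v(η+φ₀) > v(η−φ₀) for some φ₀ ∈ (0,π). Then 𝓡 = {nπ : n ∈ ℤ}. -/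
/-!
A symmetry point `η'` of the even function `v` makes `2η'` a period of `v`. If `η'` is not a
multiple of `π`, then subtracting a multiple of `2π` and possibly changing sign gives a period
`T` with `0 < T ≤ π`. The difference `v (η + x) - v (η - x)` also has period `T`; by hypothesis
it is nonnegative on `[0, π]`, hence by oddness and `2π`-periodicity it is nonpositive on
`[π, 2π]`. Steps of length `T ≤ π` starting from `φ₀ < π` cannot jump over `[π, 2π]`, so the
positive value at `φ₀` reappears there, which is absurd (`not_periodic_of_le_pi`).
-/

/-- Under the one-sided comparison at `η`, the function `v` has no period in `(0, π]`. -/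
lemma not_periodic_of_le_pi {v : ℝ → ℝ} (hper : Function.Periodic v (2 * Real.pi)) {η : ℝ}
    (hmono : ∀ φ ∈ Set.Icc (0 : ℝ) Real.pi, v (η - φ) ≤ v (η + φ))
    (hstrict : ∃ φ₀ ∈ Set.Ioo (0 : ℝ) Real.pi, v (η - φ₀) < v (η + φ₀))
    {T : ℝ} (hT0 : 0 < T) (hTpi : T ≤ Real.pi) : ¬ Function.Periodic v T := by
  intro hT
  obtain ⟨φ₀, ⟨-, -⟩, hlt⟩ := hstrict
  -- The least `k` with `φ₀ + k * T ≥ π`; then `φ₀ + k * T < π + T ≤ 2π`.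
  set k : ℤ := ⌈(Real.pi - φ₀) / T⌉ with hk
  have h1 : Real.pi - φ₀ ≤ k * T := (div_le_iff₀ hT0).1 (Int.le_ceil _)
  have h2 : k * T < Real.pi - φ₀ + T := by
    have h := mul_lt_mul_of_pos_right (Int.ceil_lt_add_one ((Real.pi - φ₀) / T)) hT0
    rwa [add_mul, div_mul_cancel₀ _ hT0.ne', one_mul] at h
  have hle := hmono (2 * Real.pi - (φ₀ + k * T)) ⟨by linarith, by linarith⟩
  have e1 : v (η - (2 * Real.pi - (φ₀ + k * T))) = v (η + φ₀) := by
    rw [show η - (2 * Real.pi - (φ₀ + k * T)) = η + φ₀ + k * T - 2 * Real.pi by ring,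
      hper.sub_eq, hT.int_mul k (η + φ₀)]
  have e2 : v (η + (2 * Real.pi - (φ₀ + k * T))) = v (η - φ₀) := by
    rw [show η + (2 * Real.pi - (φ₀ + k * T)) = η - φ₀ - k * T + 2 * Real.pi by ring,
      hper, (hT.int_mul k).sub_eq (η - φ₀)]
  linarith

/-- Lemma `lemma1` of the paper:
Let `v ∈ C(ℝ)` be even and `2π`-periodic, and let
`𝓡 = {η : v(η+φ) = v(η−φ) for all φ}` be its set of points of reflectional
symmetry.  If for some `η` one has `v(η+φ) ≥ v(η−φ)` for all `φ ∈ [0,π]` and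
`v(η+φ₀) > v(η−φ₀)` for some `φ₀ ∈ (0,π)`, then `𝓡 = {nπ : n ∈ ℤ}`. -/
theorem reflection_symmetry_points_eq_integer_multiples_of_pi
    (v : ℝ → ℝ) (hv : Continuous v)
    (heven : ∀ φ : ℝ, v (-φ) = v φ)
    (hper : ∀ φ : ℝ, v (φ + 2 * Real.pi) = v φ)
    (η : ℝ)
    (hmono : ∀ φ ∈ Set.Icc (0 : ℝ) Real.pi, v (η - φ) ≤ v (η + φ))
    (hstrict : ∃ φ₀ ∈ Set.Ioo (0 : ℝ) Real.pi, v (η - φ₀) < v (η + φ₀)) :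
    {η' : ℝ | ∀ φ : ℝ, v (η' + φ) = v (η' - φ)} =
      {x : ℝ | ∃ n : ℤ, x = n * Real.pi} := by
  have hper' : Function.Periodic v (2 * Real.pi) := hper
  ext x
  simp only [Set.mem_setOf_eq]
  constructor
  · intro hx
    have hP : Function.Periodic v (2 * x) := fun y => by
      rw [show y + 2 * x = x + (x + y) by ring, hx, ← heven]
      congr 1
      ring
    set n : ℤ := round (2 * x / (2 * Real.pi)) with hn
    -- The representative of the period `2x` modulo `2π` of least absolute value.
    set T : ℝ := 2 * x - n * (2 * Real.pi) with hTdef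
    have hT : Function.Periodic v T := hP.sub_period (hper'.int_mul n)
    have hpi := Real.pi_pos
    have habs : |T| ≤ Real.pi := by
      have h := abs_sub_round (2 * x / (2 * Real.pi))
      have e : T = (2 * x / (2 * Real.pi) - n) * (2 * Real.pi) := by
        rw [hTdef]
        field_simp
      rw [e, abs_mul, abs_of_pos (by positivity : 0 < 2 * Real.pi)]
      nlinarith
    rcases lt_trichotomy T 0 with h | h | h
    · rw [abs_of_neg h] at habs
      exact absurd hT.neg (not_periodic_of_le_pi hper' hmono hstrict (by linarith) habs)
    · exact ⟨n, by linarith⟩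
    · rw [abs_of_pos h] at habs
      exact absurd hT (not_periodic_of_le_pi hper' hmono hstrict h habs)
  · rintro ⟨n, rfl⟩ φ
    rw [← heven, ← hper'.int_mul n]
    congr 1
    ring
end

section
/- Let v ∈ C(ℝ) be even, 2π-periodic and non-constant. Then the set 𝓡 = {η ∈ ℝ : v(η+φ) = v(η−φ) for all φ ∈ ℝ} of points of reflectional symmetry of v equals {nπ/k : n ∈ ℤ} for some positive integer k. -/
/-!
Since `v` is even, `η` is a point of reflectional symmetry exactly when `2 * η` is a period of `v`
(`symmetric_iff_double_period`). Hence these points form an additive subgroup of `ℝ`, and it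
contains `π`. A subgroup of `ℝ` is dense or cyclic. If it were dense, the closed set
`{x | v (2 * x) = v 0}` would be dense too, and `v` would be constant. So the subgroup is `ℤ a`
with `π = m a` for some nonzero integer `m`, and `k = |m|` works.
-/

theorem symmetric_iff_double_period (v : ℝ → ℝ) (heven : ∀ φ : ℝ, v (-φ) = v φ) (η : ℝ) :
    (∀ φ : ℝ, v (η + φ) = v (η - φ)) ↔ ∀ φ : ℝ, v (φ + 2 * η) = v φ := by
  constructor
  · intro h φ
    have h1 := h (φ + η)
    rw [show η + (φ + η) = φ + 2 * η by ring, show η - (φ + η) = -φ by ring, heven] at h1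
    exact h1
  · intro h φ
    have h1 := h (φ - η)
    rw [show φ - η + 2 * η = η + φ by ring, ← heven (φ - η), neg_sub] at h1
    exact h1

/-- The subgroup of half-periods of `v`: the reals `x` such that `2 * x` is a period of `v`. -/
def halfPeriods (v : ℝ → ℝ) : AddSubgroup ℝ where
  carrier := {x | ∀ φ : ℝ, v (φ + 2 * x) = v φ}
  zero_mem' := by simp
  add_mem' := by
    intro a b ha hb φ
    rw [show φ + 2 * (a + b) = (φ + 2 * a) + 2 * b by ring, hb, ha]
  neg_mem' := by
    intro a ha φ
    rw [← ha (φ + 2 * -a)]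
    congr 1
    ring

theorem mem_halfPeriods (v : ℝ → ℝ) (x : ℝ) :
    x ∈ halfPeriods v ↔ ∀ φ : ℝ, v (φ + 2 * x) = v φ := Iff.rfl

theorem constant_of_dense_halfPeriods (v : ℝ → ℝ) (hv : Continuous v)
    (hd : Dense (halfPeriods v : Set ℝ)) (φ : ℝ) : v φ = v 0 := by
  have hcl : IsClosed {x : ℝ | v (2 * x) = v 0} :=
    isClosed_eq (by fun_prop) continuous_const
  have hsub : (halfPeriods v : Set ℝ) ⊆ {x : ℝ | v (2 * x) = v 0} := by
    intro x hx
    simpa using hx 0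
  have h : φ / 2 ∈ {x : ℝ | v (2 * x) = v 0} := hcl.closure_subset_iff.mpr hsub (hd _)
  have h2 : v (2 * (φ / 2)) = v 0 := h
  rwa [mul_div_cancel₀ φ two_ne_zero] at h2

/-- Let `v ∈ C(ℝ)` be even, `2π`-periodic and non-constant.  Then the set
`𝓡 = {η : v(η+φ) = v(η−φ) for all φ}` of points of reflectional symmetry of `v`
equals `{nπ/k : n ∈ ℤ}` for some positive integer `k`. -/
theorem reflection_symmetry_points_eq_pi_div_k
    (v : ℝ → ℝ) (hv : Continuous v)
    (heven : ∀ φ : ℝ, v (-φ) = v φ)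
    (hper : ∀ φ : ℝ, v (φ + 2 * Real.pi) = v φ)
    (hnonconst : ¬ ∃ c : ℝ, ∀ φ : ℝ, v φ = c) :
    ∃ k : ℕ, 0 < k ∧
      {η : ℝ | ∀ φ : ℝ, v (η + φ) = v (η - φ)} =
        {x : ℝ | ∃ n : ℤ, x = n * Real.pi / k} := by
  obtain ⟨a, ha⟩ := (halfPeriods v).dense_or_cyclic.resolve_left fun hd =>
    hnonconst ⟨v 0, constant_of_dense_halfPeriods v hv hd⟩
  have hmem : ∀ x, x ∈ halfPeriods v ↔ ∃ n : ℤ, n * a = x := by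
    intro x
    rw [ha, AddSubgroup.mem_closure_singleton]
    simp only [zsmul_eq_mul]
  obtain ⟨m, hm⟩ := (hmem Real.pi).mp hper
  have hm0 : m ≠ 0 := by
    rintro rfl
    exact Real.pi_ne_zero (by simpa using hm.symm)
  have hmR : (m : ℝ) ≠ 0 := by exact_mod_cast hm0
  refine ⟨m.natAbs, Int.natAbs_pos.mpr hm0, ?_⟩
  ext x
  rw [Set.mem_setOf_eq, symmetric_iff_double_period v heven, ← mem_halfPeriods, hmem,
    Set.mem_setOf_eq, Nat.cast_natAbs, ← hm]
  -- `π / |m|` is `a` or `-a` according to the sign of `m`.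
  rcases abs_choice m with h | h <;> rw [h]
  · refine exists_congr fun n => ?_
    rw [eq_comm, show (n : ℝ) * (m * a) / m = n * a by field_simp]
  · have key : ∀ n : ℤ, (n : ℝ) * (m * a) / ((-m : ℤ) : ℝ) = ((-n : ℤ) : ℝ) * a := by
      intro n
      push_cast
      field_simp
    simp only [key]
    constructor
    · rintro ⟨n, rfl⟩
      exact ⟨-n, by simp⟩
    · rintro ⟨n, rfl⟩
      exact ⟨-n, rfl⟩
end
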